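/- Let a finitely generated group G split as a graph of groups (a minimal, non-elliptic action without inversions on a simplicial tree T), and suppose that for every vertex group V ≤ G, all incident edge groups E ≤ V are finitely generated, undistorted in G, and relatively wide in V. Then every connected component of ∂_M G is either a singleton or homeomorphic to a connected component of the Morse boundary of a vertex group. -/

import Mathlib

/-!
The argument works throughout with vertices of Cayley graphs and with discrete quasi-geodesics
(`DQ`, `DMorse`), which define the same Morse sets as the continuous ones up to changing gauges.

*Detours.* A ray is Morse if and only if it has no long linear detours, that is, paths of length
at most `m * r` joining two of its points and avoiding the ball of radius `r / m` around a point in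
between, with `r` large (`no_detour`, `dmorse_of_no_detour`). If `E` is relatively wide in `V`, then
an ultraproduct argument gives linear detours around every point of `V` between points of a coset
of `E` (`RelativelyWide.detour`).

*Vertex groups.* A path of `G` with endpoints in the stabiliser `V` of a vertex `x` leaves the
`x`-side of an edge at `x` and returns to it near the same coset of the edge group (`surgery`). As
edge groups are undistorted, this shows that `V` is finitely generated and undistorted
(`vertex_biLip`); as they are relatively wide, excursions can be replaced by detours inside `V`, so
that Morse rays of `V` are Morse in `G` (`vertex_ray_morse`). Hence the boundary of `V` embeds in
the boundary of `G`, with image the classes of the rays that stay close to `V`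
(`MorseSub.isClosedEmbedding`, `MorseSub.mem_range`). Likewise, a Morse ray of `G` stays only for a
bounded time near a coset of an edge group (`edge_bound`).

*Components.* By the last fact a Morse ray ends up on one side of each edge of the tree, and this
is decided at a time depending only on the gauge. So each edge divides the Morse boundary into two
clopen sets (`Split.isClopen_Uset`), and a connected component lies on one side of each edge. Orient
edges towards the component. If every vertex has an outgoing edge, these edges form an infinite path
without backtracking, and any two rays of the component cross all its edges; joining them inside the
successive edge spaces shows that they are at finite Hausdorff distance
(`Split.near_of_common`), so that the component is a point. Otherwise there is a vertex `x` all of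
whose edges point to it (`Split.exists_sink`); then all rays of the component stay near the
stabiliser of `x` (`Split.near_stab`), and the component is a component of its Morse boundary
(`component_homeo`).
-/

open Set Filter Topology
open scoped ENNReal

namespace MorseGoG

/-! ## Metric notions relative to an explicit distance function

Throughout, distances are given by an explicit function `d : X → X → ℝ`, so that the same
notions apply to metric spaces (`d = dist`), to groups with word metrics, and to subgroups
with their own word metrics. -/

variable {X : Type*}

/-- `γ` is a `C`-quasi-geodesic on the parameter set `I ⊆ ℝ` with respect to `d`:
`C ≥ 1` and `|s−t|/C − C ≤ d (γ s) (γ t) ≤ C|s−t| + C` for all `s, t ∈ I`. -/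
def IsQG (d : X → X → ℝ) (C : ℝ) (I : Set ℝ) (γ : ℝ → X) : Prop :=
  1 ≤ C ∧ ∀ s ∈ I, ∀ t ∈ I,
    |s - t| / C - C ≤ d (γ s) (γ t) ∧ d (γ s) (γ t) ≤ C * |s - t| + C

/-- `x` lies in the (closed) `r`-neighbourhood of `A` with respect to `d`. -/
def InNbhd (d : X → X → ℝ) (A : Set X) (r : ℝ) (x : X) : Prop :=
  ∃ a ∈ A, d x a ≤ r

/-- The set `A` (e.g. the image of a quasi-geodesic) is `N`-Morse with respect to `d`:
every `C`-quasi-geodesic segment with endpoints on `A` is contained in the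
`N C`-neighbourhood of `A`. -/
def MorseSet (d : X → X → ℝ) (N : ℝ → ℝ) (A : Set X) : Prop :=
  ∀ C : ℝ, 1 ≤ C → ∀ a b : ℝ, a ≤ b → ∀ α : ℝ → X,
    IsQG d C (Set.Icc a b) α → α a ∈ A → α b ∈ A →
    ∀ t ∈ Set.Icc a b, InNbhd d A (N C) (α t)

/-- `A` is Morse: it is `N`-Morse for some Morse gauge `N`. -/
def IsMorse (d : X → X → ℝ) (A : Set X) : Prop := ∃ N : ℝ → ℝ, MorseSet d N A

/-- A discrete geodesic ray: the sequence of vertices of a geodesic ray in a graph. -/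
def IsGeodSeq (d : X → X → ℝ) (γ : ℕ → X) : Prop :=
  ∀ m n : ℕ, d (γ m) (γ n) = |(m : ℝ) - (n : ℝ)|

/-- A discrete geodesic segment of length `n`. -/
def IsGeodSeg (d : X → X → ℝ) (n : ℕ) (γ : ℕ → X) : Prop :=
  ∀ i ≤ n, ∀ j ≤ n, d (γ i) (γ j) = |(i : ℝ) - (j : ℝ)|

/-- A discrete `C`-quasi-geodesic ray. -/
def IsQGSeq (d : X → X → ℝ) (C : ℝ) (γ : ℕ → X) : Prop :=
  1 ≤ C ∧ ∀ m n : ℕ,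
    |(m : ℝ) - n| / C - C ≤ d (γ m) (γ n) ∧ d (γ m) (γ n) ≤ C * |(m : ℝ) - n| + C

/-- Two sets are at finite Hausdorff distance with respect to `d`. -/
def BddHD (d : X → X → ℝ) (A B : Set X) : Prop :=
  ∃ r : ℝ, (∀ a ∈ A, InNbhd d B r a) ∧ (∀ b ∈ B, InNbhd d A r b)

/-- A discrete edge path with `n` steps: consecutive points are at distance at most `1`
(i.e. equal or joined by an edge, in a graph whose vertex set carries the metric `d`). -/
def IsEdgePath (d : X → X → ℝ) (n : ℕ) (c : ℕ → X) : Prop :=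
  ∀ i < n, d (c i) (c (i + 1)) ≤ 1

/-- Combinatorial divergence of a discrete ray `γ` in a graph with vertex distance `d`:
the infimum, over `s ≥ r` and over edge paths joining `γ (s - r)` to `γ (s + r)` and
avoiding the ball of radius `ε·r` around `γ s`, of the length of the path. -/
noncomputable def gdivergence (d : X → X → ℝ) (γ : ℕ → X) (r : ℕ) (ε : ℝ) : ℝ≥0∞ :=
  ⨅ (s : ℕ) (_ : r ≤ s) (n : ℕ) (c : ℕ → X) (_ : IsEdgePath d n c)
    (_ : c 0 = γ (s - r)) (_ : c n = γ (s + r))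
    (_ : ∀ i ≤ n, ε * r < d (c i) (γ s)), (n : ℝ≥0∞)

/-! ## Geodesic metric spaces, geodesic rays, divergence -/

variable {Y : Type*} [MetricSpace Y]

/-- A geodesic metric space: any two points are joined by an isometrically parametrised path. -/
def IsGeodesicSpace (Y : Type*) [MetricSpace Y] : Prop :=
  ∀ x y : Y, ∃ γ : ℝ → Y, γ 0 = x ∧ γ (dist x y) = y ∧
    ∀ s ∈ Set.Icc 0 (dist x y), ∀ t ∈ Set.Icc 0 (dist x y), dist (γ s) (γ t) = |s - t|

/-- A geodesic ray (defined on `[0,∞)` and extended constantly to negative times). -/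
def IsGeodRay (γ : ℝ → Y) : Prop :=
  (∀ s t : ℝ, 0 ≤ s → 0 ≤ t → dist (γ s) (γ t) = |s - t|) ∧ ∀ t : ℝ, γ t = γ (max t 0)

theorem IsGeodRay.lipschitz {γ : ℝ → Y} (h : IsGeodRay γ) : LipschitzWith 1 γ := by
  apply LipschitzWith.of_dist_le_mul
  intro s t
  rw [h.2 s, h.2 t, h.1 _ _ (le_max_right s 0) (le_max_right t 0)]
  rw [NNReal.coe_one, one_mul, Real.dist_eq]
  exact abs_max_sub_max_le_abs s t 0

/-- Divergence function `δ_γ(r, ε)` of a quasi-geodesic ray `γ` in a metric space: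
the infimum of lengths (total variations) of paths connecting `γ (s - r)` to `γ (s + r)`
outside the closed ball `B(γ s, εr)`, over all `s ≥ r`. -/
noncomputable def divergence (γ : ℝ → Y) (r ε : ℝ) : ℝ≥0∞ :=
  ⨅ (s : ℝ) (_ : r ≤ s) (c : ℝ → Y) (_ : ContinuousOn c (Set.Icc 0 1))
    (_ : c 0 = γ (s - r)) (_ : c 1 = γ (s + r))
    (_ : ∀ t ∈ Set.Icc (0 : ℝ) 1, ε * r < dist (c t) (γ s)),
    eVariationOn c (Set.Icc 0 1)

/-- Quasi-isometric embedding between sets carrying explicit distance functions. -/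
def IsQIEmb {Z W : Type*} (dZ : Z → Z → ℝ) (dW : W → W → ℝ) (f : Z → W) : Prop :=
  ∃ C : ℝ, 1 ≤ C ∧ ∀ z z' : Z,
    dZ z z' / C - C ≤ dW (f z) (f z') ∧ dW (f z) (f z') ≤ C * dZ z z' + C

/-! ## The Morse boundary of a proper geodesic metric space -/

/-- A Morse geodesic ray based at `p` in the metric space `Y`. -/
structure MRay (Y : Type*) [MetricSpace Y] (p : Y) where
  ray : ℝ → Y
  base : ray 0 = p
  geod : IsGeodRay ray
  morse : IsMorse dist (Set.range ray)

/-- Two rays are identified when they are at finite Hausdorff distance. -/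
def mrayRel (p : Y) (x y : MRay Y p) : Prop :=
  BddHD dist (Set.range x.ray) (Set.range y.ray)

/-- The Morse boundary of a metric space, as a set: Morse geodesic rays based at `p`,
modulo finite Hausdorff distance. -/
def MorseBoundarySp (Y : Type*) [MetricSpace Y] (p : Y) : Type _ := Quot (mrayRel p)

/-- The `N`-Morse stratum: `N`-Morse geodesic rays based at `p`. -/
def NRaysSp (Y : Type*) [MetricSpace Y] (p : Y) (N : ℝ → ℝ) : Type _ :=
  {γ : MRay Y p // MorseSet dist N (Set.range γ.ray)}

/-- Each stratum of rays carries the compact-open topology (as a set of continuous maps). -/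
noncomputable instance NRaysSp.instTop (p : Y) (N : ℝ → ℝ) : TopologicalSpace (NRaysSp Y p N) :=
  TopologicalSpace.induced
    (fun γ => (⟨γ.1.ray, γ.1.geod.lipschitz.continuous⟩ : C(ℝ, Y))) inferInstance

/-- The Morse boundary carries the direct limit topology over all Morse gauges:
a set is open iff its intersection with each stratum `∂_M^N Y_p` is open there. -/
noncomputable instance MorseBoundarySp.instTop (p : Y) :
    TopologicalSpace (MorseBoundarySp Y p) :=
  ⨆ N : ℝ → ℝ,
    TopologicalSpace.coinduced (fun γ : NRaysSp Y p N => Quot.mk (mrayRel p) γ.1) inferInstance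

/-- The relative Morse boundary `(∂_M Y, f)` of a quasi-isometric embedding `f : Y → X`:
classes of Morse rays of `Y` whose image under `f` is Morse in `X`.  It is a subset of
`∂_M Y` (and carries the subspace topology). -/
def relBoundarySp {Y X : Type*} [MetricSpace Y] [MetricSpace X] (p : Y) (f : Y → X) :
    Set (MorseBoundarySp Y p) :=
  {ξ | ∃ γ : MRay Y p, Quot.mk (mrayRel p) γ = ξ ∧ IsMorse dist (f '' Set.range γ.ray)}

/-! ## Word metrics and Morse boundaries of finitely generated groups -/

variable {G : Type*} [Group G]

/-- Word length of `g` with respect to the (symmetrised) alphabet `S`. -/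
noncomputable def wordLength (S : Set G) (g : G) : ℕ :=
  sInf {n : ℕ | ∃ l : List G, l.length = n ∧ (∀ x ∈ l, x ∈ S ∨ x⁻¹ ∈ S) ∧ l.prod = g}

/-- Word metric on `G` with respect to `S`; this is the distance between vertices in the
Cayley graph `Cay(G, S)`. -/
noncomputable def wdist (S : Set G) (g h : G) : ℝ := wordLength S (g⁻¹ * h)

/-- A Morse geodesic ray in the Cayley graph of `(G, S)`, based at the identity,
recorded by its sequence of vertices. -/
structure GRay (G : Type*) [Group G] (S : Set G) where
  seq : ℕ → G
  base : seq 0 = 1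
  geod : IsGeodSeq (wdist S) seq
  morse : IsMorse (wdist S) (Set.range seq)

/-- Identification of rays at finite Hausdorff distance. -/
def grayRel (S : Set G) (x y : GRay G S) : Prop :=
  BddHD (wdist S) (Set.range x.seq) (Set.range y.seq)

/-- The Morse boundary `∂_M G` of the group `G` with finite generating set `S`. -/
def MorseBoundary (G : Type*) [Group G] (S : Set G) : Type _ := Quot (grayRel (G := G) S)

/-- The stratum of `N`-Morse rays. -/
def NGRays (G : Type*) [Group G] (S : Set G) (N : ℝ → ℝ) : Type _ :=
  {γ : GRay G S // MorseSet (wdist S) N (Set.range γ.seq)}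

/-- The compact-open topology on a stratum: for rays in a graph (vertex sequences) this is
the topology of pointwise convergence of the vertex sequences, `G` being discrete. -/
noncomputable instance NGRays.instTop (S : Set G) (N : ℝ → ℝ) :
    TopologicalSpace (NGRays G S N) :=
  TopologicalSpace.induced (fun γ => γ.1.seq)
    (@Pi.topologicalSpace ℕ (fun _ => G) (fun _ => ⊥))

/-- The direct limit topology on the Morse boundary of a group. -/
noncomputable instance MorseBoundary.instTop (S : Set G) :
    TopologicalSpace (MorseBoundary G S) :=
  ⨆ N : ℝ → ℝ,
    TopologicalSpace.coinduced (fun γ : NGRays G S N => Quot.mk (grayRel S) γ.1) inferInstance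

/-! ## Subgroups: undistortion, relative Morse boundaries -/

/-- `H` is finitely generated and undistorted in `(G, S)`: it has a finite generating set
whose word metric is bi-Lipschitz equivalent (suitably, quasi-isometric) to the metric
induced from `G`. -/
def FGUndistorted (S : Set G) (H : Subgroup G) : Prop :=
  ∃ T : Finset H, Subgroup.closure (T : Set H) = ⊤ ∧
    ∃ C : ℝ, 1 ≤ C ∧ ∀ h h' : H,
      wdist (T : Set H) h h' ≤ C * wdist S (h : G) (h' : G) + C ∧
      wdist S (h : G) (h' : G) ≤ C * wdist (T : Set H) h h' + C

/-- The relative Morse boundary of `H` in `G` is empty, `(∂_M H, G) = ∅`: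
no Morse geodesic ray of `H` (w.r.t. any finite generating set of `H`) remains Morse in `G`. -/
def RelMorseEmpty (S : Set G) (H : Subgroup G) : Prop :=
  ∀ T : Finset H, Subgroup.closure (T : Set H) = ⊤ →
    ∀ γ : ℕ → H, IsGeodSeq (wdist (T : Set H)) γ →
      IsMorse (wdist (T : Set H)) (Set.range γ) →
      ¬ IsMorse (wdist S) (Set.range fun n => (γ n : G))

/-- The image of the natural injection `(∂_M H, G) ↪ ∂_M G`: those classes in `∂_M G`
having a representative ray staying at bounded distance from `H`. -/
def relBdryImage (S : Set G) (H : Subgroup G) : Set (MorseBoundary G S) :=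
  {ξ | ∃ γ : GRay G S, Quot.mk (grayRel S) γ = ξ ∧
        ∃ r : ℝ, ∀ n : ℕ, ∃ h ∈ H, wdist S (γ.seq n) h ≤ r}

/-- The relative Morse boundary `(∂_M H, G)` as a subset of `∂_M H` (where `∂_M H` is
formed w.r.t. a generating set `T` of `H`): classes of rays that remain Morse in `G`. -/
def relBdryIn (S : Set G) (H : Subgroup G) (T : Set H) : Set (MorseBoundary H T) :=
  {ξ | ∃ γ : GRay H T, Quot.mk (grayRel T) γ = ξ ∧
        IsMorse (wdist S) (Set.range fun n => (γ.seq n : G))}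

/-- Specification of the natural map `∂_M H → ∂_M G` (or of its restriction to the relative
boundary): each class is sent to the class of a ray of `G` at finite Hausdorff distance
from the image of (a representative of) the given class. -/
def InclSpec (S : Set G) (H : Subgroup G) (TH : Set H)
    (F : MorseBoundary H TH → MorseBoundary G S) : Prop :=
  ∀ γ : GRay H TH, ∀ β : GRay G S,
    Quot.mk (grayRel S) β = F (Quot.mk (grayRel TH) γ) →
    BddHD (wdist S) (Set.range fun n => ((γ.seq n : G))) (Set.range β.seq)

/-! ## Asymptotic cones and relatively wide subgroups -/

/-- Admissible sequences for an asymptotic cone: sequences at bounded rescaled distance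
from the basepoints `o`. -/
def conePts (ω : Ultrafilter ℕ) (d : X → X → ℝ) (o : ℕ → X) (s : ℕ → ℝ) : Set (ℕ → X) :=
  {x | ∃ B : ℝ, ∀ᶠ n in (ω : Filter ℕ), d (o n) (x n) ≤ B * s n}

/-- The pseudo-distance of the asymptotic cone: ultralimit of the rescaled distances. -/
noncomputable def coneDist (ω : Ultrafilter ℕ) (d : X → X → ℝ) (s : ℕ → ℝ)
    (x y : ℕ → X) : ℝ :=
  limUnder (ω : Filter ℕ) (fun n => d (x n) (y n) / s n)

/-- The topology of the asymptotic cone, as a topology on representative sequences: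
generated by the open balls of the cone pseudo-distance. -/
noncomputable def coneTop (ω : Ultrafilter ℕ) (d : X → X → ℝ) (o : ℕ → X) (s : ℕ → ℝ) :
    TopologicalSpace (ℕ → X) :=
  TopologicalSpace.generateFrom
    {U | ∃ c ∈ conePts ω d o s, ∃ ε : ℝ, 0 < ε ∧ U = {x | coneDist ω d s c x < ε}}

/-- `z` is a cut point of the asymptotic cone separating the points `x` and `y`:
`x, y` differ from `z` and do not lie in a common connected subset of the complement
of (the point represented by) `z`. -/
def ConeSeparates (ω : Ultrafilter ℕ) (d : X → X → ℝ) (o : ℕ → X) (s : ℕ → ℝ)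
    (x y z : ℕ → X) : Prop :=
  coneDist ω d s x z ≠ 0 ∧ coneDist ω d s y z ≠ 0 ∧
  ¬ ∃ A : Set (ℕ → X),
      A ⊆ {w ∈ conePts ω d o s | coneDist ω d s w z ≠ 0} ∧ x ∈ A ∧ y ∈ A ∧
      @IsPreconnected (ℕ → X) (coneTop ω d o s) A

/-- `H` is relatively wide in `(G, S)`: in every asymptotic cone of `G` (over a
non-principal ultrafilter, arbitrary basepoints and scaling factors tending to infinity),
no two limit points of `H` are separated by a cut point. -/
def RelativelyWide (S : Set G) (H : Subgroup G) : Prop :=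
  ∀ ω : Ultrafilter ℕ, (ω : Filter ℕ) ≤ Filter.cofinite →
  ∀ (o : ℕ → G) (s : ℕ → ℝ), (∀ n, 0 < s n) → Tendsto s atTop atTop →
  ∀ x y z : ℕ → G, (∀ n, x n ∈ H) → (∀ n, y n ∈ H) →
    x ∈ conePts ω (wdist S) o s → y ∈ conePts ω (wdist S) o s →
    z ∈ conePts ω (wdist S) o s →
    ¬ ConeSeparates ω (wdist S) o s x y z

/-- The subgroup `H ≤ V` is relatively wide in `V` (for any, equivalently some, finite
generating set of `V`). -/
def RelWideIn (V H : Subgroup G) : Prop :=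
  ∀ SV : Finset V, Subgroup.closure (SV : Set V) = ⊤ →
    RelativelyWide (SV : Set V) (H.subgroupOf V)

/-! ## Actions on simplicial trees -/

variable {VT : Type*}

/-- `G` splits as a graph of groups: it acts on the simplicial tree `T`
(preserving adjacency), minimally, non-elliptically and without inversions. -/
def ActsOnTree (G : Type*) [Group G] {VT : Type*} (T : SimpleGraph VT) [MulAction G VT] :
    Prop :=
  T.IsTree ∧
  (∀ (g : G) (a b : VT), T.Adj a b → T.Adj (g • a) (g • b)) ∧
  (∀ (g : G) (a b : VT), T.Adj a b → ¬(g • a = b ∧ g • b = a)) ∧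
  (¬ ∃ v : VT, ∀ g : G, g • v = v) ∧
  (∀ W : Set VT, W.Nonempty → (∀ (g : G), ∀ v ∈ W, g • v ∈ W) →
    (∀ a ∈ W, ∀ b ∈ W, ∀ c : VT, T.dist a c + T.dist c b = T.dist a b → c ∈ W) →
    W = Set.univ)

/-- The stabiliser of the edge `{a, b}` (pointwise; for actions without inversions this is
the full edge stabiliser). -/
def edgeStab (G : Type*) [Group G] {VT : Type*} [MulAction G VT] (a b : VT) : Subgroup G :=
  MulAction.stabilizer G a ⊓ MulAction.stabilizer G b

/-- The halfspace determined by the edge `{a, b}` containing `b`: one of the two connected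
components of the complement of the open edge. -/
def halfspace {VT : Type*} (T : SimpleGraph VT) (a b : VT) : Set VT :=
  {v | T.dist v b < T.dist v a}

end MorseGoG

namespace MorseGoG

variable {G : Type*} [Group G] {VT : Type*}

/-- A choice of "edge subgraphs" `Γ(𝔢) ⊆ Γ` of the Cayley graph `Γ = Cay(G, S)`, one for
each (unoriented) edge of the tree `T`, recorded by its vertex set `A a b ⊆ G`,
satisfying the properties of Lemma 3.2 (`AIS lem`).  Here `p` is the fixed base vertex of
`T` and `f_p(g) = g • p` is the orbit map. -/
structure EdgeSubgraphs (G : Type*) [Group G] (S : Set G) {VT : Type*} (T : SimpleGraph VT)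
    [MulAction G VT] (p : VT) where
  /-- the vertex set of `Γ(𝔢)` for the edge `𝔢 = {a, b}` -/
  A : VT → VT → Set G
  /-- `Γ(𝔢)` only depends on the unoriented edge -/
  symm : ∀ a b : VT, A a b = A b a
  /-- (1) `Γ(𝔢)` is connected -/
  conn : ∀ a b : VT, T.Adj a b → ∀ x ∈ A a b, ∀ y ∈ A a b,
    ∃ (n : ℕ) (c : ℕ → G), IsEdgePath (wdist S) n c ∧ c 0 = x ∧ c n = y ∧
      ∀ i ≤ n, c i ∈ A a b
  /-- (1) `Γ(𝔢)` is `G_𝔢`-invariant -/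
  inva : ∀ a b : VT, T.Adj a b → ∀ g ∈ edgeStab G a b, ∀ x ∈ A a b, g * x ∈ A a b
  /-- (1) `Γ(𝔢)` is `G_𝔢`-cocompact -/
  cocpt : ∀ a b : VT, T.Adj a b →
    ∃ F : Finset G, ∀ x ∈ A a b, ∃ g ∈ edgeStab G a b, ∃ f ∈ F, x = g * f
  /-- (2) equivariance: `Γ(g𝔢) = gΓ(𝔢)` -/
  equivariant : ∀ (g : G) (a b : VT), A (g • a) (g • b) = (fun x => g * x) '' A a b
  /-- (3) `Γ(𝔢)` contains every edge of `Γ` with one endpoint in `f_p⁻¹(𝔥)` and the other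
  in `f_p⁻¹(𝔥*)` -/
  crossing : ∀ a b : VT, T.Adj a b → ∀ x y : G, wdist S x y = 1 →
    x • p ∈ halfspace T a b → y • p ∈ halfspace T b a → x ∈ A a b ∧ y ∈ A a b
  /-- (4) `N(f_p⁻¹(𝔥), r) ∩ N(f_p⁻¹(𝔥*), r) ⊆ N(Γ(𝔢), r)` -/
  nbhd : ∀ a b : VT, T.Adj a b → ∀ r : ℝ, 0 ≤ r → ∀ x : G,
    (∃ y : G, y • p ∈ halfspace T a b ∧ wdist S x y ≤ r) →
    (∃ y : G, y • p ∈ halfspace T b a ∧ wdist S x y ≤ r) →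
    ∃ z ∈ A a b, wdist S x z ≤ r
  /-- (5) each edge of `Γ` lies in `Γ(𝔢)` for only finitely many edges `𝔢` of `T` -/
  finmany : ∀ x y : G, wdist S x y = 1 →
    {e : VT × VT | T.Adj e.1 e.2 ∧ x ∈ A e.1 e.2 ∧ y ∈ A e.1 e.2}.Finite

/-- The vertex set of `Γ(𝔥)` for the halfspace `𝔥` of the edge `{a,b}` containing `b`:
`f_p⁻¹(𝔥) ∖ Γ(𝔢)`. -/
def hsVerts (T : SimpleGraph VT) [MulAction G VT] (p : VT)
    (A : VT → VT → Set G) (a b : VT) : Set G :=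
  {g : G | g • p ∈ halfspace T a b ∧ g ∉ A a b}

/-- `M(𝔥) ⊆ ∂_M G`: classes of rays eventually contained in `Γ(𝔥)`, for the halfspace `𝔥`
of the edge `{a,b}` containing `b`. -/
def Mset (S : Set G) (T : SimpleGraph VT) [MulAction G VT] (p : VT)
    (A : VT → VT → Set G) (a b : VT) : Set (MorseBoundary G S) :=
  {ξ | ∃ γ : GRay G S, Quot.mk (grayRel S) γ = ξ ∧
        ∃ n₀ : ℕ, ∀ n ≥ n₀, γ.seq n ∈ hsVerts T p A a b}

end MorseGoG

namespace MorseGoG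

/-! ### Graph metrics and word metrics -/

/-- `d` is the distance between the vertices of a connected graph: a metric with values in `ℕ`,
any two points of which are joined by a discrete geodesic. -/
structure GM {X : Type*} (d : X → X → ℝ) : Prop where
  symm : ∀ x y, d x y = d y x
  tri : ∀ x y z, d x z ≤ d x y + d y z
  eq_of_zero : ∀ x y, d x y = 0 → x = y
  geo : ∀ x y, ∃ (n : ℕ) (c : ℕ → X), c 0 = x ∧ c n = y ∧
    ∀ i ≤ n, ∀ j ≤ n, d (c i) (c j) = |(i : ℝ) - j|

namespace GM
variable {X : Type*} {d : X → X → ℝ}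

theorem self (h : GM d) (x : X) : d x x = 0 := by
  obtain ⟨n, c, h0, -, hc⟩ := h.geo x x
  have := hc 0 (Nat.zero_le _) 0 (Nat.zero_le _)
  simpa [h0] using this

theorem geo' (h : GM d) (x y : X) : ∃ (n : ℕ) (c : ℕ → X), (n : ℝ) = d x y ∧ c 0 = x ∧ c n = y ∧
    ∀ i ≤ n, ∀ j ≤ n, d (c i) (c j) = |(i : ℝ) - j| := by
  obtain ⟨n, c, h0, h1, hc⟩ := h.geo x y
  refine ⟨n, c, ?_, h0, h1, hc⟩
  have := hc 0 (Nat.zero_le _) n le_rfl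
  simp [h0, h1] at this
  exact this.symm

theorem nonneg (h : GM d) (x y : X) : 0 ≤ d x y := by
  obtain ⟨n, -, hn, -⟩ := h.geo' x y
  rw [← hn]; positivity

theorem one_le (h : GM d) {x y : X} (hxy : x ≠ y) : 1 ≤ d x y := by
  obtain ⟨n, -, hn, -⟩ := h.geo' x y
  rw [← hn]
  have : n ≠ 0 := by
    rintro rfl
    exact hxy (h.eq_of_zero _ _ (by simpa using hn.symm))
  exact_mod_cast Nat.one_le_iff_ne_zero.2 this

end GM

section Word
variable {G : Type*} [Group G]

theorem wordLength_le {S : Set G} (l : List G) (hl : ∀ x ∈ l, x ∈ S ∨ x⁻¹ ∈ S) :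
    wordLength S l.prod ≤ l.length := Nat.sInf_le ⟨l, rfl, hl, rfl⟩

theorem exists_word {S : Set G} {g : G} (hg : g ∈ Subgroup.closure S) :
    ∃ l : List G, (∀ x ∈ l, x ∈ S ∨ x⁻¹ ∈ S) ∧ l.prod = g := by
  have : g ∈ Submonoid.closure (S ∪ S⁻¹) := by
    rw [← Subgroup.closure_toSubmonoid]; exact hg
  obtain ⟨l, h1, h2⟩ := Submonoid.exists_list_of_mem_closure this
  exact ⟨l, fun x hx => by simpa using h1 x hx, h2⟩

theorem wordLength_spec {S : Set G} (hS : Subgroup.closure S = ⊤) (g : G) :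
    ∃ l : List G, l.length = wordLength S g ∧ (∀ x ∈ l, x ∈ S ∨ x⁻¹ ∈ S) ∧ l.prod = g := by
  have : wordLength S g ∈
      {n : ℕ | ∃ l : List G, l.length = n ∧ (∀ x ∈ l, x ∈ S ∨ x⁻¹ ∈ S) ∧ l.prod = g} := by
    apply Nat.sInf_mem
    obtain ⟨l, h1, h2⟩ := exists_word (S := S) (g := g) (by rw [hS]; trivial)
    exact ⟨l.length, l, rfl, h1, h2⟩
  exact this

theorem wordLength_mul {S : Set G} (hS : Subgroup.closure S = ⊤) (g h : G) :
    wordLength S (g * h) ≤ wordLength S g + wordLength S h := by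
  obtain ⟨l, h1, h2, h3⟩ := wordLength_spec hS g
  obtain ⟨l', h1', h2', h3'⟩ := wordLength_spec hS h
  rw [← h1, ← h1', ← List.length_append]
  have := wordLength_le (S := S) (l ++ l') (by
    intro x hx
    rcases List.mem_append.1 hx with hx | hx
    · exact h2 x hx
    · exact h2' x hx)
  simpa [h3, h3'] using this

theorem wordLength_inv_le {S : Set G} (hS : Subgroup.closure S = ⊤) (g : G) :
    wordLength S g⁻¹ ≤ wordLength S g := by
  obtain ⟨l, h1, h2, h3⟩ := wordLength_spec hS g
  have := wordLength_le (S := S) (l.map (·⁻¹)).reverse (by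
    intro x hx
    simp only [List.mem_reverse, List.mem_map] at hx
    obtain ⟨y, hy, rfl⟩ := hx
    rcases h2 y hy with h | h
    · right; simpa using h
    · left; exact h)
  rw [← List.prod_inv_reverse, h3] at this
  simpa [h1] using this

theorem wordLength_inv {S : Set G} (hS : Subgroup.closure S = ⊤) (g : G) :
    wordLength S g⁻¹ = wordLength S g :=
  le_antisymm (wordLength_inv_le hS g) (by simpa using wordLength_inv_le hS g⁻¹)

theorem wdist_left (S : Set G) (g x y : G) : wdist S (g * x) (g * y) = wdist S x y := by
  simp [wdist, mul_assoc]

theorem gm_wdist {S : Set G} (hS : Subgroup.closure S = ⊤) : GM (wdist S) := by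
  have hsymm : ∀ x y, wdist S x y = wdist S y x := by
    intro x y
    simp only [wdist]
    rw [← wordLength_inv hS (x⁻¹ * y)]
    simp
  have htri : ∀ x y z, wdist S x z ≤ wdist S x y + wdist S y z := by
    intro x y z
    simp only [wdist]
    have := wordLength_mul hS (x⁻¹ * y) (y⁻¹ * z)
    have h2 : x⁻¹ * y * (y⁻¹ * z) = x⁻¹ * z := by group
    rw [h2] at this
    exact_mod_cast this
  refine ⟨hsymm, htri, ?_, ?_⟩
  · intro x y h
    simp only [wdist, Nat.cast_eq_zero] at h
    obtain ⟨l, h1, h2, h3⟩ := wordLength_spec hS (x⁻¹ * y)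
    rw [h, List.length_eq_zero_iff] at h1
    subst h1
    simp at h3
    exact inv_mul_eq_one.1 h3.symm
  · intro x y
    obtain ⟨l, h1, h2, h3⟩ := wordLength_spec hS (x⁻¹ * y)
    -- the prefixes of a shortest word trace out a geodesic
    have hle : ∀ i j, i ≤ j → j ≤ l.length →
        wdist S (x * (l.take i).prod) (x * (l.take j).prod) ≤ (j : ℝ) - i := by
      intro i j hij hj
      rw [wdist_left, wdist]
      have hsplit : (l.take j).prod = (l.take i).prod * ((l.take j).drop i).prod := by
        rw [← List.prod_append]
        congr 1
        have := List.take_append_drop i (l.take j)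
        rw [List.take_take, min_eq_left hij] at this
        exact this.symm
      rw [hsplit, inv_mul_cancel_left]
      have h4 := wordLength_le (S := S) ((l.take j).drop i)
        (fun z hz => h2 z (List.mem_of_mem_take (List.mem_of_mem_drop hz)))
      have h5 : ((l.take j).drop i).length = j - i := by
        simp [hj]
      rw [h5] at h4
      have : ((j - i : ℕ) : ℝ) = (j : ℝ) - i := by push_cast [hij]; ring
      rw [← this]
      exact_mod_cast h4
    have hend : wdist S (x * (l.take 0).prod) (x * (l.take l.length).prod) = l.length := by
      rw [List.take_length, List.take_zero, wdist_left, h3, wdist, h1]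
      simp
    have heq : ∀ i j, i ≤ j → j ≤ l.length →
        wdist S (x * (l.take i).prod) (x * (l.take j).prod) = (j : ℝ) - i := by
      intro i j hij hj
      apply le_antisymm (hle i j hij hj)
      have a1 := hle 0 i (Nat.zero_le _) (hij.trans hj)
      have a2 := hle j l.length hj le_rfl
      have a3 := htri (x * (l.take 0).prod) (x * (l.take i).prod) (x * (l.take l.length).prod)
      have a4 := htri (x * (l.take i).prod) (x * (l.take j).prod) (x * (l.take l.length).prod)
      rw [hend] at a3
      push_cast at a1
      linarith
    refine ⟨l.length, fun i => x * (l.take i).prod, by simp, by simp [h3], ?_⟩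
    intro i hi j hj
    rcases le_total i j with hij | hij
    · have h6 : (i : ℝ) ≤ j := by exact_mod_cast hij
      rw [heq i j hij hj, abs_sub_comm, abs_of_nonneg (by linarith)]
    · have h6 : (j : ℝ) ≤ i := by exact_mod_cast hij
      rw [hsymm, heq j i hij hi, abs_of_nonneg (by linarith)]

theorem finite_ball {S : Set G} (hS : Subgroup.closure S = ⊤) (hf : S.Finite) (r : ℝ) (x : G) :
    {g : G | wdist S x g ≤ r}.Finite := by
  have hlet : {y : G | y ∈ S ∨ y⁻¹ ∈ S}.Finite := by
    have : {y : G | y ∈ S ∨ y⁻¹ ∈ S} = S ∪ S⁻¹ := by ext; simp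
    rw [this]; exact hf.union hf.inv
  have hn : ∀ n : ℕ, {g : G | ∃ l : List G, l.length = n ∧ (∀ x ∈ l, x ∈ S ∨ x⁻¹ ∈ S) ∧
      l.prod = g}.Finite := by
    intro n
    induction n with
    | zero =>
      apply (Set.finite_singleton (1 : G)).subset
      rintro g ⟨l, h1, -, h3⟩
      rw [List.length_eq_zero_iff] at h1
      subst h1
      simpa using h3.symm
    | succ n ih =>
      apply (Set.Finite.image2 (· * ·) hlet ih).subset
      rintro g ⟨l, h1, h2, h3⟩
      cases l with
      | nil => simp at h1
      | cons a t =>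
        refine ⟨a, h2 a (by simp), t.prod, ⟨t, by simpa using h1,
          fun y hy => h2 y (by simp [hy]), rfl⟩, by simpa using h3⟩
  have hfin : (⋃ n ∈ {n : ℕ | n ≤ ⌈r⌉₊}, {g : G | ∃ l : List G, l.length = n ∧
      (∀ x ∈ l, x ∈ S ∨ x⁻¹ ∈ S) ∧ l.prod = g}).Finite :=
    Set.Finite.biUnion (Set.finite_le_nat _) (fun n _ => hn n)
  apply (hfin.image (fun g => x * g)).subset
  intro g hg
  refine ⟨x⁻¹ * g, ?_, by simp⟩
  simp only [Set.mem_iUnion]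
  refine ⟨wordLength S (x⁻¹ * g), ?_, wordLength_spec hS _⟩
  have h1 : (wordLength S (x⁻¹ * g) : ℝ) ≤ ⌈r⌉₊ := le_trans hg (Nat.le_ceil r)
  exact_mod_cast h1

end Word

/-! ### Discrete quasi-geodesics and discrete paths -/

section Disc
variable {X : Type*} {d : X → X → ℝ}

/-- A discrete `C`-quasi-geodesic of `n` steps. -/
def DQ (d : X → X → ℝ) (C : ℝ) (n : ℕ) (c : ℕ → X) : Prop :=
  1 ≤ C ∧ ∀ i ≤ n, ∀ j ≤ n, |(i : ℝ) - j| / C - C ≤ d (c i) (c j) ∧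
    d (c i) (c j) ≤ C * |(i : ℝ) - j| + C

/-- The discrete version of `MorseSet`, which tests only discrete quasi-geodesics. -/
def DMorse (d : X → X → ℝ) (N : ℝ → ℝ) (A : Set X) : Prop :=
  ∀ (C : ℝ) (n : ℕ) (c : ℕ → X), DQ d C n c → c 0 ∈ A → c n ∈ A →
    ∀ i ≤ n, ∃ a ∈ A, d (c i) a ≤ N C

/-- Constants of quasi-geodesics may be increased. -/
theorem qg_mono {C C' x D : ℝ} (hC : 1 ≤ C) (hCC : C ≤ C') (hx : 0 ≤ x)
    (h : x / C - C ≤ D ∧ D ≤ C * x + C) : x / C' - C' ≤ D ∧ D ≤ C' * x + C' := by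
  have h1 : x / C' ≤ x / C := by gcongr
  have h2 : C * x ≤ C' * x := by gcongr
  constructor <;> linarith

theorem DQ.mono {C C' : ℝ} {n : ℕ} {c : ℕ → X} (h : DQ d C n c) (hC : C ≤ C') : DQ d C' n c :=
  ⟨h.1.trans hC, fun i hi j hj => qg_mono h.1 hC (abs_nonneg _) (h.2 i hi j hj)⟩

theorem DQ.reverse {C : ℝ} {n : ℕ} {c : ℕ → X} (h : DQ d C n c) :
    DQ d C n (fun i => c (n - i)) := by
  refine ⟨h.1, fun i hi j hj => ?_⟩
  have := h.2 (n - i) (Nat.sub_le _ _) (n - j) (Nat.sub_le _ _)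
  have e : |((n - i : ℕ) : ℝ) - ((n - j : ℕ) : ℝ)| = |(i : ℝ) - j| := by
    push_cast [hi, hj]
    rw [show (n : ℝ) - i - (n - j) = -((i : ℝ) - j) by ring, abs_neg]
  rwa [e] at this

/-- An estimate used whenever the parameters of a quasi-geodesic are changed by at most `1` and its
points by at most `E / 2`. -/
theorem qg_perturb {C x y D D' E : ℝ} (hC : 1 ≤ C) (hE : 0 ≤ E) (hy : 0 ≤ y) (hxy : |x - y| ≤ 1)
    (hD : |D - D'| ≤ E)
    (h : x / C - C ≤ D ∧ D ≤ C * x + C) :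
    y / (2 * C + E) - (2 * C + E) ≤ D' ∧ D' ≤ (2 * C + E) * y + (2 * C + E) := by
  have hC0 : 0 < C := by linarith
  obtain ⟨a1, a2⟩ := abs_le.1 hxy
  obtain ⟨b1, b2⟩ := abs_le.1 hD
  obtain ⟨h1, h2⟩ := h
  have e1 : y / (2 * C + E) ≤ y / C := by gcongr; linarith
  have e2 : y / C ≤ x / C + 1 := by
    rw [div_add_one hC0.ne']
    gcongr; linarith
  have e3 : C * x ≤ C * y + C := by nlinarith
  have e4 : C * y ≤ (2 * C + E) * y := by gcongr; linarith
  constructor <;> linarith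

end Disc
end MorseGoG

namespace MorseGoG
section Disc
variable {X : Type*} {d : X → X → ℝ}

theorem MorseSet.discrete {N : ℝ → ℝ} {A : Set X} (h : MorseSet d N A) :
    DMorse d (fun C => N (2 * C)) A := by
  intro C n c hc h0 hn i hi
  have hC := hc.1
  have key : IsQG d (2 * C) (Set.Icc 0 (n : ℝ)) (fun t => c ⌊t⌋₊) := by
    refine ⟨by linarith, ?_⟩
    intro s hs t ht
    have hs' : ⌊s⌋₊ ≤ n := Nat.floor_le_of_le hs.2
    have ht' : ⌊t⌋₊ ≤ n := Nat.floor_le_of_le ht.2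
    have h1 := hc.2 _ hs' _ ht'
    have := qg_perturb (y := |s - t|) (D' := d (c ⌊s⌋₊) (c ⌊t⌋₊)) (E := 0) hC le_rfl (abs_nonneg _)
      ?_ (by simp) h1
    · simpa using this
    · refine (abs_abs_sub_abs_le _ _).trans ?_
      have a1 := Nat.floor_le hs.1
      have a2 := Nat.floor_le ht.1
      have a3 := Nat.lt_floor_add_one s
      have a4 := Nat.lt_floor_add_one t
      rw [abs_le]; constructor <;> linarith
  have := h (2 * C) (by linarith) 0 n (by positivity) _ key (by simpa using h0) (by simpa using hn)
    i ⟨by positivity, by exact_mod_cast hi⟩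
  simpa [InNbhd] using this

theorem DMorse.morseSet (hd : GM d) {N : ℝ → ℝ} {A : Set X} (h : DMorse d N A) :
    MorseSet d (fun C => N (2 * C) + 2 * C) A := by
  intro C hC a b hab α hα ha hb t ht
  have hmem : ∀ i : ℕ, min (a + i) b ∈ Set.Icc a b := fun i =>
    ⟨le_min (by linarith [(Nat.cast_nonneg i : (0 : ℝ) ≤ i)]) hab, min_le_right _ _⟩
  have hceil := Nat.le_ceil (b - a)
  have hceil' := Nat.ceil_lt_add_one (show 0 ≤ b - a by linarith)
  have key : DQ d (2 * C) ⌈b - a⌉₊ (fun i => α (min (a + i) b)) := by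
    refine ⟨by linarith, fun i hi j hj => ?_⟩
    have h1 := hα.2 _ (hmem i) _ (hmem j)
    have hi' : (i : ℝ) ≤ ⌈b - a⌉₊ := by exact_mod_cast hi
    have hj' : (j : ℝ) ≤ ⌈b - a⌉₊ := by exact_mod_cast hj
    have := qg_perturb (y := |(i : ℝ) - j|) (D' := d (α (min (a + i) b)) (α (min (a + j) b)))
      (E := 0) hC le_rfl (abs_nonneg _) ?_ (by simp) h1
    · simpa using this
    · refine (abs_abs_sub_abs_le _ _).trans ?_
      have a1 : a + i - 1 ≤ min (a + i) b := le_min (by linarith) (by linarith)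
      have a2 : min (a + i) b ≤ a + i := min_le_left _ _
      have b1 : a + j - 1 ≤ min (a + j) b := le_min (by linarith) (by linarith)
      have b2 : min (a + j) b ≤ a + j := min_le_left _ _
      rw [abs_le]; constructor <;> linarith
  have hfl := Nat.floor_le (show 0 ≤ t - a by linarith [ht.1])
  have hfl' := Nat.lt_floor_add_one (t - a)
  have hle : ⌊t - a⌋₊ ≤ ⌈b - a⌉₊ :=
    (Nat.floor_le_ceil _).trans (Nat.ceil_le_ceil (by linarith [ht.2]))
  have hmin : min (a + (⌊t - a⌋₊ : ℝ)) b = a + ⌊t - a⌋₊ := min_eq_left (by linarith [ht.2])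
  obtain ⟨x, hx, hx'⟩ := h (2 * C) ⌈b - a⌉₊ _ key (by simpa [min_eq_left hab] using ha)
    (by rw [min_eq_right (by linarith)]; exact hb) _ hle
  refine ⟨x, hx, ?_⟩
  have h2 := (hα.2 t ht _ (hmem ⌊t - a⌋₊)).2
  have h3 : |t - min (a + (⌊t - a⌋₊ : ℝ)) b| ≤ 1 := by
    rw [hmin, abs_le]; constructor <;> linarith
  have h4 := hd.tri (α t) (α (min (a + (⌊t - a⌋₊ : ℝ)) b)) x
  have h5 : C * |t - min (a + (⌊t - a⌋₊ : ℝ)) b| ≤ C * 1 := by gcongr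
  linarith

/-- The endpoints of a discrete quasi-geodesic may be moved by a bounded amount. -/
theorem DQ.endMod (hd : GM d) {C R : ℝ} {n : ℕ} {c : ℕ → X} (h : DQ d C n c) (x y : X)
    (hx : d x (c 0) ≤ R) (hy : d y (c n) ≤ R) :
    ∃ c' : ℕ → X, DQ d (2 * C + 2 * R) (n + 1) c' ∧ c' 0 = x ∧ c' (n + 1) = y ∧
      (∀ i ≤ n + 1, d (c' i) (c (min i n)) ≤ R) ∧ (∀ i ≤ n, d (c' i) (c i) ≤ R) := by
  have hR : 0 ≤ R := (hd.nonneg _ _).trans hx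
  set c' : ℕ → X := fun i => if i = 0 then x else if i = n + 1 then y else c i with hc'
  have h1 : ∀ i ≤ n + 1, d (c' i) (c (min i n)) ≤ R := by
    intro i hi
    simp only [hc']
    split_ifs with h0 h2
    · subst h0; simpa using hx
    · subst h2; simpa using hy
    · rw [min_eq_left (by omega), hd.self]; exact hR
  refine ⟨c', ⟨by linarith [h.1], ?_⟩, by simp [hc'], by simp [hc'], h1, ?_⟩
  · intro i hi j hj
    have h2 := h.2 (min i n) (min_le_right _ _) (min j n) (min_le_right _ _)
    refine qg_perturb h.1 (by linarith) (abs_nonneg _) ?_ ?_ h2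
    · refine (abs_abs_sub_abs_le _ _).trans ?_
      have a1 : ((min i n : ℕ) : ℝ) ≤ i := by exact_mod_cast min_le_left _ _
      have a2 : (i : ℝ) ≤ ((min i n : ℕ) : ℝ) + 1 := by
        have : i ≤ min i n + 1 := by omega
        exact_mod_cast this
      have b1 : ((min j n : ℕ) : ℝ) ≤ j := by exact_mod_cast min_le_left _ _
      have b2 : (j : ℝ) ≤ ((min j n : ℕ) : ℝ) + 1 := by
        have : j ≤ min j n + 1 := by omega
        exact_mod_cast this
      rw [abs_le]; constructor <;> linarith
    · have e1 := h1 i hi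
      have e2 := h1 j hj
      have t1 := hd.tri (c (min i n)) (c' i) (c (min j n))
      have t2 := hd.tri (c' i) (c' j) (c (min j n))
      have t3 := hd.tri (c' i) (c (min i n)) (c' j)
      have t4 := hd.tri (c (min i n)) (c (min j n)) (c' j)
      have s1 := hd.symm (c (min i n)) (c' i)
      have s2 := hd.symm (c (min j n)) (c' j)
      rw [abs_le]; constructor <;> linarith
  · intro i hi
    have := h1 i (by omega)
    rwa [min_eq_left hi] at this

theorem DQ.step {C : ℝ} {n : ℕ} {c : ℕ → X} (h : DQ d C n c) {i : ℕ} (hi : i < n) :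
    d (c i) (c (i + 1)) ≤ 2 * C := by
  have := (h.2 i hi.le (i + 1) hi).2
  have e : |(i : ℝ) - ((i + 1 : ℕ) : ℝ)| = 1 := by push_cast; simp
  rw [e] at this
  linarith

theorem DMorse.transfer (hd : GM d) {N : ℝ → ℝ} {A B : Set X} {D : ℝ} (h : DMorse d N A)
    (hAB : ∀ a ∈ A, ∃ b ∈ B, d a b ≤ D) (hBA : ∀ b ∈ B, ∃ a ∈ A, d b a ≤ D) :
    DMorse d (fun C => N (2 * C + 2 * D) + 2 * D) B := by
  intro C n c hc h0 hn i hi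
  obtain ⟨a, ha, ha'⟩ := hBA _ h0
  obtain ⟨a2, ha2, ha2'⟩ := hBA _ hn
  obtain ⟨c', hc', h0', hn', -, hcl⟩ := hc.endMod hd (R := D) a a2 (by rwa [hd.symm]) (by rwa [hd.symm])
  obtain ⟨x, hx, hx'⟩ := h _ _ c' hc' (h0' ▸ ha) (hn' ▸ ha2) i (by omega)
  obtain ⟨b, hb, hb'⟩ := hAB x hx
  refine ⟨b, hb, ?_⟩
  have t1 := hd.tri (c i) (c' i) b
  have t2 := hd.tri (c' i) x b
  have := hcl i hi
  rw [hd.symm] at this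
  simp only
  linarith

/-- A discrete path (with steps of length at most `1`) inside `P`, together with its total
weight, where the step leaving `y` has weight `w y`. -/
inductive PW (d : X → X → ℝ) (P : X → Prop) (w : X → ℝ) : X → X → ℝ → Prop
  | refl {x : X} : P x → PW d P w x x 0
  | step {x y z : X} {W : ℝ} : PW d P w x y W → d y z ≤ 1 → P z → PW d P w x z (W + w y)

theorem PW.trans {P : X → Prop} {w : X → ℝ} {x y z : X} {V W : ℝ} (h : PW d P w x y V)
    (h' : PW d P w y z W) : PW d P w x z (V + W) := by
  induction h' with
  | refl _ => simpa using h
  | step _ h2 h3 ih => rw [← add_assoc]; exact ih.step h2 h3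

theorem PW.left {P : X → Prop} {w : X → ℝ} {x y : X} {W : ℝ} (h : PW d P w x y W) : P x := by
  induction h with
  | refl h => exact h
  | step _ _ _ ih => exact ih

theorem PW.right {P : X → Prop} {w : X → ℝ} {x y : X} {W : ℝ} (h : PW d P w x y W) : P y := by
  cases h with
  | refl h => exact h
  | step _ _ h => exact h

theorem PW.of_fun {P : X → Prop} {w : X → ℝ} {c : ℕ → X} {n : ℕ}
    (h1 : ∀ i < n, d (c i) (c (i + 1)) ≤ 1) (h2 : ∀ i ≤ n, P (c i)) {i j : ℕ} (hij : i ≤ j)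
    (hj : j ≤ n) : PW d P w (c i) (c j) (∑ k ∈ Finset.Ico i j, w (c k)) := by
  induction j, hij using Nat.le_induction with
  | base => simpa using PW.refl (h2 i hj)
  | succ j hij ih =>
    rw [Finset.sum_Ico_succ_top hij]
    exact (ih (by omega)).step (h1 j (by omega)) (h2 _ hj)

theorem PW.exists_fun {P : X → Prop} {w : X → ℝ} {x y : X} {W : ℝ} (h : PW d P w x y W) :
    ∃ (n : ℕ) (c : ℕ → X), c 0 = x ∧ c n = y ∧ (∀ i < n, d (c i) (c (i + 1)) ≤ 1) ∧
      (∀ i ≤ n, P (c i)) ∧ ∑ k ∈ Finset.range n, w (c k) = W := by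
  induction h with
  | refl h => exact ⟨0, fun _ => x, rfl, rfl, by simp, by simpa using h, by simp⟩
  | @step y z W _ hyz hz ih =>
    obtain ⟨n, c, h0, hn, h1, h2, h3⟩ := ih
    refine ⟨n + 1, fun k => if k ≤ n then c k else z, by simp [h0], by simp, ?_, ?_, ?_⟩
    · intro i hi
      rcases Nat.lt_or_ge i n with h | h
      · dsimp only
        rw [if_pos h.le, if_pos (by omega)]; exact h1 i h
      · have : i = n := by omega
        subst this
        simpa [hn] using hyz
    · intro i hi
      dsimp only
      split_ifs with h
      · exact h2 i h
      · exact hz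
    · rw [Finset.sum_range_succ]
      simp only [le_refl, if_true, hn]
      congr 1
      rw [← h3]
      apply Finset.sum_congr rfl
      intro k hk
      rw [if_pos (Finset.mem_range.1 hk).le]

/-- `x` and `y` are joined by a discrete path inside `P` of length at most `L`. -/
def PL (d : X → X → ℝ) (P : X → Prop) (x y : X) (L : ℝ) : Prop :=
  ∃ W ≤ L, PW d P (fun _ => 1) x y W

theorem PL.trans {P : X → Prop} {x y z : X} {V W : ℝ} (h : PL d P x y V) (h' : PL d P y z W) :
    PL d P x z (V + W) := by
  obtain ⟨a, ha, h⟩ := h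
  obtain ⟨b, hb, h'⟩ := h'
  exact ⟨a + b, by linarith, h.trans h'⟩

theorem PL.mono {P Q : X → Prop} {x y : X} {V W : ℝ} (h : PL d P x y V) (hPQ : ∀ x, P x → Q x)
    (hVW : V ≤ W) : PL d Q x y W := by
  obtain ⟨a, ha, h⟩ := h
  refine ⟨a, ha.trans hVW, ?_⟩
  clear ha
  induction h with
  | refl h => exact .refl (hPQ _ h)
  | step _ h1 h2 ih => exact ih.step h1 (hPQ _ h2)

theorem PL.symm (hd : GM d) {P : X → Prop} {x y : X} {V : ℝ} (h : PL d P x y V) :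
    PL d P y x V := by
  obtain ⟨a, ha, h⟩ := h
  refine ⟨a, ha, ?_⟩
  clear ha
  induction h with
  | refl h => exact .refl h
  | step h1 h2 h3 ih =>
    rw [add_comm]
    refine PW.trans ?_ ih
    have := PW.step (d := d) (P := P) (w := fun _ => 1) (.refl h3) (by rw [hd.symm]; exact h2) h1.right
    simpa using this

/-- Jumps of length at most `J` can be filled by geodesics. -/
theorem PL.fill (hd : GM d) {P : X → Prop} {x y : X} {J : ℝ} (hJ : d x y ≤ J)
    (hP : ∀ q, d x q ≤ J → P q) : PL d P x y J := by
  obtain ⟨n, c, hn, h0, h1, hc⟩ := hd.geo' x y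
  refine ⟨n, by linarith, ?_⟩
  have := PW.of_fun (d := d) (P := P) (w := fun _ => 1) (c := c) (n := n) ?_ ?_
    (Nat.zero_le n) le_rfl
  · simpa [h0, h1] using this
  · intro i hi
    rw [hc i hi.le (i + 1) hi]
    push_cast; simp
  · intro i hi
    apply hP
    rw [← h0, hc 0 (Nat.zero_le _) i hi]
    have : (i : ℝ) ≤ n := by exact_mod_cast hi
    simp
    linarith

/-- Paths are carried to paths by coarsely Lipschitz maps. -/
theorem PL.map {Y : Type*} {dY : Y → Y → ℝ} (hd : GM d) {f : Y → X} {J : ℝ}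
    (hf : ∀ y z, dY y z ≤ 1 → d (f y) (f z) ≤ J) {P : Y → Prop} {Q : X → Prop}
    (hPQ : ∀ y q, P y → d (f y) q ≤ J → Q q) (hJ : 0 ≤ J) {x y : Y} {L : ℝ} (h : PL dY P x y L) :
    PL d Q (f x) (f y) (J * L) := by
  obtain ⟨W, hW, h⟩ := h
  have : PL d Q (f x) (f y) (J * W) := by
    clear hW
    induction h with
    | refl h =>
      rw [mul_zero]
      exact ⟨0, le_rfl, .refl (hPQ _ _ h (by rw [hd.self]; exact hJ))⟩
    | step h1 h2 h3 ih =>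
      rw [mul_add, mul_one]
      exact ih.trans (PL.fill hd (hf _ _ h2) (fun q hq => hPQ _ q h1.right hq))
  exact this.mono (fun _ h => h) (by gcongr)

/-- Paths along the points of a sequence with bounded jumps. -/
theorem PL.along (hd : GM d) {c : ℕ → X} {n : ℕ} {J : ℝ} (h1 : ∀ i < n, d (c i) (c (i + 1)) ≤ J)
    {P : X → Prop} (h2 : ∀ i ≤ n, ∀ q, d (c i) q ≤ J → P q) (hJ : 0 ≤ J) {i j : ℕ} (hij : i ≤ j)
    (hj : j ≤ n) : PL d P (c i) (c j) (J * ((j : ℝ) - i)) := by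
  induction j, hij using Nat.le_induction with
  | base =>
    refine ⟨0, by simp, .refl (h2 i hj _ ?_)⟩
    rw [hd.self]; exact hJ
  | succ j hij ih =>
    refine ((ih (by omega)).trans (PL.fill hd (h1 j (by omega)) (h2 j (by omega)))).mono
      (fun _ h => h) (le_of_eq ?_)
    push_cast; ring

end Disc
end MorseGoG

namespace MorseGoG
section Detours
variable {X : Type*} {d : X → X → ℝ}

/-! ### Detours and quasi-geodesics -/

/-- `x` and `y` are joined by a path of length at most `m * r` avoiding the ball of radius `r / m`
around `z`. -/
def Det (d : X → X → ℝ) (m r : ℝ) (x y z : X) : Prop :=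
  PL d (fun q => r / m ≤ d q z) x y (m * r)

theorem Det.mono {m m' r : ℝ} {x y z : X} (h : Det d m r x y z) (hm : 0 < m) (hmm : m ≤ m')
    (hr : 0 ≤ r) : Det d m' r x y z :=
  PL.mono h (fun q hq => le_trans (by gcongr) hq) (by gcongr)

theorem PW.weight_le {P Q : X → Prop} {w : X → ℝ} {b : ℝ} {x y : X} {W : ℝ}
    (h : PW d P (fun _ => 1) x y W) (hPQ : ∀ q, P q → Q q) (hw : ∀ q, P q → w q ≤ b) :
    ∃ W' ≤ b * W, PW d Q w x y W' := by
  induction h with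
  | refl h => exact ⟨0, by simp, .refl (hPQ _ h)⟩
  | step h1 h2 h3 ih =>
    obtain ⟨W', hW', h⟩ := ih
    exact ⟨_, by nlinarith [hw _ h1.right], h.step h2 (hPQ _ h3)⟩

theorem unit_steps (hd : GM d) {c : ℕ → X} {n : ℕ} (h : ∀ i < n, d (c i) (c (i + 1)) ≤ 1)
    {i j : ℕ} (hij : i ≤ j) (hj : j ≤ n) : d (c i) (c j) ≤ (j : ℝ) - i := by
  induction j, hij using Nat.le_induction with
  | base => simp [hd.self]
  | succ j hij ih =>
    have h1 := hd.tri (c i) (c j) (c (j + 1))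
    have h2 := h j (by omega)
    have h3 := ih (by omega)
    push_cast
    linarith

/-- A detour can be replaced by a quasi-geodesic detour: minimise, over all paths avoiding `z`, the
length weighted by `1 + (r / d(·, z)) ^ 2`.  The weight prevents a minimiser from coming close to
`z`, and on the remaining region it is comparable to the length. -/
theorem Det.quasi (hd : GM d) {m r : ℝ} (hm : 1 ≤ m) (hr : 1 ≤ r) {x y z : X}
    (h : Det d m r x y z) {M Q : ℝ} (hM : M = m * (1 + m ^ 2) + 1) (hQ : Q = m + 2 * M) :
    ∃ (n : ℕ) (c : ℕ → X), DQ d (1 + 4 * Q ^ 2 + 2 * Q * M) n c ∧ c 0 = x ∧ c n = y ∧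
      ∀ i ≤ n, r / Q ≤ d (c i) z := by
  have hM1 : 1 ≤ M := by rw [hM]; nlinarith [sq_nonneg m]
  have hQ1 : 1 ≤ Q := by rw [hQ]; linarith
  have hpos : ∀ q, 0 < d q z → 1 ≤ d q z := fun q hq =>
    hd.one_le (fun h => by rw [h, hd.self] at hq; exact lt_irrefl _ hq)
  set w : X → ℝ := fun q => 1 + (r / d q z) ^ 2 with hw
  have hw1 : ∀ q, 1 ≤ w q := fun q => by simp only [hw]; nlinarith [sq_nonneg (r / d q z)]
  -- a bound for the weight at a definite distance from `z`
  have hwle : ∀ a q, 1 ≤ a → r / a ≤ d q z → w q ≤ 1 + a ^ 2 := by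
    intro a q ha hq
    have h1 : 0 < r / a := by positivity
    have h2 : r / d q z ≤ a := by
      rw [div_le_iff₀ (by linarith)]
      rw [div_le_iff₀ (by linarith)] at hq
      linarith
    have : (r / d q z) ^ 2 ≤ a ^ 2 := by
      apply pow_le_pow_left₀ _ h2
      exact div_nonneg (by linarith) (hd.nonneg _ _)
    simp only [hw]; linarith
  set P : X → Prop := fun q => 1 ≤ d q z with hP
  have hx : r / m ≤ d x z := by
    obtain ⟨_, _, h⟩ := h
    exact h.left
  have hex : ∃ W ≤ (1 + m ^ 2) * (m * r), PW d P w x y W := by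
    obtain ⟨W, hW, h⟩ := h
    obtain ⟨W', hW', h'⟩ := h.weight_le (Q := P) (w := w) (b := 1 + m ^ 2)
      (fun q hq => hpos q (lt_of_lt_of_le (by positivity) hq)) (fun q hq => hwle m q hm hq)
    exact ⟨W', hW'.trans (by gcongr), h'⟩
  have hnn : ∀ a b W, PW d P w a b W → 0 ≤ W := by
    intro a b W h
    induction h with
    | refl _ => exact le_rfl
    | @step y _ _ _ _ _ ih => linarith [hw1 y]
  -- an almost minimal path
  obtain ⟨W₀, hW₀, hmin⟩ : ∃ W₀, PW d P w x y W₀ ∧ ∀ W, PW d P w x y W → W₀ ≤ W + 1 := by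
    obtain ⟨W, -, h⟩ := hex
    have hne : {W | PW d P w x y W}.Nonempty := ⟨W, h⟩
    obtain ⟨W₀, h1, h2⟩ := exists_lt_of_csInf_lt hne (lt_add_one (sInf {W | PW d P w x y W}))
    refine ⟨W₀, h1, fun W hW => ?_⟩
    have : sInf {W | PW d P w x y W} ≤ W := csInf_le ⟨0, fun V hV => hnn _ _ _ hV⟩ hW
    linarith
  have hW₀M : W₀ ≤ M * r := by
    obtain ⟨W, hW, h⟩ := hex
    have := hmin W h
    rw [hM]; nlinarith
  obtain ⟨n, c, h0, hn, hst, hPc, hsum⟩ := hW₀.exists_fun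
  have hnW : (n : ℝ) ≤ M * r := by
    refine le_trans ?_ hW₀M
    rw [← hsum]
    calc (n : ℝ) = ∑ k ∈ Finset.range n, (1 : ℝ) := by simp
      _ ≤ _ := Finset.sum_le_sum (fun k _ => hw1 _)
  -- replacing a piece of the path gains at most `1`
  have hrep : ∀ i j, i ≤ j → j ≤ n → ∀ W, PW d P w (c i) (c j) W →
      ∑ k ∈ Finset.Ico i j, w (c k) ≤ W + 1 := by
    intro i j hij hj W hW
    have p1 := PW.of_fun (w := w) hst hPc (Nat.zero_le i) (hij.trans hj)
    have p2 := PW.of_fun (w := w) hst hPc hj le_rfl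
    rw [h0] at p1
    rw [hn] at p2
    have := hmin _ ((p1.trans hW).trans p2)
    rw [← hsum, Finset.range_eq_Ico, ← Finset.sum_Ico_consecutive _ (Nat.zero_le i) (hij.trans hj),
      ← Finset.sum_Ico_consecutive _ hij hj] at this
    linarith
  -- the path stays away from `z`
  have hbar : ∀ k ≤ n, 1 / d (c k) z ≤ m / r + 2 * ∑ i ∈ Finset.range k, 1 / d (c i) z ^ 2 := by
    intro k
    induction k with
    | zero =>
      intro _
      have h1 : 0 < r / m := by positivity
      have : 1 / d (c 0) z ≤ 1 / (r / m) := by rw [h0]; gcongr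
      simpa using this
    | succ k ih =>
      intro hk
      have h1 := ih (by omega)
      rw [Finset.sum_range_succ]
      have h2 : 1 ≤ d (c k) z := hPc k (by omega)
      have h3 : 1 ≤ d (c (k + 1)) z := hPc (k + 1) hk
      have h4 := hst k (by omega)
      have h5 := hd.tri (c k) (c (k + 1)) z
      have h6 : 1 / d (c (k + 1)) z - 1 / d (c k) z ≤ 2 * (1 / d (c k) z ^ 2) := by
        rw [div_sub_div _ _ (by linarith) (by linarith), mul_one_div,
          div_le_div_iff₀ (by positivity) (by positivity)]
        have h7 : 1 * d (c k) z - d (c (k + 1)) z * 1 ≤ 1 := by linarith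
        have h8 : d (c k) z ≤ 2 * d (c (k + 1)) z := by linarith
        nlinarith [mul_le_mul_of_nonneg_right h7 (sq_nonneg (d (c k) z)),
          mul_le_mul_of_nonneg_left h8 (by linarith : (0 : ℝ) ≤ d (c k) z)]
      linarith
  have haway : ∀ k ≤ n, r / Q ≤ d (c k) z := by
    intro k hk
    have h1 := hbar k hk
    have h2 : ∑ i ∈ Finset.range k, 1 / d (c i) z ^ 2 ≤ M / r := by
      have h3 : ∑ i ∈ Finset.range k, 1 / d (c i) z ^ 2 ≤
          ∑ i ∈ Finset.range n, w (c i) / r ^ 2 := by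
        refine (Finset.sum_le_sum_of_subset_of_nonneg (Finset.range_mono hk)
          (fun i _ _ => by positivity)).trans (Finset.sum_le_sum fun i _ => ?_)
        rw [le_div_iff₀ (by positivity)]
        simp only [hw, div_pow]
        have : 1 / d (c i) z ^ 2 * r ^ 2 = r ^ 2 / d (c i) z ^ 2 := by ring
        rw [this]; linarith
      rw [← Finset.sum_div, hsum] at h3
      refine h3.trans ?_
      rw [div_le_div_iff₀ (by positivity) (by positivity)]
      nlinarith
    have h4 : 1 / d (c k) z ≤ Q / r := by
      rw [hQ, add_div, mul_div_assoc]; linarith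
    have h5 : 1 ≤ d (c k) z := hPc k hk
    rw [div_le_div_iff₀ (by linarith) (by linarith)] at h4
    rw [div_le_iff₀ (by linarith)]
    linarith
  refine ⟨n, c, ?_, h0, hn, haway⟩
  have hQM : 0 ≤ Q * M := by positivity
  set C := 1 + 4 * Q ^ 2 + 2 * Q * M with hC
  have hC1 : 1 ≤ C := by nlinarith [sq_nonneg Q]
  have hlow : ∀ i j, i ≤ j → j ≤ n → ((j : ℝ) - i) ≤ C * d (c i) (c j) + 1 := by
    intro i j hij hj
    have hi := hij.trans hj
    have hD := hd.nonneg (c i) (c j)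
    rcases le_or_gt (d (c i) (c j)) (d (c i) z / 2) with hle | hgt
    · obtain ⟨l, g, hl, g0, gl, hg⟩ := hd.geo' (c i) (c j)
      have hgz : ∀ k ≤ l, r / (2 * Q) ≤ d (g k) z := by
        intro k hk
        have h1 := hd.tri (g 0) (g k) z
        rw [hg 0 (Nat.zero_le _) k hk, g0] at h1
        have h2 : |((0 : ℕ) : ℝ) - k| ≤ l := by
          have : (k : ℝ) ≤ l := by exact_mod_cast hk
          simpa using this
        have h3 := haway i hi
        have h4 : r / (2 * Q) = (r / Q) / 2 := by field_simp
        rw [h4]; linarith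
      have hp : PL d (fun q => r / (2 * Q) ≤ d q z) (c i) (c j) l := by
        have := PW.of_fun (d := d) (P := fun q => r / (2 * Q) ≤ d q z) (w := fun _ => 1)
          (c := g) (n := l) (fun k hk => by
            rw [hg k hk.le (k + 1) hk]; push_cast; simp) hgz (Nat.zero_le l) le_rfl
        rw [g0, gl] at this
        exact ⟨_, by simp, this⟩
      obtain ⟨W, hW, hp⟩ := hp
      obtain ⟨W', hW', hp'⟩ := hp.weight_le (Q := P) (w := w) (b := 1 + (2 * Q) ^ 2)
        (fun q hq => hpos q (lt_of_lt_of_le (by positivity) hq))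
        (fun q hq => hwle (2 * Q) q (by linarith) hq)
      have h1 := hrep i j hij hj W' hp'
      have h2 : ((j : ℝ) - i) ≤ ∑ k ∈ Finset.Ico i j, w (c k) := by
        calc ((j : ℝ) - i) = ∑ k ∈ Finset.Ico i j, (1 : ℝ) := by simp [hij]
          _ ≤ _ := Finset.sum_le_sum (fun k _ => hw1 _)
      have h3 : (1 + (2 * Q) ^ 2) * W ≤ C * d (c i) (c j) := by
        rw [← hl]
        have : (1 + (2 * Q) ^ 2) ≤ C := by rw [hC]; nlinarith
        have : (1 + (2 * Q) ^ 2) * W ≤ (1 + (2 * Q) ^ 2) * l := by gcongr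
        refine this.trans ?_
        gcongr
      linarith
    · have h1 := haway i hi
      have h2 : (j : ℝ) ≤ n := by exact_mod_cast hj
      have h3 : r ≤ 2 * Q * d (c i) (c j) := by
        rw [div_le_iff₀ (by linarith)] at h1
        nlinarith
      have h4 : M * r ≤ M * (2 * Q * d (c i) (c j)) := by gcongr
      have h5 : M * (2 * Q * d (c i) (c j)) ≤ C * d (c i) (c j) := by
        rw [hC]; nlinarith [mul_nonneg (sq_nonneg Q) hD]
      have h6 : (0 : ℝ) ≤ i := by positivity
      linarith
  have hboth : ∀ i j, i ≤ j → j ≤ n → |(i : ℝ) - j| / C - C ≤ d (c i) (c j) ∧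
      d (c i) (c j) ≤ C * |(i : ℝ) - j| + C := by
    intro i j hij hj
    have hij' : (i : ℝ) ≤ j := by exact_mod_cast hij
    rw [abs_sub_comm, abs_of_nonneg (by linarith)]
    constructor
    · rw [sub_le_iff_le_add, div_le_iff₀ (by linarith)]
      nlinarith [hlow i j hij hj]
    · have := unit_steps hd hst hij hj
      nlinarith
  refine ⟨hC1, fun i hi j hj => ?_⟩
  rcases le_total i j with hij | hij
  · exact hboth i j hij hj
  · rw [hd.symm, abs_sub_comm]; exact hboth j i hij hi

/-- A discrete intermediate value argument: a path following a geodesic between two of its points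
passes near every point in between. -/
theorem passes_near (hd : GM d) {γ : ℕ → X} (hγ : IsGeodSeq d γ) {c : ℕ → X} {n : ℕ} {J M : ℝ}
    (hJ : ∀ i < n, d (c i) (c (i + 1)) ≤ J) (hJ0 : 0 ≤ J)
    (hM : ∀ i ≤ n, ∃ t, d (c i) (γ t) ≤ M) {s t u : ℕ} (h0 : c 0 = γ s) (hn : c n = γ u)
    (hst : s ≤ t) (htu : t ≤ u) : ∃ i ≤ n, d (c i) (γ t) ≤ 3 * M + J := by
  have hM0 : 0 ≤ M := by
    obtain ⟨t, ht⟩ := hM 0 (Nat.zero_le _)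
    exact (hd.nonneg _ _).trans ht
  choose! τ hτ using hM
  have hst' : (s : ℝ) ≤ t := by exact_mod_cast hst
  have htu' : (t : ℝ) ≤ u := by exact_mod_cast htu
  by_contra! hcon
  -- the parameters `τ i` would have to stay below `t`
  have key : ∀ i ≤ n, (τ i : ℝ) < t := by
    intro i
    induction i with
    | zero =>
      intro hi
      by_contra! hlt
      have h1 := hcon 0 hi
      have h2 := hτ 0 hi
      rw [h0, hγ, abs_sub_comm, abs_of_nonneg (by linarith)] at h1 h2
      linarith
    | succ i ih =>
      intro hi
      have h1 := ih (by omega)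
      by_contra! hlt
      have h2 := hτ i (by omega)
      have h3 := hτ (i + 1) hi
      have h4 := hJ i (by omega)
      have h5 := hd.tri (γ (τ i)) (c i) (γ (τ (i + 1)))
      have h6 := hd.tri (c i) (c (i + 1)) (γ (τ (i + 1)))
      rw [hγ, abs_sub_comm, abs_of_nonneg (by linarith), hd.symm] at h5
      have h7 := hd.tri (c i) (γ (τ i)) (γ t)
      rw [hγ, abs_sub_comm, abs_of_nonneg (by linarith)] at h7
      have h8 := hcon i (by omega)
      linarith
  have h1 := key n le_rfl
  have h2 := hcon n le_rfl
  have h3 := hτ n le_rfl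
  rw [hn, hγ, abs_of_nonneg (by linarith)] at h2 h3
  linarith

/-- Along Morse geodesic rays there are no long detours. -/
theorem no_detour (N : ℝ → ℝ) {m : ℝ} (hm : 1 ≤ m) : ∃ r₀ : ℝ, 1 ≤ r₀ ∧ ∀ {X : Type*}
    {d : X → X → ℝ} (_ : GM d) (γ : ℕ → X), IsGeodSeq d γ → DMorse d N (range γ) → ∀ s t u : ℕ,
    s ≤ t → t ≤ u → ∀ r : ℝ, r₀ < r → ¬ Det d m r (γ s) (γ u) (γ t) := by
  set M := m * (1 + m ^ 2) + 1 with hM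
  set Q := m + 2 * M with hQ
  set C := 1 + 4 * Q ^ 2 + 2 * Q * M with hC
  have hM1 : 1 ≤ M := by rw [hM]; nlinarith [sq_nonneg m]
  have hQ1 : 1 ≤ Q := by rw [hQ]; linarith
  refine ⟨max 1 (Q * (3 * N C + 2 * C)), le_max_left _ _, ?_⟩
  intro X d hd γ hγ hN s t u hst htu r hr hdet
  have hr1 := (le_max_left _ _).trans_lt hr
  have hr2 := (le_max_right _ _).trans_lt hr
  obtain ⟨n, c, hc, h0, hn, haway⟩ := hdet.quasi hd hm hr1.le hM hQ
  obtain ⟨i, hi, hi'⟩ := passes_near hd hγ (c := c) (n := n) (J := 2 * C) (M := N C) (fun i hi => hc.step hi)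
    (by linarith [hc.1]) (fun i hi => by
      obtain ⟨_, ⟨t, rfl⟩, ht⟩ := hN C n c hc ⟨s, h0.symm⟩ ⟨u, hn.symm⟩ i hi
      exact ⟨t, ht⟩) h0 hn hst htu
  have h1 := haway i hi
  rw [div_le_iff₀ (by linarith)] at h1
  nlinarith

/-- Strong form of the Morse property of a ray: a quasi-geodesic with endpoints on the ray and the
segment of the ray between them are close to each other. -/
def SM (d : X → X → ℝ) (N : ℝ → ℝ) (γ : ℕ → X) : Prop :=
  ∀ (C : ℝ) (n : ℕ) (c : ℕ → X) (s u : ℕ), s ≤ u → DQ d C n c → c 0 = γ s → c n = γ u →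
    (∀ i ≤ n, ∃ t, d (c i) (γ t) ≤ N C) ∧ ∀ t, s ≤ t → t ≤ u → ∃ i ≤ n, d (c i) (γ t) ≤ N C

theorem DMorse.sm (hd : GM d) {γ : ℕ → X} (hγ : IsGeodSeq d γ) {N : ℝ → ℝ}
    (hN : DMorse d N (range γ)) : SM d (fun C => 3 * N C + 2 * C) γ := by
  intro C n c s u hsu hc h0 hn
  have h1 : ∀ i ≤ n, ∃ t, d (c i) (γ t) ≤ N C := by
    intro i hi
    obtain ⟨_, ⟨t, rfl⟩, ht⟩ := hN C n c hc ⟨s, h0.symm⟩ ⟨u, hn.symm⟩ i hi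
    exact ⟨t, ht⟩
  have hC := hc.1
  refine ⟨fun i hi => ?_, fun t hst htu => ?_⟩
  · obtain ⟨t, ht⟩ := h1 i hi
    exact ⟨t, by linarith [hd.nonneg (c i) (γ t)]⟩
  · exact passes_near hd hγ (c := c) (n := n) (fun i hi => hc.step hi) (by linarith) h1 h0 hn hst htu

/-- A quasi-geodesic, followed up to a point nearest to `z` and then left along a geodesic to `z`,
is a quasi-geodesic. -/
theorem concat_at (hd : GM d) {C : ℝ} {n : ℕ} {c : ℕ → X} (hc : DQ d C n c) (z : X) {j : ℕ}
    (hj' : j ≤ n) (hmin' : ∀ i ≤ n, d z (c j) ≤ d z (c i)) :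
    ∃ (l : ℕ) (p : ℕ → X), (l : ℝ) = d z (c j) ∧
      DQ d (3 * C) (j + l) p ∧ (∀ i ≤ j, p i = c i) ∧ p (j + l) = z ∧
      ∀ k, j ≤ k → k ≤ j + l → d z (p k) ≤ l := by
  obtain ⟨l, g, hl, g0, gl, hg⟩ := hd.geo' (c j) z
  rw [hd.symm] at hl
  have hC := hc.1
  set p : ℕ → X := fun i => if i ≤ j then c i else g (i - j) with hp
  have p1 : ∀ i ≤ j, p i = c i := fun i hi => by simp [hp, hi]
  have p2 : ∀ k, p (j + k) = g k := by
    intro k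
    simp only [hp]
    split_ifs with h
    · have : k = 0 := by omega
      subst this; simp [g0]
    · congr 1; omega
  have hgz : ∀ k ≤ l, d z (g k) = l - k := by
    intro k hk
    have hk' : (k : ℝ) ≤ l := by exact_mod_cast hk
    rw [← gl, hg l le_rfl k hk, abs_of_nonneg (by linarith)]
  have hCC : ∀ x D : ℝ, 0 ≤ x → x / C - C ≤ D → x ≤ C * D + C * C := by
    intro x D _ h
    rw [sub_le_iff_le_add, div_le_iff₀ (by linarith)] at h
    nlinarith
  have main : ∀ a ≤ j + l, ∀ b ≤ j + l, a ≤ b → |(a : ℝ) - b| / (3 * C) - 3 * C ≤ d (p a) (p b) ∧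
      d (p a) (p b) ≤ 3 * C * |(a : ℝ) - b| + 3 * C := by
    intro a ha b hb hab
    rcases le_or_gt b j with hbj | hbj
    · rw [p1 a (by omega), p1 b hbj]
      exact qg_mono hC (by linarith) (abs_nonneg _) (hc.2 a (by omega) b (by omega))
    obtain ⟨k, rfl⟩ := Nat.exists_eq_add_of_lt hbj
    rcases le_or_gt a j with haj | haj
    · have hk : k + 1 ≤ l := by omega
      rw [p1 a haj, show j + k + 1 = j + (k + 1) by ring, p2]
      have h1 := hc.2 a (by omega) j hj'
      have haj' : (a : ℝ) ≤ j := by exact_mod_cast haj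
      rw [abs_sub_comm, abs_of_nonneg (by linarith)] at h1
      have h2 := hmin' a (by omega)
      have h3 := hgz (k + 1) hk
      have h4 := hd.tri z (g (k + 1)) (c a)
      have h5 : d (c j) (g (k + 1)) = (k + 1 : ℕ) := by
        rw [← g0, hg 0 (Nat.zero_le _) _ hk]; push_cast; rw [zero_sub, abs_neg]
        exact abs_of_nonneg (by positivity)
      have h6 := hd.tri (c a) (c j) (g (k + 1))
      have h7 := hd.tri (c a) (g (k + 1)) (c j)
      have s1 := hd.symm (c a) (g (k + 1))
      have s2 := hd.symm (c j) (g (k + 1))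
      have h8 : |(a : ℝ) - ((j + (k + 1) : ℕ) : ℝ)| = (j - a) + (k + 1 : ℕ) := by
        rw [abs_sub_comm, abs_of_nonneg] <;> push_cast <;> [ring; linarith]
      rw [h8]
      have h9 := hCC _ _ (by linarith) h1.1
      have h10 : ((k + 1 : ℕ) : ℝ) ≤ d (c a) (g (k + 1)) := by linarith
      have h11 : (0 : ℝ) ≤ ((k + 1 : ℕ) : ℝ) := by positivity
      constructor
      · rw [sub_le_iff_le_add, div_le_iff₀ (by linarith)]
        have : d (c a) (c j) ≤ 2 * d (c a) (g (k + 1)) := by linarith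
        nlinarith
      · have := h1.2
        nlinarith
    · obtain ⟨k', rfl⟩ := Nat.exists_eq_add_of_lt haj
      rw [show j + k + 1 = j + (k + 1) by ring, show j + k' + 1 = j + (k' + 1) by ring, p2, p2,
        hg _ (by omega) _ (by omega)]
      have e : |((j + (k' + 1) : ℕ) : ℝ) - ((j + (k + 1) : ℕ) : ℝ)| =
          |((k' + 1 : ℕ) : ℝ) - ((k + 1 : ℕ) : ℝ)| := by
        push_cast; congr 1; ring
      rw [e]
      have h0 := abs_nonneg (((k' + 1 : ℕ) : ℝ) - ((k + 1 : ℕ) : ℝ))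
      constructor
      · rw [sub_le_iff_le_add, div_le_iff₀ (by linarith)]
        nlinarith
      · nlinarith
  refine ⟨l, p, hl, ⟨by linarith, ?_⟩, p1, ?_, ?_⟩
  · intro a ha b hb
    rcases le_total a b with hab | hab
    · exact main a ha b hb hab
    · rw [abs_sub_comm, hd.symm]
      exact main b hb a ha hab
  · rw [p2, gl]
  · intro k hk hk'
    obtain ⟨k, rfl⟩ := Nat.exists_eq_add_of_le hk
    rw [p2, hgz k (by omega)]
    linarith [(Nat.cast_nonneg k : (0 : ℝ) ≤ k)]

theorem nearest_concat (hd : GM d) {C : ℝ} {n : ℕ} {c : ℕ → X} (hc : DQ d C n c) (z : X) :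
    ∃ (j l : ℕ) (p : ℕ → X), j ≤ n ∧ (∀ i ≤ n, (l : ℝ) ≤ d z (c i)) ∧ (l : ℝ) = d z (c j) ∧
      DQ d (3 * C) (j + l) p ∧ (∀ i ≤ j, p i = c i) ∧ p (j + l) = z ∧
      ∀ k, j ≤ k → k ≤ j + l → d z (p k) ≤ l := by
  obtain ⟨j, hj, hmin⟩ := Finset.exists_min_image (Finset.range (n + 1)) (fun i => d z (c i))
    ⟨0, by simp⟩
  have hj' : j ≤ n := by simpa [Nat.lt_succ_iff] using hj
  have hmin' : ∀ i ≤ n, d z (c j) ≤ d z (c i) := fun i hi => hmin i (by simpa [Nat.lt_succ_iff])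
  obtain ⟨l, p, hl, h⟩ := concat_at hd hc z hj' hmin'
  exact ⟨j, l, p, hj', fun i hi => hl ▸ hmin' i hi, hl, h⟩

/-- A quasi-geodesic ray at finite Hausdorff distance from a Morse geodesic ray with the same origin
is at uniformly bounded Hausdorff distance from it. -/
theorem uniform_hd (hd : GM d) {N : ℝ → ℝ} {β : ℕ → X} (hβ : IsGeodSeq d β) (hN : SM d N β)
    {K : ℝ} {γ : ℕ → X} (hγ : ∀ n, DQ d K n γ) (h0 : γ 0 = β 0) {r : ℝ}
    (h2 : ∀ k, ∃ i, d (β k) (γ i) ≤ r) :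
    (∀ i, ∃ k, d (γ i) (β k) ≤ N (3 * K)) ∧ ∀ k, ∃ i, d (γ i) (β k) ≤ N (3 * K) := by
  have hK : 1 ≤ K := (hγ 0).1
  have key : ∀ k : ℕ, ∃ (j : ℕ), (k : ℝ) - r ≤ K * j + K ∧
      (∀ i ≤ j, ∃ t, d (γ i) (β t) ≤ N (3 * K)) ∧
      ∀ t : ℕ, (t : ℝ) + r + N (3 * K) < k → ∃ i, d (γ i) (β t) ≤ N (3 * K) := by
    intro k
    obtain ⟨n, hn⟩ := h2 k
    obtain ⟨j, l, p, hj, hl, hl', hp, hp1, hp2, hp3⟩ := nearest_concat hd (hγ n) (β k)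
    have hlr : (l : ℝ) ≤ r := (hl n le_rfl).trans hn
    obtain ⟨a1, a2⟩ := hN _ _ p 0 k (Nat.zero_le _) hp (by rw [hp1 0 (Nat.zero_le _), h0]) hp2
    refine ⟨j, ?_, ?_, ?_⟩
    · have h3 := hd.tri (β 0) (γ j) (β k)
      rw [hβ, hd.symm (γ j), ← hl', ← h0] at h3
      have h4 := ((hγ j).2 0 (Nat.zero_le _) j le_rfl).2
      simp only [Nat.cast_zero, zero_sub, abs_neg, Nat.abs_cast] at h3 h4
      linarith
    · intro i hi
      obtain ⟨t, ht⟩ := a1 i (by omega)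
      exact ⟨t, by rwa [hp1 i hi] at ht⟩
    · intro t ht
      have htk : (t : ℝ) ≤ k := by
        obtain ⟨t', ht'⟩ := a1 0 (Nat.zero_le _)
        linarith [hd.nonneg (p 0) (β t'), (Nat.cast_nonneg l : (0 : ℝ) ≤ l)]
      obtain ⟨i, hi, hit⟩ := a2 t (Nat.zero_le _) (by exact_mod_cast htk)
      rcases le_or_gt i j with h | h
      · exact ⟨i, by rwa [hp1 i h] at hit⟩
      · have h5 := hp3 i h.le hi
        have h6 := hd.tri (β k) (p i) (β t)
        rw [hβ, abs_of_nonneg (by linarith)] at h6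
        linarith
  constructor
  · intro i
    obtain ⟨k, hk⟩ := exists_nat_gt (K * i + K + r)
    obtain ⟨j, hj, h3, -⟩ := key k
    apply h3
    by_contra! hlt
    have : (j : ℝ) ≤ i := by exact_mod_cast hlt.le
    nlinarith
  · intro t
    obtain ⟨k, hk⟩ := exists_nat_gt ((t : ℝ) + r + N (3 * K))
    obtain ⟨j, -, -, h⟩ := key k
    exact h t hk

end Detours
end MorseGoG

namespace MorseGoG

/-! ### Rays without detours are Morse -/

section Converse
variable {X : Type*} {d : X → X → ℝ}

/-- The distance from the points of a bi-Lipschitz ray without detours to a quasi-geodesic with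
endpoints on the ray is bounded. -/
theorem near_of_no_detour (hd : GM d) {K : ℝ} (hK : 1 ≤ K) {γ : ℕ → X}
    (hγ : ∀ i j : ℕ, |(i : ℝ) - j| / K ≤ d (γ i) (γ j) ∧ d (γ i) (γ j) ≤ K * |(i : ℝ) - j|)
    {ρ : ℝ → ℝ}
    (hρ : ∀ m, 1 ≤ m → ∀ r, ρ m < r → ∀ s t u, s ≤ t → t ≤ u → ¬ Det d m r (γ s) (γ u) (γ t))
    {C : ℝ} {n : ℕ} {c : ℕ → X} (hc : DQ d C n c) {s u : ℕ} (hsu : s ≤ u) (h0 : c 0 = γ s)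
    (hn : c n = γ u) {t : ℕ} (hst : s ≤ t) (htu : t ≤ u) :
    ∃ i ≤ n, d (c i) (γ t) ≤ max (4 * C) (ρ (2 + 18 * C ^ 2 * K ^ 2)) := by
  have hC := hc.1
  set m := 2 + 18 * C ^ 2 * K ^ 2 with hm
  have hm2 : 2 ≤ m := by rw [hm]; nlinarith [mul_nonneg (sq_nonneg C) (sq_nonneg K)]
  -- the nearest point projection to the quasi-geodesic
  have hnear : ∀ t : ℕ, ∃ i ≤ n, ∀ j ≤ n, d (c i) (γ t) ≤ d (c j) (γ t) := by
    intro t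
    obtain ⟨j, hj, hmin⟩ := Finset.exists_min_image (Finset.range (n + 1)) (fun i => d (c i) (γ t))
      ⟨0, by simp⟩
    exact ⟨j, by simpa [Nat.lt_succ_iff] using hj, fun i hi => hmin i (by simpa [Nat.lt_succ_iff])⟩
  choose τ hτn hτ using hnear
  obtain ⟨t₀, ht₀, hmax⟩ := Finset.exists_max_image (Finset.Icc s u) (fun t => d (c (τ t)) (γ t))
    ⟨s, by simp [hsu]⟩
  rw [Finset.mem_Icc] at ht₀
  refine ⟨τ t, hτn t, (hmax t (by simp [hst, htu])).trans ?_⟩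
  clear hst htu t
  by_contra! hcon
  set D := d (c (τ t₀)) (γ t₀) with hD
  have hDC : 4 * C < D := (le_max_left _ _).trans_lt hcon
  have hDρ : ρ m < D := (le_max_right _ _).trans_lt hcon
  have hceil := Nat.le_ceil (2 * K * D)
  have hceil' := Nat.ceil_lt_add_one (show 0 ≤ 2 * K * D by nlinarith)
  set h := ⌈2 * K * D⌉₊ with hh
  set P : X → Prop := fun q => D / m ≤ d q (γ t₀) with hP
  have hDm : D / m ≤ D / 2 := by gcongr; linarith
  -- a point on the quasi-geodesic near `γ v`, joined to `γ v` far away from `γ t₀`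
  have hconn : ∀ v, s ≤ v → v ≤ u → (v = s ∨ v = u ∨ (h : ℝ) ≤ |(v : ℝ) - t₀|) →
      ∃ i ≤ n, d (γ v) (c i) ≤ D ∧ PL d P (γ v) (c i) D := by
    intro v hv1 hv2 hv
    have htriv : ∀ i ≤ n, c i = γ v → ∃ i ≤ n, d (γ v) (c i) ≤ D ∧ PL d P (γ v) (c i) D := by
      intro i hi hiv
      refine ⟨i, hi, by rw [hiv, hd.self]; linarith, ?_⟩
      rw [hiv]
      refine ⟨0, by linarith, .refl ?_⟩
      have := hτ t₀ i hi
      rw [hiv] at this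
      simp only [hP]; linarith
    rcases hv with rfl | rfl | hv
    · exact htriv 0 (Nat.zero_le _) h0
    · exact htriv n le_rfl hn
    · have h1 : d (γ v) (c (τ v)) ≤ D := by
        rw [hd.symm]; exact hmax v (by simp [hv1, hv2])
      refine ⟨τ v, hτn v, h1, PL.fill hd h1 fun q hq => ?_⟩
      have h2 := (hγ v t₀).1
      have h3 : 2 * D ≤ |(v : ℝ) - t₀| / K := by
        rw [le_div_iff₀ (by linarith)]; linarith
      have h4 := hd.tri (γ v) q (γ t₀)
      simp only [hP]; linarith
  obtain ⟨i, hi, hi1, hi2⟩ := hconn (max s (t₀ - h)) (le_max_left _ _) (by omega) (by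
    by_cases hle : s + h ≤ t₀
    · right; right
      rw [max_eq_right (by omega), Nat.cast_sub (by omega),
        show (t₀ : ℝ) - h - t₀ = -h by ring, abs_neg, Nat.abs_cast]
    · left; omega)
  obtain ⟨j, hj, hj1, hj2⟩ := hconn (min u (t₀ + h)) (by omega) (min_le_left _ _) (by
    rcases le_total u (t₀ + h) with hle | hle
    · right; left; rw [min_eq_left hle]
    · right; right; rw [min_eq_right hle]; push_cast; rw [add_sub_cancel_left, Nat.abs_cast])
  set s' := max s (t₀ - h) with hs'
  set u' := min u (t₀ + h) with hu'
  have hs't : s' ≤ t₀ := by omega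
  have htu' : t₀ ≤ u' := by omega
  have hdist : d (c i) (c j) ≤ 8 * K ^ 2 * D := by
    have a1 := hd.tri (c i) (γ s') (c j)
    have a2 := hd.tri (γ s') (γ u') (c j)
    rw [hd.symm (c i) (γ s')] at a1
    have a3 := (hγ s' u').2
    have a4 : |(s' : ℝ) - u'| ≤ 2 * h := by
      have b1 : (u' : ℝ) ≤ s' + 2 * h := by
        have : u' ≤ s' + 2 * h := by omega
        exact_mod_cast this
      have b2 : (s' : ℝ) ≤ u' := by exact_mod_cast hs't.trans htu'
      rw [abs_sub_comm, abs_of_nonneg (by linarith)]; linarith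
    have a5 : K * |(s' : ℝ) - u'| ≤ K * (2 * (3 * K * D)) := by
      have : (h : ℝ) ≤ 3 * K * D := by nlinarith
      gcongr; linarith
    have a6 : 1 * D ≤ K ^ 2 * D := by gcongr <;> nlinarith
    linarith
  have hij : |(i : ℝ) - j| ≤ 9 * C * K ^ 2 * D := by
    have a1 := (hc.2 i hi j hj).1
    rw [sub_le_iff_le_add, div_le_iff₀ (by linarith)] at a1
    have a2 : (d (c i) (c j) + C) * C ≤ (9 * K ^ 2 * D) * C := by
      have : C ≤ K ^ 2 * D := by nlinarith
      gcongr; linarith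
    linarith
  have hpath : PL d P (c i) (c j) (2 * C * |(i : ℝ) - j|) := by
    have hP' : ∀ k ≤ n, ∀ q, d (c k) q ≤ 2 * C → P q := by
      intro k hk q hq
      have a1 := hτ t₀ k hk
      have a2 := hd.tri (c k) q (γ t₀)
      simp only [hP]; linarith
    rcases le_total i j with hle | hle
    · have := PL.along hd (c := c) (n := n) (fun i hi => hc.step hi) hP' (by linarith) hle hj
      have e : |(i : ℝ) - j| = j - i := by
        rw [abs_sub_comm, abs_of_nonneg]
        have : (i : ℝ) ≤ j := by exact_mod_cast hle
        linarith
      rwa [e]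
    · have := (PL.along hd (c := c) (n := n) (fun i hi => hc.step hi) hP' (by linarith) hle hi).symm hd
      have e : |(i : ℝ) - j| = i - j := by
        rw [abs_of_nonneg]
        have : (j : ℝ) ≤ i := by exact_mod_cast hle
        linarith
      rwa [e]
  refine hρ m (by linarith) D hDρ s' t₀ u' hs't htu' ?_
  refine ((hi2.trans hpath).trans (hj2.symm hd)).mono (fun _ h => h) ?_
  have : 2 * C * |(i : ℝ) - j| ≤ 2 * C * (9 * C * K ^ 2 * D) := by gcongr
  rw [hm]; nlinarith

/-- A bi-Lipschitz ray without detours is Morse, with a gauge depending only on the constants. -/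
theorem dmorse_of_no_detour (hd : GM d) {K : ℝ} (hK : 1 ≤ K) {γ : ℕ → X}
    (hγ : ∀ i j : ℕ, |(i : ℝ) - j| / K ≤ d (γ i) (γ j) ∧ d (γ i) (γ j) ≤ K * |(i : ℝ) - j|)
    {ρ : ℝ → ℝ}
    (hρ : ∀ m, 1 ≤ m → ∀ r, ρ m < r → ∀ s t u, s ≤ t → t ≤ u → ¬ Det d m r (γ s) (γ u) (γ t))
    {D : ℝ → ℝ} (hD : D = fun C => max (4 * C) (ρ (2 + 18 * C ^ 2 * K ^ 2))) :
    DMorse d (fun C => D C + C * (C * (2 * D C + K + C)) + C) (range γ) := by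
  have main : ∀ (C : ℝ) (n : ℕ) (c : ℕ → X), DQ d C n c → ∀ s u, s ≤ u → c 0 = γ s → c n = γ u →
      ∀ i ≤ n, ∃ a ∈ range γ, d (c i) a ≤ D C + C * (C * (2 * D C + K + C)) + C := by
    intro C n c hc s u hsu h0 hn k hk
    have hC := hc.1
    have hDC : 4 * C ≤ D C := by rw [hD]; exact le_max_left _ _
    have hnear : ∀ t, s ≤ t → t ≤ u → ∃ i ≤ n, d (c i) (γ t) ≤ D C := by
      intro t h1 h2
      rw [hD]; exact near_of_no_detour hd hK hγ hρ hc hsu h0 hn h1 h2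
    by_contra! hcon
    -- the quasi-geodesic parameter of the points near `γ t` would have to stay below `k`
    have key : ∀ t, s ≤ t → t ≤ u → ∃ i < k, d (c i) (γ t) ≤ D C := by
      intro t hst
      induction t, hst using Nat.le_induction with
      | base =>
        intro _
        have hk0 : k ≠ 0 := by
          rintro rfl
          have := hcon (γ s) ⟨s, rfl⟩
          rw [h0, hd.self] at this
          have : 0 ≤ C * (C * (2 * D C + K + C)) := by
            have : 0 ≤ 2 * D C + K + C := by linarith
            positivity
          linarith
        exact ⟨0, by omega, by rw [h0, hd.self]; linarith⟩
      | succ t hst ih =>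
        intro htu
        obtain ⟨i, hik, hi⟩ := ih (by omega)
        obtain ⟨j, hjn, hj⟩ := hnear (t + 1) (by omega) htu
        refine ⟨j, ?_, hj⟩
        by_contra! hkj
        have a1 := (hc.2 i (by omega) j hjn).1
        rw [sub_le_iff_le_add, div_le_iff₀ (by linarith)] at a1
        have a2 := hd.tri (c i) (γ t) (c j)
        have a3 := hd.tri (γ t) (γ (t + 1)) (c j)
        have a4 := (hγ t (t + 1)).2
        have e : |(t : ℝ) - ((t + 1 : ℕ) : ℝ)| = 1 := by push_cast; simp
        rw [e] at a4
        rw [hd.symm (γ (t + 1))] at a3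
        have a5 : |(i : ℝ) - k| ≤ |(i : ℝ) - j| := by
          have b1 : (i : ℝ) ≤ k := by exact_mod_cast hik.le
          have b2 : (k : ℝ) ≤ j := by exact_mod_cast hkj
          rw [abs_sub_comm, abs_of_nonneg (by linarith), abs_sub_comm (i : ℝ),
            abs_of_nonneg (by linarith)]
          linarith
        have a6 := (hc.2 k hk i (by omega)).2
        have a7 := hd.tri (c k) (c i) (γ t)
        have a8 := hcon (γ t) ⟨t, rfl⟩
        rw [abs_sub_comm] at a6
        have a9 : C * |(i : ℝ) - k| ≤ C * (C * (2 * D C + K + C)) := by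
          have : (d (c i) (c j) + C) * C ≤ C * (2 * D C + K + C) := by
            rw [mul_comm]; gcongr; linarith
          gcongr; linarith
        linarith
    obtain ⟨i, hik, hi⟩ := key u hsu le_rfl
    have a1 := (hc.2 i (by omega) n le_rfl).1
    rw [sub_le_iff_le_add, div_le_iff₀ (by linarith)] at a1
    have a5 : |(k : ℝ) - n| ≤ |(i : ℝ) - n| := by
      have b1 : (i : ℝ) ≤ k := by exact_mod_cast hik.le
      have b2 : (k : ℝ) ≤ n := by exact_mod_cast hk
      rw [abs_sub_comm, abs_of_nonneg (by linarith), abs_sub_comm (i : ℝ),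
        abs_of_nonneg (by linarith)]
      linarith
    have a6 := (hc.2 k hk n le_rfl).2
    have a8 := hcon (γ u) ⟨u, rfl⟩
    rw [hn] at a1 a6
    have a9 : C * |(k : ℝ) - n| ≤ C * (C * (2 * D C + K + C)) := by
      have : (d (c i) (γ u) + C) * C ≤ C * (2 * D C + K + C) := by
        rw [mul_comm]; gcongr; linarith
      gcongr; linarith
    linarith
  intro C n c hc h0 hn i hi
  obtain ⟨s, hs⟩ := h0
  obtain ⟨u, hu⟩ := hn
  rcases le_total s u with hsu | hsu
  · exact main C n c hc s u hsu hs.symm hu.symm i hi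
  · have := main C n _ hc.reverse u s hsu (by simpa using hu.symm) (by simpa using hs.symm) (n - i)
      (Nat.sub_le _ _)
    simpa [Nat.sub_sub_self hi] using this

/-- A subset of a bi-Lipschitz embedded space which is Morse in the ambient space is Morse. -/
theorem DMorse.of_image {Y : Type*} {dY : Y → Y → ℝ} {f : Y → X} {K : ℝ} (hK : 1 ≤ K)
    (hf : ∀ y z, dY y z ≤ K * d (f y) (f z) ∧ d (f y) (f z) ≤ K * dY y z) {N : ℝ → ℝ} {A : Set Y}
    (h : DMorse d N (f '' A)) : DMorse dY (fun C => K * N (K * C)) A := by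
  intro C n c hc h0 hn i hi
  have hC := hc.1
  have hc' : DQ d (K * C) n (fun i => f (c i)) := by
    refine ⟨by nlinarith, fun i hi j hj => ?_⟩
    obtain ⟨a1, a2⟩ := hc.2 i hi j hj
    obtain ⟨b1, b2⟩ := hf (c i) (c j)
    rw [sub_le_iff_le_add, div_le_iff₀ (by linarith)] at a1
    constructor
    · rw [sub_le_iff_le_add, div_le_iff₀ (by positivity)]
      have : dY (c i) (c j) * C ≤ K * d (f (c i)) (f (c j)) * C := by gcongr
      nlinarith [mul_le_mul hK hK zero_le_one (by linarith), mul_nonneg (by linarith : 0 ≤ C) (by linarith : 0 ≤ C)]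
    · nlinarith
  obtain ⟨_, ⟨a, ha, rfl⟩, h1⟩ := h _ n _ hc' ⟨_, h0, rfl⟩ ⟨_, hn, rfl⟩ i hi
  exact ⟨a, ha, (hf _ _).1.trans (mul_le_mul_of_nonneg_left h1 (by linarith))⟩

end Converse
end MorseGoG

namespace MorseGoG
section Cones
variable {X : Type*} {d : X → X → ℝ}

/-! ### Relatively wide subgroups have detours -/

theorem coneDist_tendsto (hd : GM d) {ω : Ultrafilter ℕ} {o : ℕ → X} {s : ℕ → ℝ}
    (hs : ∀ n, 0 < s n) {a b : ℕ → X} (ha : a ∈ conePts ω d o s) (hb : b ∈ conePts ω d o s) :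
    Tendsto (fun n => d (a n) (b n) / s n) ω (𝓝 (coneDist ω d s a b)) := by
  obtain ⟨A, hA⟩ := ha
  obtain ⟨B, hB⟩ := hb
  have hbd : ∀ᶠ n in (ω : Filter ℕ), d (a n) (b n) / s n ∈ Icc 0 (A + B) := by
    filter_upwards [hA, hB] with n h1 h2
    refine ⟨div_nonneg (hd.nonneg _ _) (hs n).le, ?_⟩
    rw [div_le_iff₀ (hs n)]
    have := hd.tri (a n) (o n) (b n)
    rw [hd.symm (a n) (o n)] at this
    linarith
  obtain ⟨l, -, hl⟩ := (isCompact_Icc (a := (0 : ℝ)) (b := A + B)).ultrafilter_le_nhds'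
    (ω.map (fun n => d (a n) (b n) / s n)) hbd
  exact tendsto_nhds_limUnder ⟨l, hl⟩

theorem PL.translate {V : Type*} [Group V] {S : Set V} {P : V → Prop} {x y : V} {L : ℝ} (g : V)
    (h : PL (wdist S) P x y L) : PL (wdist S) (fun q => P (g⁻¹ * q)) (g * x) (g * y) L := by
  obtain ⟨W, hW, h⟩ := h
  refine ⟨W, hW, ?_⟩
  clear hW
  induction h with
  | refl h => exact .refl (by simpa using h)
  | step h1 h2 h3 ih => exact ih.step (by rwa [wdist_left]) (by simpa using h3)

theorem Det.translate {V : Type*} [Group V] {S : Set V} {m r : ℝ} {x y z : V} (g : V)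
    (h : Det (wdist S) m r x y z) : Det (wdist S) m r (g * x) (g * y) (g * z) := by
  refine PL.mono (PL.translate g h) (fun q hq => ?_) le_rfl
  rwa [← wdist_left S g, mul_inv_cancel_left] at hq

/-- Being joined to `x` by paths of linear length which avoid balls of linear radius is a locally
constant property in the complement of a point of an asymptotic cone. -/
theorem chain_step (hd : GM d) {ω : Ultrafilter ℕ} {o : ℕ → X} {s : ℕ → ℝ} (hs : ∀ n, 0 < s n)
    {z a b : ℕ → X} (hz : z ∈ conePts ω d o s) (ha : a ∈ conePts ω d o s)
    (hb : b ∈ conePts ω d o s) (hab : coneDist ω d s a b < coneDist ω d s a z / 2) :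
    ∃ k : ℝ, 1 ≤ k ∧ ∀ᶠ n in (ω : Filter ℕ), Det d k (s n) (a n) (b n) (z n) := by
  have t1 := coneDist_tendsto hd hs ha hb
  have t2 := coneDist_tendsto hd hs ha hz
  set δ := coneDist ω d s a z with hδ
  have hδ0 : 0 < δ := by
    have : 0 ≤ coneDist ω d s a b :=
      ge_of_tendsto t1 (Eventually.of_forall fun n => div_nonneg (hd.nonneg _ _) (hs n).le)
    linarith
  refine ⟨max 1 (max (4 / δ) δ), le_max_left _ _, ?_⟩
  have hk1 : 4 / δ ≤ max 1 (max (4 / δ) δ) := (le_max_left _ _).trans (le_max_right _ _)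
  have hk2 : δ ≤ max 1 (max (4 / δ) δ) := (le_max_right _ _).trans (le_max_right _ _)
  set k := max 1 (max (4 / δ) δ)
  filter_upwards [t1.eventually_lt_const hab,
    t2.eventually_const_lt (show 3 / 4 * δ < δ by linarith)] with n h1 h2
  rw [div_lt_iff₀ (hs n)] at h1
  rw [lt_div_iff₀ (hs n)] at h2
  have hsn := hs n
  refine (PL.fill hd (J := δ / 2 * s n) h1.le (fun q hq => ?_)).mono (fun _ h => h)
    (by gcongr; linarith)
  have h3 := hd.tri (a n) q (z n)
  have h4 : s n / k ≤ δ / 4 * s n := by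
    have : s n / k ≤ s n / (4 / δ) := by gcongr
    refine this.trans (le_of_eq ?_)
    field_simp
  linarith

/-- Two points of the same coset of a relatively wide subgroup are joined by a path of linear length
avoiding a ball of linear radius around any point that is not too close to either of them. -/
theorem RelativelyWide.detour {V : Type*} [Group V] {S : Set V} (hS : Subgroup.closure S = ⊤)
    {H : Subgroup V} (hH : RelativelyWide S H) {m₀ : ℝ} (hm₀ : 1 ≤ m₀) :
    ∃ m : ℝ, 1 ≤ m ∧ ∀ r : ℝ, m ≤ r → ∀ u v z : V, u⁻¹ * v ∈ H → wdist S u v ≤ m₀ * r →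
      r / m₀ ≤ wdist S u z → r / m₀ ≤ wdist S v z → Det (wdist S) m r u v z := by
  have hd := gm_wdist hS
  set d := wdist S with hdd
  by_contra! hcon
  have hcon' : ∀ n : ℕ, ∃ r : ℝ, (n : ℝ) + 1 ≤ r ∧ ∃ y z : V, y ∈ H ∧ d 1 y ≤ m₀ * r ∧
      r / m₀ ≤ d 1 z ∧ r / m₀ ≤ d y z ∧ ¬ Det d (n + 1) r 1 y z := by
    intro n
    obtain ⟨r, hr, u, v, z, h1, h2, h3, h4, h5⟩ := hcon (n + 1)
      (by linarith [(Nat.cast_nonneg n : (0 : ℝ) ≤ n)])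
    refine ⟨r, hr, u⁻¹ * v, u⁻¹ * z, h1, ?_, ?_, ?_, fun h => h5 ?_⟩
    · rwa [hdd, ← wdist_left S u, mul_one, mul_inv_cancel_left]
    · rwa [hdd, ← wdist_left S u, mul_one, mul_inv_cancel_left]
    · rwa [hdd, ← wdist_left S u, mul_inv_cancel_left, mul_inv_cancel_left]
    · simpa using h.translate u
  choose s hs y z hyH hy hz hyz hdet using hcon'
  have hs0 : ∀ n, 0 < s n := fun n => lt_of_lt_of_le (by positivity) (hs n)
  set ω : Ultrafilter ℕ := hyperfilter ℕ with hω
  have hωc : (ω : Filter ℕ) ≤ cofinite := hyperfilter_le_cofinite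
  have hlarge : ∀ b : ℝ, ∀ᶠ n : ℕ in (ω : Filter ℕ), b ≤ n := fun b =>
    (hωc.trans Nat.cofinite_eq_atTop.le) (tendsto_natCast_atTop_atTop.eventually_ge_atTop b)
  have hst : Tendsto s atTop atTop :=
    tendsto_atTop_mono (fun n => by linarith [hs n] : ∀ n : ℕ, (n : ℝ) ≤ s n)
      tendsto_natCast_atTop_atTop
  set x : ℕ → V := fun _ => 1
  have hxC : x ∈ conePts ω d x s := ⟨0, Eventually.of_forall fun n => by simp [hd.self]⟩
  have hyC : y ∈ conePts ω d x s := ⟨m₀, Eventually.of_forall hy⟩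
  have hzC : z ∈ conePts ω d x s := by
    refine ⟨2 * m₀, ?_⟩
    filter_upwards [hlarge m₀] with n hn
    by_contra! hfar
    have hsn := hs0 n
    -- if `z` is far away, a geodesic is a detour
    refine hdet n ((PL.fill hd (hy n) fun q hq => ?_).mono (fun _ h => h) ?_)
    · have h1 := hd.tri 1 q (z n)
      have h2 : s n / (n + 1) ≤ s n := div_le_self hsn.le (by linarith)
      have h3 : s n ≤ m₀ * s n := by nlinarith
      simp only [x] at hfar
      linarith
    · gcongr; linarith
  have hlim : ∀ a : ℕ → V, a ∈ conePts ω d x s → (∀ n, s n / m₀ ≤ d (a n) (z n)) →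
      coneDist ω d s a (z) ≠ 0 := by
    intro a ha h
    have := ge_of_tendsto (coneDist_tendsto hd hs0 ha hzC) (b := 1 / m₀)
      (Eventually.of_forall fun n => by
        rw [le_div_iff₀ (hs0 n), one_div_mul_eq_div]; exact h n)
    have h2 : 0 < 1 / m₀ := by positivity
    exact ne_of_gt (lt_of_lt_of_le h2 this)
  have hsep := hH ω hωc x s hs0 hst x y z (fun _ => H.one_mem) hyH hxC hyC hzC
  simp only [ConeSeparates, not_and, not_not] at hsep
  obtain ⟨A, hA, hxA, hyA, hconn⟩ := hsep (hlim x hxC hz) (hlim y hyC hyz)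
  set Ch : (ℕ → V) → Prop := fun w => ∃ k : ℝ, 1 ≤ k ∧ ∀ᶠ n in (ω : Filter ℕ),
    Det d k (s n) (x n) (w n) (z n) with hCh
  have htrans : ∀ a b : ℕ → V, Ch a → (∃ k : ℝ, 1 ≤ k ∧ ∀ᶠ n in (ω : Filter ℕ),
      Det d k (s n) (a n) (b n) (z n)) → Ch b := by
    rintro a b ⟨k, hk, h⟩ ⟨l, hl, h'⟩
    refine ⟨k + l, by linarith, ?_⟩
    filter_upwards [h, h'] with n h1 h2
    have hsn := hs0 n
    have e1 := PL.mono h1 (Q := fun q => s n / (k + l) ≤ d q (z n))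
      (fun q hq => le_trans (by gcongr; linarith) hq) le_rfl
    have e2 := PL.mono h2 (Q := fun q => s n / (k + l) ≤ d q (z n))
      (fun q hq => le_trans (by gcongr; linarith) hq) le_rfl
    exact (e1.trans e2).mono (fun _ h => h) (le_of_eq (by ring))
  have hsym : ∀ a b : ℕ → V, (∃ k : ℝ, 1 ≤ k ∧ ∀ᶠ n in (ω : Filter ℕ),
      Det d k (s n) (a n) (b n) (z n)) → (∃ k : ℝ, 1 ≤ k ∧ ∀ᶠ n in (ω : Filter ℕ),
      Det d k (s n) (b n) (a n) (z n)) := by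
    rintro a b ⟨k, hk, h⟩
    exact ⟨k, hk, h.mono fun n h => PL.symm hd h⟩
  have hxCh : Ch x := by
    refine ⟨m₀, hm₀, Eventually.of_forall fun n => ⟨0, ?_, .refl (hz n)⟩⟩
    have := hs0 n
    positivity
  have hyCh : ¬ Ch y := by
    rintro ⟨k, hk, h⟩
    obtain ⟨n, h1, h2⟩ := (h.and (hlarge k)).exists
    exact hdet n (h1.mono (by linarith) (by linarith) (hs0 n).le)
  -- two disjoint open sets covering `A`
  let _ : TopologicalSpace (ℕ → V) := coneTop ω d x s
  set U : ((ℕ → V) → Prop) → Set (ℕ → V) := fun p =>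
    ⋃ c ∈ {c ∈ A | p c}, {w | coneDist ω d s c w < coneDist ω d s c z / 2} with hU
  have hpos : ∀ c ∈ A, 0 < coneDist ω d s c z := fun c hc =>
    lt_of_le_of_ne (ge_of_tendsto (coneDist_tendsto hd hs0 (hA hc).1 hzC)
      (Eventually.of_forall fun n => div_nonneg (hd.nonneg _ _) (hs0 n).le)) (hA hc).2.symm
  have hUo : ∀ p, IsOpen (U p) := by
    intro p
    refine isOpen_biUnion fun c hc => ?_
    exact TopologicalSpace.isOpen_generateFrom_of_mem
      ⟨c, (hA hc.1).1, _, by linarith [hpos c hc.1], rfl⟩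
  have hself : ∀ c ∈ A, coneDist ω d s c c < coneDist ω d s c z / 2 := by
    intro c hc
    have : coneDist ω d s c c = 0 := by
      refine tendsto_nhds_unique (coneDist_tendsto hd hs0 (hA hc).1 (hA hc).1) ?_
      simp only [hd.self, zero_div]
      exact tendsto_const_nhds
    rw [this]; linarith [hpos c hc]
  have hUm : ∀ p, ∀ c ∈ A, p c → c ∈ U p := fun p c hc hp =>
    mem_biUnion (show c ∈ {c ∈ A | p c} from ⟨hc, hp⟩) (hself c hc)
  obtain ⟨w, hwA, hw1, hw2⟩ := hconn (U Ch) (U fun c => ¬ Ch c) (hUo _) (hUo _)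
    (fun c hc => by
      by_cases h : Ch c
      · exact Or.inl (hUm _ c hc h)
      · exact Or.inr (hUm (fun c => ¬ Ch c) c hc h))
    ⟨x, hxA, hUm _ x hxA hxCh⟩ ⟨y, hyA, hUm (fun c => ¬ Ch c) y hyA hyCh⟩
  simp only [hU, mem_iUnion, exists_prop] at hw1 hw2
  obtain ⟨a, ⟨haA, haC⟩, ha⟩ := hw1
  obtain ⟨b, ⟨hbA, hbC⟩, hb⟩ := hw2
  have e1 := chain_step hd hs0 hzC (hA haA).1 (hA hwA).1 ha
  have e2 := chain_step hd hs0 hzC (hA hbA).1 (hA hwA).1 hb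
  exact hbC (htrans w b (htrans a w haC e1) (hsym _ _ e2))

end Cones
end MorseGoG

namespace MorseGoG

/-! ### Sides of edges in a tree -/

section Tree
variable {VT : Type*} {T : SimpleGraph VT}

/-- The vertex `v` lies on the side of `b` of the edge `{a, b}`: it is joined to `b` by a walk that
does not use the edge. -/
def Side (T : SimpleGraph VT) (a b v : VT) : Prop := (T.deleteEdges {s(a, b)}).Reachable b v

theorem Side.refl (a b : VT) : Side T a b b := SimpleGraph.Reachable.refl _

theorem Side.step {a b v w : VT} (h : Side T a b v) (hvw : T.Adj v w) (hne : s(v, w) ≠ s(a, b)) :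
    Side T a b w :=
  SimpleGraph.Reachable.trans h
    (SimpleGraph.Adj.reachable (by rw [SimpleGraph.deleteEdges_adj]; exact ⟨hvw, hne⟩))

/-- Only the edge itself leads from one side to the other. -/
theorem Side.eq_of_cross {a b v w : VT} (hvw : T.Adj v w) (hv : ¬ Side T a b v)
    (hw : Side T a b w) : v = a ∧ w = b := by
  by_contra hne
  apply hv
  by_cases h : s(w, v) = s(a, b)
  · rcases Sym2.eq_iff.1 h with ⟨rfl, rfl⟩ | ⟨rfl, rfl⟩
    · exact Side.refl _ _
    · exact absurd ⟨rfl, rfl⟩ hne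
  · exact hw.step hvw.symm h

theorem reach_induction (hT : T.IsTree) {P : VT → Prop} (x : VT) (h0 : P x)
    (h1 : ∀ v w, P v → T.Adj v w → P w) (v : VT) : P v := by
  obtain ⟨p⟩ := hT.connected.preconnected x v
  induction p with
  | nil => exact h0
  | cons h p ih => exact ih (h1 _ _ h0 h)

theorem Side.induction {a b : VT} {P : VT → Prop} (h0 : P b)
    (h1 : ∀ v w, P v → Side T a b v → T.Adj v w → Side T a b w → P w) {v : VT}
    (hv : Side T a b v) : P v := by
  obtain ⟨p⟩ := hv
  have key : ∀ {u w : VT} (p : (T.deleteEdges {s(a, b)}).Walk u w), Side T a b u → P u → P w := by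
    intro u w p
    induction p with
    | nil => exact fun _ h => h
    | cons h p ih =>
      intro hs hP
      have hs' : Side T a b _ := SimpleGraph.Reachable.trans hs h.reachable
      rw [SimpleGraph.deleteEdges_adj] at h
      exact ih hs' (h1 _ _ hP hs h.1 hs')
  exact key p (Side.refl _ _) h0

theorem not_side (hT : T.IsTree) {a b : VT} (hab : T.Adj a b) : ¬ Side T a b a := by
  intro h
  have := SimpleGraph.isAcyclic_iff_forall_adj_isBridge.1 hT.isAcyclic hab
  rw [SimpleGraph.isBridge_iff] at this
  exact this h.symm

theorem side_or (hT : T.IsTree) {a b : VT} (hab : T.Adj a b) (v : VT) :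
    Side T a b v ∨ Side T b a v := by
  refine reach_induction hT b (P := fun v => Side T a b v ∨ Side T b a v)
    (Or.inl (Side.refl _ _)) ?_ v
  intro v w hv hvw
  by_contra hw
  push Not at hw
  rcases hv with hv | hv
  · obtain ⟨rfl, rfl⟩ := Side.eq_of_cross hvw.symm hw.1 hv
    exact hw.2 (Side.refl _ _)
  · obtain ⟨rfl, rfl⟩ := Side.eq_of_cross hvw.symm hw.2 hv
    exact hw.1 (Side.refl _ _)

theorem Side.subset (hT : T.IsTree) {a b c v : VT} (hab : T.Adj a b) (hbc : T.Adj b c)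
    (hac : a ≠ c) (hv : Side T b c v) : Side T a b v := by
  refine Side.induction (P := fun v => Side T a b v) ?_ ?_ hv
  · refine (Side.refl a b).step hbc ?_
    intro h
    rcases Sym2.eq_iff.1 h with ⟨rfl, h⟩ | ⟨h, h'⟩
    · exact hab.ne rfl
    · exact hac h'.symm
  · intro v w hv hv' hvw hw'
    by_contra hw
    obtain ⟨rfl, rfl⟩ := Side.eq_of_cross hvw.symm hw hv
    exact not_side hT hbc hv'

theorem not_side_both (hT : T.IsTree) {a b v : VT} (hab : T.Adj a b) (h : Side T a b v) :
    ¬ Side T b a v := by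
  refine Side.induction (P := fun v => ¬ Side T b a v) ?_ ?_ h
  · exact not_side hT hab.symm
  · intro v w hv hv' hvw hw' hw
    obtain ⟨rfl, rfl⟩ := Side.eq_of_cross hvw hv hw
    exact not_side hT hab hw'

theorem side_iff (hT : T.IsTree) {a b : VT} (hab : T.Adj a b) (v : VT) :
    Side T b a v ↔ ¬ Side T a b v :=
  ⟨not_side_both hT hab.symm, fun h => (side_or hT hab v).resolve_left h⟩

theorem Side.disjoint (hT : T.IsTree) {x b b' v : VT} (hb : T.Adj x b) (hb' : T.Adj x b')
    (hne : b ≠ b') (h : Side T x b v) : ¬ Side T x b' v :=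
  (side_iff hT hb' v).1 (h.subset hT hb'.symm hb hne.symm)

theorem exists_side (hT : T.IsTree) (x v : VT) (hv : v ≠ x) : ∃ b, T.Adj x b ∧ Side T x b v := by
  have : v = x ∨ ∃ b, T.Adj x b ∧ Side T x b v := by
    refine reach_induction hT x (P := fun v => v = x ∨ ∃ b, T.Adj x b ∧ Side T x b v)
      (Or.inl rfl) ?_ v
    intro v w hv hvw
    by_cases hw : w = x
    · exact Or.inl hw
    right
    rcases hv with rfl | ⟨b, hb, hs⟩
    · exact ⟨w, hvw, Side.refl _ _⟩
    · refine ⟨b, hb, ?_⟩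
      by_contra h
      exact hw (Side.eq_of_cross hvw.symm h hs).1
  exact this.resolve_left hv

/-- Finitely many edges separate two vertices. -/
theorem finite_sep (hT : T.IsTree) (q q' : VT) :
    {e : VT × VT | T.Adj e.1 e.2 ∧ ¬ Side T e.1 e.2 q ∧ Side T e.1 e.2 q'}.Finite := by
  refine reach_induction hT q
    (P := fun q' => {e : VT × VT | T.Adj e.1 e.2 ∧ ¬ Side T e.1 e.2 q ∧ Side T e.1 e.2 q'}.Finite)
    ?_ ?_ q'
  · convert Set.finite_empty
    ext e
    simp only [mem_ofPred_eq, mem_empty_iff_false, iff_false]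
    rintro ⟨_, h1, h2⟩
    exact h1 h2
  · intro v w hv hvw
    refine (hv.union (Set.finite_singleton (v, w))).subset ?_
    rintro ⟨a, b⟩ ⟨h1, h2, h3⟩
    by_cases h : Side T a b v
    · exact Or.inl ⟨h1, h2, h⟩
    · right
      obtain ⟨rfl, rfl⟩ := Side.eq_of_cross hvw h h3
      rfl

variable {G : Type*} [Group G] [MulAction G VT]

theorem Side.smul (hadj : ∀ (g : G) (a b : VT), T.Adj a b → T.Adj (g • a) (g • b)) (g : G)
    {a b v : VT} (h : Side T a b v) : Side T (g • a) (g • b) (g • v) := by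
  refine Side.induction (P := fun v => Side T (g • a) (g • b) (g • v)) (Side.refl _ _) ?_ h
  intro v w hv hv' hvw hw'
  by_cases he : s(v, w) = s(a, b)
  · rcases Sym2.eq_iff.1 he with ⟨rfl, rfl⟩ | ⟨rfl, rfl⟩
    · exact Side.refl _ _
    · -- `w = a` lies on the side of `b` only through an edge-free walk
      refine SimpleGraph.Reachable.trans hv (?_ : (T.deleteEdges _).Reachable _ _)
      obtain ⟨p⟩ := hw'
      refine ⟨p.map ⟨fun u => g • u, ?_⟩⟩
      intro u u' huu'
      rw [SimpleGraph.deleteEdges_adj] at huu' ⊢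
      refine ⟨hadj g _ _ huu'.1, ?_⟩
      intro h
      apply huu'.2
      rcases Sym2.eq_iff.1 h with ⟨h1, h2⟩ | ⟨h1, h2⟩
      · rw [MulAction.injective g h1, MulAction.injective g h2]; rfl
      · rw [MulAction.injective g h1, MulAction.injective g h2]; exact Sym2.eq_swap
  · refine hv.step (hadj g _ _ hvw) ?_
    intro h
    apply he
    rcases Sym2.eq_iff.1 h with ⟨h1, h2⟩ | ⟨h1, h2⟩
    · rw [MulAction.injective g h1, MulAction.injective g h2]
    · rw [MulAction.injective g h1, MulAction.injective g h2]; exact Sym2.eq_swap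

theorem side_smul (hadj : ∀ (g : G) (a b : VT), T.Adj a b → T.Adj (g • a) (g • b)) (g : G)
    {a b v : VT} : Side T (g • a) (g • b) (g • v) ↔ Side T a b v := by
  refine ⟨fun h => ?_, fun h => h.smul hadj g⟩
  simpa using h.smul hadj g⁻¹

open Classical in
/-- A point of the set of oriented edges `O`, starting at `x` if possible. -/
noncomputable def pick (x : VT) (O : Set (VT × VT)) : VT × VT :=
  if h : ∃ e ∈ O, e.1 = x then h.choose else if h : O.Nonempty then h.choose else (x, x)

/-- A representative of the `G`-orbit of an oriented edge, starting at `x` whenever the orbit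
contains an edge starting at `x`. -/
noncomputable def rep (G : Type*) [Group G] [MulAction G VT] (x : VT) (e : VT × VT) : VT × VT :=
  pick x (MulAction.orbit G e)

theorem rep_mem (x : VT) (e : VT × VT) : rep G x e ∈ MulAction.orbit G e := by
  unfold rep pick
  split_ifs with h h'
  · exact h.choose_spec.1
  · exact h'.choose_spec
  · exact absurd ⟨e, MulAction.mem_orbit_self e⟩ h'

theorem exists_smul_rep (x : VT) (e : VT × VT) : ∃ k : G, k • rep G x e = e := by
  obtain ⟨k, hk⟩ := rep_mem (G := G) x e
  have hk : k • e = rep G x e := hk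
  exact ⟨k⁻¹, by rw [← hk, inv_smul_smul]⟩

theorem rep_smul (x : VT) (g : G) (e : VT × VT) : rep G x (g • e) = rep G x e := by
  unfold rep
  rw [MulAction.orbit_smul g e]

theorem rep_fst (x b : VT) : (rep G x (x, b)).1 = x := by
  unfold rep pick
  have h : ∃ e' ∈ MulAction.orbit G (x, b), e'.1 = x := ⟨_, MulAction.mem_orbit_self _, rfl⟩
  rw [dif_pos h]
  exact h.choose_spec.2

theorem rep_adj (hadj : ∀ (g : G) (a b : VT), T.Adj a b → T.Adj (g • a) (g • b)) (x : VT)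
    {e : VT × VT} (he : T.Adj e.1 e.2) : T.Adj (rep G x e).1 (rep G x e).2 := by
  obtain ⟨k, hk⟩ := rep_mem (G := G) x e
  have hk : k • e = rep G x e := hk
  rw [← hk]
  exact hadj k _ _ he

/-- Up to translation, only finitely many edges separate `g • q` from `g' • q` when `g` and `g'` are
at distance at most `ρ`, and every such edge is a translate of its representative by an element
near `g`. -/
theorem crossing_bound {S : Set G} (hS : Subgroup.closure S = ⊤) (hf : S.Finite) (hT : T.IsTree)
    (hadj : ∀ (g : G) (a b : VT), T.Adj a b → T.Adj (g • a) (g • b)) (x q : VT) (ρ : ℝ) :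
    ∃ (R : ℝ) (J : Set (VT × VT)), 0 ≤ R ∧ J.Finite ∧ (∀ e ∈ J, T.Adj e.1 e.2) ∧
      ∀ g g' : G, wdist S g g' ≤ ρ → ∀ a b, T.Adj a b →
        (Side T a b (g • q) ↔ ¬ Side T a b (g' • q)) →
        rep G x (a, b) ∈ J ∧ ∃ k : G, k • rep G x (a, b) = (a, b) ∧ wdist S g k ≤ R := by
  classical
  have hd := gm_wdist hS
  set F : Set (VT × VT) := ⋃ s ∈ {s : G | wdist S 1 s ≤ ρ},
    ({e : VT × VT | T.Adj e.1 e.2 ∧ ¬ Side T e.1 e.2 q ∧ Side T e.1 e.2 (s • q)} ∪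
      {e : VT × VT | T.Adj e.1 e.2 ∧ ¬ Side T e.1 e.2 (s • q) ∧ Side T e.1 e.2 q}) with hF
  have hFf : F.Finite := by
    refine Set.Finite.biUnion (finite_ball hS hf ρ 1) ?_
    intro s _
    exact (finite_sep hT _ _).union (finite_sep hT _ _)
  choose k0 hk0 using fun e : VT × VT => exists_smul_rep (G := G) x e
  obtain ⟨R, hR⟩ : ∃ R : ℝ, ∀ e ∈ F, wdist S 1 (k0 e) ≤ R := by
    obtain ⟨R, hR⟩ := (hFf.image fun e => wdist S 1 (k0 e)).bddAbove
    exact ⟨R, fun e he => hR ⟨e, he, rfl⟩⟩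
  refine ⟨max R 0, rep G x '' F, le_max_right _ _, hFf.image _, ?_, ?_⟩
  · rintro _ ⟨e, he, rfl⟩
    apply rep_adj hadj
    simp only [hF, mem_iUnion] at he
    obtain ⟨s, _, h | h⟩ := he
    · exact h.1
    · exact h.1
  · intro g g' hgg' a b hab hside
    have hmem : (g⁻¹ • a, g⁻¹ • b) ∈ F := by
      simp only [hF, mem_iUnion]
      refine ⟨g⁻¹ * g', ?_, ?_⟩
      · have := wdist_left S g 1 (g⁻¹ * g')
        simp only [mem_ofPred_eq, ← this]
        simpa using hgg'
      · have h1 : Side T (g⁻¹ • a) (g⁻¹ • b) q ↔ Side T a b (g • q) := by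
          rw [← side_smul hadj g]; simp
        have h2 : Side T (g⁻¹ • a) (g⁻¹ • b) ((g⁻¹ * g') • q) ↔ Side T a b (g' • q) := by
          rw [← side_smul hadj g]; simp [mul_smul]
        simp only [mem_union, mem_ofPred_eq, h1, h2]
        have := hadj g⁻¹ _ _ hab
        tauto
    have hab' : g • (g⁻¹ • a, g⁻¹ • b) = (a, b) := by simp [Prod.smul_mk]
    have hrep : rep G x (a, b) = rep G x (g⁻¹ • a, g⁻¹ • b) := by
      rw [← hab', rep_smul]
    refine ⟨⟨_, hmem, hrep.symm⟩, g * k0 (g⁻¹ • a, g⁻¹ • b), ?_, ?_⟩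
    · rw [hrep, mul_smul, hk0, hab']
    · have := wdist_left S g 1 (k0 (g⁻¹ • a, g⁻¹ • b))
      rw [mul_one] at this
      rw [this]
      exact (hR _ hmem).trans (le_max_left _ _)

end Tree

/-! ### Pushing paths into a vertex group -/

section Surgery
variable {VT : Type*} {T : SimpleGraph VT} {G : Type*} [Group G] [MulAction G VT]

/-- A path of `G` with endpoints in `V = Stab x` shadows a chain of points of `V`: it decomposes into
pieces close to `V` and excursions which start and end near the same coset of an edge group. The
relation `Φ u w L` is thought of as: `u` and `w` are joined by a path of length `L` in `V`. -/
theorem surgery {S : Set G} (hS : Subgroup.closure S = ⊤) (hT : T.IsTree)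
    {x : VT} {R : ℝ} {J : Set (VT × VT)} (hR0 : 0 ≤ R)
    (hR : ∀ g g' : G, wdist S g g' ≤ 1 → ∀ a b, T.Adj a b →
        (Side T a b (g • x) ↔ ¬ Side T a b (g' • x)) →
        rep G x (a, b) ∈ J ∧ ∃ k : G, k • rep G x (a, b) = (a, b) ∧ wdist S g k ≤ R)
    {Φ : G → G → ℝ → Prop} (htr : ∀ u v w a b, Φ u v a → Φ v w b → Φ u w (a + b))
    (hmono : ∀ u v a b, Φ u v a → a ≤ b → Φ u v b) {n : ℕ} {c : ℕ → G}
    (hc : ∀ i < n, wdist S (c i) (c (i + 1)) ≤ 1)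
    (h0 : c 0 ∈ MulAction.stabilizer G x) (hn : c n ∈ MulAction.stabilizer G x)
    (move1 : ∀ i ≤ n, ∀ u ∈ MulAction.stabilizer G x, ∀ w ∈ MulAction.stabilizer G x,
      wdist S (c i) u ≤ R + 1 → wdist S (c i) w ≤ R + 1 → Φ u w 1)
    (move2 : ∀ i j, i ≤ j → j ≤ n → ∀ u ∈ MulAction.stabilizer G x,
      ∀ w ∈ MulAction.stabilizer G x, ∀ b, (x, b) ∈ J → u⁻¹ * w ∈ edgeStab G x b →
      wdist S (c i) u ≤ R + 1 → wdist S (c j) w ≤ R + 1 → Φ u w ((j : ℝ) - i + 1)) :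
    Φ (c 0) (c n) (3 * n + 1) := by
  have hd := gm_wdist hS
  have hstab : ∀ {k : G} {b : VT}, k • rep G x (x, b) = (x, b) → k ∈ MulAction.stabilizer G x := by
    intro k b h
    have h2 : (k • rep G x (x, b)).1 = x := by rw [h]
    rw [Prod.smul_fst, rep_fst] at h2
    exact h2
  -- the state reached at time `i`
  set St : ℕ → G → Prop := fun i q => q ∈ MulAction.stabilizer G x ∧ wdist S (c i) q ≤ R + 1 ∧
    (c i ∉ MulAction.stabilizer G x → ∃ b, T.Adj x b ∧ Side T x b (c i • x) ∧
      q • rep G x (x, b) = (x, b)) with hSt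
  -- entering index `i + 1`, from a vertex not on the same branch
  have enter : ∀ i < n, (∀ b, T.Adj x b → Side T x b (c (i + 1) • x) → ¬ Side T x b (c i • x)) →
      ∃ q, St (i + 1) q := by
    intro i hi hb
    by_cases hV : c (i + 1) ∈ MulAction.stabilizer G x
    · exact ⟨c (i + 1), hV, by rw [hd.self]; linarith, fun h => absurd hV h⟩
    · obtain ⟨b, hxb, hs⟩ := exists_side hT x (c (i + 1) • x) hV
      have h1 := hb b hxb hs
      obtain ⟨-, k, hk, hkd⟩ := hR (c i) (c (i + 1)) (hc i hi) x b hxb (by tauto)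
      refine ⟨k, hstab hk, ?_, fun _ => ⟨b, hxb, hs, hk⟩⟩
      have := hd.tri (c (i + 1)) (c i) k
      have h2 := hc i hi
      rw [hd.symm] at h2
      linarith
  have main : ∀ m i, i ≤ n → n - i = m → ∀ q, St i q → Φ q (c n) (3 * ((n : ℝ) - i) + 1) := by
    intro m
    induction m using Nat.strong_induction_on with
    | _ m ih =>
    intro i hi him q hq
    obtain ⟨hqV, hqd, hqb⟩ := hq
    rcases hi.eq_or_lt with rfl | hlt
    · have := move1 i le_rfl q hqV (c i) hn hqd (by rw [hd.self]; linarith)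
      exact hmono _ _ _ _ this (by simp)
    by_cases hV : c i ∈ MulAction.stabilizer G x
    · obtain ⟨q', hq'⟩ := enter i hlt (by
        intro b hxb _
        have : c i • x = x := hV
        rw [this]
        exact not_side hT hxb)
      have hstep : Φ q (c i) 1 := move1 i hi q hqV (c i) hV hqd (by rw [hd.self]; linarith)
      have hq2 : Φ (c i) q' 1 := by
        refine move1 (i + 1) hlt (c i) hV q' hq'.1 ?_ hq'.2.1
        have := hc i hlt
        rw [hd.symm] at this
        linarith
      have := ih (n - (i + 1)) (by omega) (i + 1) hlt rfl q' hq'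
      have := htr _ _ _ _ _ (htr _ _ _ _ _ hstep hq2) this
      refine hmono _ _ _ _ this ?_
      push_cast
      linarith
    · obtain ⟨b, hxb, hs, hqr⟩ := hqb hV
      classical
      have hex : ∃ j, i < j ∧ ¬ Side T x b (c j • x) := by
        refine ⟨n, hlt, ?_⟩
        have : c n • x = x := hn
        rw [this]
        exact not_side hT hxb
      have hjspec := Nat.find_spec hex
      have hjmin : ∀ l, l < Nat.find hex → i < l → Side T x b (c l • x) := by
        intro l hl hil
        by_contra h
        exact Nat.find_min hex hl ⟨hil, h⟩
      have hjn : Nat.find hex ≤ n := Nat.find_min' hex ⟨hlt, by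
        have : c n • x = x := hn
        rw [this]
        exact not_side hT hxb⟩
      obtain ⟨l, hl⟩ : ∃ l, Nat.find hex = l + 1 := ⟨Nat.find hex - 1, by omega⟩
      rw [hl] at hjspec hjmin hjn
      have hil : i ≤ l := by omega
      have hls : Side T x b (c l • x) := by
        rcases hil.eq_or_lt with rfl | h
        · exact hs
        · exact hjmin l (Nat.lt_succ_self l) h
      have hcl : wdist S (c (l + 1)) (c l) ≤ 1 := by rw [hd.symm]; exact hc l hjn
      obtain ⟨hJ, k, hk, hkd⟩ := hR (c (l + 1)) (c l) hcl x b hxb (by tauto)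
      obtain ⟨q', hq'⟩ := enter l hjn (by
        intro b' hxb' hs' hs''
        by_cases hbb : b = b'
        · subst hbb; exact hjspec.2 hs'
        · exact Side.disjoint hT hxb hxb' hbb hls hs'')
      have hrepx : rep G x (x, b) = (x, (rep G x (x, b)).2) := by
        ext
        · exact rep_fst x b
        · rfl
      have hE : q⁻¹ * k ∈ edgeStab G x (rep G x (x, b)).2 := by
        have : (q⁻¹ * k) • rep G x (x, b) = rep G x (x, b) := by
          rw [mul_smul, hk]
          exact inv_smul_eq_iff.2 hqr.symm
        refine ⟨?_, ?_⟩
        · have h1 := congrArg Prod.fst this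
          rw [Prod.smul_fst, rep_fst] at h1
          exact h1
        · exact congrArg Prod.snd this
      have m2 := move2 i (l + 1) (by omega) hjn q hqV k (hstab hk) _ (hrepx ▸ hJ) hE hqd
        (by linarith)
      have m1 := move1 (l + 1) hjn k (hstab hk) q' hq'.1 (by linarith) hq'.2.1
      have := ih (n - (l + 1)) (by omega) (l + 1) hjn rfl q' hq'
      have := htr _ _ _ _ _ (htr _ _ _ _ _ m2 m1) this
      refine hmono _ _ _ _ this ?_
      have : (i : ℝ) ≤ l := by exact_mod_cast hil
      push_cast
      linarith
  have := main n 0 (Nat.zero_le _) rfl (c 0) ⟨h0, by rw [hd.self]; linarith, fun h => absurd h0 h⟩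
  simpa using this

end Surgery
end MorseGoG

namespace MorseGoG

/-! ### Vertex groups and edge groups -/

section VertexGroup
variable {VT : Type*} {T : SimpleGraph VT} {G : Type*} [Group G] [MulAction G VT] {S : Set G}

theorem FGUndistorted.words {H : Subgroup G} (h : FGUndistorted S H) :
    ∃ (A : Set G) (C : ℝ), A.Finite ∧ 1 ≤ C ∧ A ⊆ H ∧ ∀ g ∈ H, ∃ l : List G,
      (∀ y ∈ l, y ∈ A ∨ y⁻¹ ∈ A) ∧ l.prod = g ∧ (l.length : ℝ) ≤ C * wdist S 1 g + C := by
  obtain ⟨A, hA, C, hC, hAC⟩ := h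
  refine ⟨(fun h : H => (h : G)) '' (A : Set H), C, A.finite_toSet.image _, hC, ?_, ?_⟩
  · rintro _ ⟨h, _, rfl⟩
    exact h.2
  · intro g hg
    obtain ⟨l, h1, h2, h3⟩ := wordLength_spec hA (⟨g, hg⟩ : H)
    refine ⟨l.map H.subtype, ?_, ?_, ?_⟩
    · intro y hy
      obtain ⟨h, hh, rfl⟩ := List.mem_map.1 hy
      rcases h2 h hh with h' | h'
      · exact Or.inl ⟨h, h', rfl⟩
      · exact Or.inr ⟨h⁻¹, h', rfl⟩
    · rw [← map_list_prod, h3]; rfl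
    · have := (hAC 1 ⟨g, hg⟩).1
      simp only [wdist, inv_one, one_mul] at this
      rw [List.length_map, h1]
      simpa [wdist] using this

/-- Vertex groups are finitely generated and bi-Lipschitz embedded. -/
theorem vertex_biLip (hS : Subgroup.closure S = ⊤) (hf : S.Finite) (hT : T.IsTree)
    (hadj : ∀ (g : G) (a b : VT), T.Adj a b → T.Adj (g • a) (g • b)) (x : VT)
    (hE : ∀ b, T.Adj x b → FGUndistorted S (edgeStab G x b)) :
    ∃ TV : Finset (MulAction.stabilizer G x),
      Subgroup.closure (TV : Set (MulAction.stabilizer G x)) = ⊤ ∧ ∃ K : ℝ, 1 ≤ K ∧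
      ∀ v v' : MulAction.stabilizer G x,
        wdist (TV : Set (MulAction.stabilizer G x)) v v' ≤ K * wdist S (v : G) v' ∧
        wdist S (v : G) v' ≤ K * wdist (TV : Set (MulAction.stabilizer G x)) v v' := by
  classical
  have hd := gm_wdist hS
  obtain ⟨R, J, hR0, hJf, hJadj, hR⟩ := crossing_bound hS hf hT hadj x x 1
  have hw : ∀ b, ∃ (A : Set G) (C : ℝ), T.Adj x b → A.Finite ∧ 1 ≤ C ∧ A ⊆ edgeStab G x b ∧
      ∀ g ∈ edgeStab G x b, ∃ l : List G, (∀ y ∈ l, y ∈ A ∨ y⁻¹ ∈ A) ∧ l.prod = g ∧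
        (l.length : ℝ) ≤ C * wdist S 1 g + C := by
    intro b
    by_cases hb : T.Adj x b
    · obtain ⟨A, C, h⟩ := (hE b hb).words
      exact ⟨A, C, fun _ => h⟩
    · exact ⟨∅, 0, fun h => absurd h hb⟩
  choose A C hAC using hw
  -- the generating set: a ball, together with generators of the finitely many edge groups
  set B : Set G := {v | v ∈ MulAction.stabilizer G x ∧ wdist S 1 v ≤ 2 * (R + 1)} ∪
    ⋃ e ∈ {e ∈ J | e.1 = x}, A e.2 with hB
  have hJx : ∀ e ∈ {e ∈ J | e.1 = x}, T.Adj x e.2 := by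
    rintro ⟨a, b⟩ ⟨he, rfl⟩
    exact hJadj _ he
  have hBf : B.Finite := by
    refine Set.Finite.union ((finite_ball hS hf (2 * (R + 1)) 1).subset fun v hv => hv.2) ?_
    exact (hJf.subset fun e he => he.1).biUnion fun e he => (hAC _ (hJx e he)).1
  have hBV : ∀ v ∈ B, v ∈ MulAction.stabilizer G x := by
    rintro v (hv | hv)
    · exact hv.1
    · simp only [mem_iUnion] at hv
      obtain ⟨e, he, hv⟩ := hv
      exact ((hAC _ (hJx e he)).2.2.1 hv).1
  obtain ⟨C₁, hC₁⟩ : ∃ C₁ : ℝ, ∀ e ∈ J, C e.2 ≤ C₁ := by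
    obtain ⟨R, hR⟩ := (hJf.image fun e => C e.2).bddAbove
    exact ⟨R, fun e he => hR ⟨e, he, rfl⟩⟩
  set C₂ := max C₁ 1
  have hC₂ : 1 ≤ C₂ := le_max_right _ _
  set K := C₂ * (2 * (R + 1) + 1) with hK
  have hK1 : 1 ≤ K := by rw [hK]; nlinarith
  have hKC : C₂ ≤ K := by rw [hK]; nlinarith
  have key : ∀ v v' : MulAction.stabilizer G x, ∃ l : List G, (∀ y ∈ l, y ∈ B ∨ y⁻¹ ∈ B) ∧
      l.prod = (v : G)⁻¹ * v' ∧ (l.length : ℝ) ≤ K * (3 * wdist S (v : G) v' + 1) := by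
    intro v v'
    obtain ⟨n, c, hn, h0, h1, hc⟩ := hd.geo' (v : G) v'
    have hstep : ∀ i < n, wdist S (c i) (c (i + 1)) ≤ 1 := by
      intro i hi
      rw [hc i hi.le (i + 1) hi]
      push_cast; simp
    have := surgery (S := S) (T := T) (x := x) (J := J) hS hT hR0 hR (n := n) (c := c)
      (Φ := fun u w L => ∃ l : List G, (∀ y ∈ l, y ∈ B ∨ y⁻¹ ∈ B) ∧
        l.prod = u⁻¹ * w ∧ (l.length : ℝ) ≤ K * L) ?_ ?_ hstep (h0 ▸ v.2) (h1 ▸ v'.2) ?_ ?_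
    · obtain ⟨l, hl1, hl2, hl3⟩ := this
      exact ⟨l, hl1, by rw [hl2, h0, h1], by rwa [hn] at hl3⟩
    · rintro u v w a b ⟨l, h1, h2, h3⟩ ⟨l', h1', h2', h3'⟩
      refine ⟨l ++ l', ?_, ?_, ?_⟩
      · intro y hy
        rcases List.mem_append.1 hy with hy | hy
        · exact h1 y hy
        · exact h1' y hy
      · rw [List.prod_append, h2, h2']; group
      · rw [List.length_append]; push_cast; linarith
    · rintro u v a b ⟨l, h1, h2, h3⟩ hab
      exact ⟨l, h1, h2, h3.trans (by gcongr)⟩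
    · intro i hi u hu w hw h1 h2
      refine ⟨[u⁻¹ * w], ?_, by simp, by simpa using hK1⟩
      intro y hy
      rw [List.mem_singleton.1 hy]
      left; left
      refine ⟨mul_mem (inv_mem hu) hw, ?_⟩
      rw [← wdist_left S u, mul_one, mul_inv_cancel_left]
      have := hd.tri u (c i) w
      rw [hd.symm u (c i)] at this
      linarith
    · intro i j hij hj u hu w hw b hb hE' h1 h2
      have hbx : (x, b) ∈ {e ∈ J | e.1 = x} := ⟨hb, rfl⟩
      obtain ⟨-, hCb, -, hword⟩ := hAC b (hJx _ hbx)
      obtain ⟨l, hl1, hl2, hl3⟩ := hword _ hE'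
      refine ⟨l, ?_, hl2, ?_⟩
      · intro y hy
        have hsub : A b ⊆ B := fun z hz => Or.inr (mem_biUnion hbx hz)
        exact (hl1 y hy).imp (fun h => hsub h) (fun h => hsub h)
      · have e1 : wdist S 1 (u⁻¹ * w) = wdist S u w := by
          rw [← wdist_left S u, mul_one, mul_inv_cancel_left]
        have t1 := hd.tri u (c i) w
        have t2 := hd.tri (c i) (c j) w
        have t3 := unit_steps hd hstep hij hj
        rw [hd.symm u (c i)] at t1
        have hle : wdist S u w ≤ 2 * (R + 1) + ((j : ℝ) - i) := by linarith
        have hCC : C b ≤ C₂ := (hC₁ _ hb).trans (le_max_left _ _)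
        have hij' : (i : ℝ) ≤ j := by exact_mod_cast hij
        rw [e1] at hl3
        have hn0 := hd.nonneg u w
        calc (l.length : ℝ) ≤ C b * (wdist S u w + 1) := by linarith
          _ ≤ C₂ * (2 * (R + 1) + ((j : ℝ) - i) + 1) := by gcongr
          _ = K + C₂ * ((j : ℝ) - i) := by rw [hK]; ring
          _ ≤ K + K * ((j : ℝ) - i) := by
            have : 0 ≤ (j : ℝ) - i := by linarith
            gcongr
          _ = K * ((j : ℝ) - i + 1) := by ring
  set TV : Set (MulAction.stabilizer G x) := Subtype.val ⁻¹' B with hTV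
  have hTVf : TV.Finite := hBf.preimage Subtype.val_injective.injOn
  have keyV : ∀ v v' : MulAction.stabilizer G x, ∃ l : List (MulAction.stabilizer G x),
      (∀ y ∈ l, y ∈ TV ∨ y⁻¹ ∈ TV) ∧
      l.prod = v⁻¹ * v' ∧ (l.length : ℝ) ≤ K * (3 * wdist S (v : G) v' + 1) := by
    intro v v'
    obtain ⟨l, h1, h2, h3⟩ := key v v'
    have hlV : ∀ y ∈ l, y ∈ MulAction.stabilizer G x := by
      intro y hy
      rcases h1 y hy with h | h
      · exact hBV _ h
      · exact inv_mem_iff.1 (hBV _ h)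
    lift l to List (MulAction.stabilizer G x) using hlV
    refine ⟨l, ?_, ?_, by simpa using h3⟩
    · intro y hy
      exact h1 y (List.mem_map_of_mem hy)
    · apply Subtype.val_injective
      have : (l.map Subtype.val).prod = ((l.prod : MulAction.stabilizer G x) : G) :=
        (map_list_prod (MulAction.stabilizer G x).subtype l).symm
      rw [← this, h2]
      rfl
  have hgen : Subgroup.closure TV = ⊤ := by
    rw [eq_top_iff]
    intro v _
    obtain ⟨l, h1, h2, -⟩ := keyV 1 v
    rw [inv_one, one_mul] at h2
    rw [← h2]
    apply Subgroup.list_prod_mem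
    intro y hy
    rcases h1 y hy with h | h
    · exact Subgroup.subset_closure h
    · exact inv_mem_iff.1 (Subgroup.subset_closure h)
  obtain ⟨K', hK'⟩ : ∃ K' : ℝ, ∀ y ∈ B, wdist S 1 y ≤ K' := by
    obtain ⟨R, hR⟩ := (hBf.image fun y => wdist S 1 y).bddAbove
    exact ⟨R, fun e he => hR ⟨e, he, rfl⟩⟩
  refine ⟨hTVf.toFinset, by simpa using hgen, max (4 * K) K', ?_, ?_⟩
  · exact le_trans (by linarith) (le_max_left _ _)
  rw [hTVf.coe_toFinset]
  intro v v'
  constructor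
  · by_cases hvv : v = v'
    · subst hvv
      rw [(gm_wdist hgen).self, hd.self]; simp
    · have h1 : 1 ≤ wdist S (v : G) v' := hd.one_le fun h => hvv (Subtype.val_injective h)
      obtain ⟨l, hl1, hl2, hl3⟩ := keyV v v'
      have := wordLength_le l hl1
      rw [hl2] at this
      have h2 : wdist TV v v' ≤ l.length := by
        unfold wdist; exact_mod_cast this
      calc wdist TV v v' ≤ K * (3 * wdist S (v : G) v' + 1) := h2.trans hl3
        _ ≤ K * (4 * wdist S (v : G) v') := by gcongr; linarith
        _ = 4 * K * wdist S (v : G) v' := by ring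
        _ ≤ _ := by gcongr; exact le_max_left _ _
  · obtain ⟨l, hl1, hl2, hl3⟩ := wordLength_spec hgen (v⁻¹ * v')
    have hle : ∀ l : List (MulAction.stabilizer G x), (∀ y ∈ l, y ∈ TV ∨ y⁻¹ ∈ TV) →
        wdist S 1 ((l.prod : MulAction.stabilizer G x) : G) ≤ max (4 * K) K' * l.length := by
      intro l
      induction l with
      | nil => intro _; simp [hd.self]
      | cons y l ih =>
        intro hl
        have h1 := ih fun z hz => hl z (List.mem_cons_of_mem _ hz)
        have h2 : wdist S 1 (y : G) ≤ K' := by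
          rcases hl y List.mem_cons_self with h | h
          · exact hK' _ h
          · have := hK' _ h
            rw [← wdist_left S (y : G), hd.symm] at this
            simpa using this
        have t := hd.tri 1 (y : G) ((y : G) * ((l.prod : MulAction.stabilizer G x) : G))
        have e := wdist_left S (y : G) 1 ((l.prod : MulAction.stabilizer G x) : G)
        rw [mul_one] at e
        rw [e] at t
        rw [List.prod_cons, Subgroup.coe_mul, List.length_cons, Nat.cast_succ, mul_add, mul_one]
        have := le_max_right (4 * K) K'
        linarith
    have := hle l hl2
    rw [hl3, hl1] at this
    have e := wdist_left S (v : G) 1 ((v⁻¹ * v' : MulAction.stabilizer G x) : G)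
    have e2 : (v : G) * ((v⁻¹ * v' : MulAction.stabilizer G x) : G) = v' := by simp
    rw [e2, mul_one] at e
    rw [e]
    exact this

set_option maxHeartbeats 1600000 in
/-- A detour in `G` between points of a vertex group, around a point of the vertex group, can be
pushed into the vertex group: long excursions are replaced by detours provided by the relative
wideness of the edge groups. -/
theorem detour_surgery (hS : Subgroup.closure S = ⊤) (hf : S.Finite) (hT : T.IsTree)
    (hadj : ∀ (g : G) (a b : VT), T.Adj a b → T.Adj (g • a) (g • b)) {x : VT}
    {TV : Set (MulAction.stabilizer G x)} (hTV : Subgroup.closure TV = ⊤) {K : ℝ} (hK : 1 ≤ K)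
    (hbl : ∀ v v' : MulAction.stabilizer G x, wdist TV v v' ≤ K * wdist S (v : G) v' ∧
      wdist S (v : G) v' ≤ K * wdist TV v v')
    (hw : ∀ b, T.Adj x b →
      RelativelyWide TV ((edgeStab G x b).subgroupOf (MulAction.stabilizer G x)))
    {m : ℝ} (hm : 1 ≤ m) :
    ∃ m' r₀ : ℝ, 1 ≤ m' ∧ ∀ r, r₀ ≤ r → ∀ u w z : MulAction.stabilizer G x,
      Det (wdist S) m r (u : G) w z → Det (wdist TV) m' r u w z := by
  have hd := gm_wdist hS
  have hV := gm_wdist hTV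
  obtain ⟨R, J, hR0, hJf, hJadj, hR⟩ := crossing_bound hS hf hT hadj x x 1
  set R' := R + 1 with hR'
  have hR'1 : 1 ≤ R' := by linarith
  set m₀ := 4 * m * K with hm₀
  have hmK : 1 ≤ m * K := by nlinarith
  have hm₀1 : 1 ≤ m₀ := by rw [hm₀]; linarith
  have hdet : ∀ b, ∃ m₁ : ℝ, T.Adj x b → 1 ≤ m₁ ∧ ∀ r : ℝ, m₁ ≤ r →
      ∀ u v z : MulAction.stabilizer G x,
      u⁻¹ * v ∈ (edgeStab G x b).subgroupOf (MulAction.stabilizer G x) →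
      wdist TV u v ≤ m₀ * r → r / m₀ ≤ wdist TV u z → r / m₀ ≤ wdist TV v z →
      Det (wdist TV) m₁ r u v z := by
    intro b
    by_cases hb : T.Adj x b
    · obtain ⟨m₁, h1, h2⟩ := (hw b hb).detour hTV hm₀1
      exact ⟨m₁, fun _ => ⟨h1, h2⟩⟩
    · exact ⟨0, fun h => absurd h hb⟩
  choose μ hμ using hdet
  obtain ⟨C₁, hC₁⟩ : ∃ C₁ : ℝ, ∀ e ∈ J, μ e.2 ≤ C₁ := by
    obtain ⟨R, hR⟩ := (hJf.image fun e => μ e.2).bddAbove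
    exact ⟨R, fun e he => hR ⟨e, he, rfl⟩⟩
  set m₁ := max C₁ 1 with hm₁
  have hm₁1 : 1 ≤ m₁ := le_max_right _ _
  set J₁ := K * (2 * R') with hJ₁
  have hJ₁1 : 1 ≤ J₁ := by rw [hJ₁]; nlinarith
  set K₂ := m₁ * m₀ * J₁ with hK₂
  have hmm : 1 ≤ m₁ * m₀ := by nlinarith
  have hJK : J₁ ≤ K₂ := by rw [hK₂]; nlinarith
  have hK₂1 : 1 ≤ K₂ := hJ₁1.trans hJK
  set m' := m₀ + m₁ + K₂ * (3 * m + 1) with hm'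
  have hK₂m : 0 ≤ K₂ * (3 * m + 1) := by positivity
  refine ⟨m', m₀ * J₁ + m₁ + 1, by linarith, ?_⟩
  intro r hr u w z hD
  have hr1 : 1 ≤ r := by nlinarith
  have hrm₁ : m₁ ≤ r := by nlinarith
  have hrJ : J₁ ≤ r / m₀ := by
    rw [le_div_iff₀ (by linarith)]
    nlinarith
  have hm₀r : r / m₀ ≤ r := div_le_self (by linarith) hm₀1
  -- a factor `2` is lost twice in passing from `r / m` to `r / m₀`
  have hdm : r / m = 4 * K * (r / m₀) := by
    rw [hm₀]; field_simp
  have hm'le : r / m' ≤ r / m₀ := by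
    apply div_le_div_of_nonneg_left (by linarith) (by linarith) (by linarith)
  obtain ⟨W, hW, hpath⟩ := hD
  obtain ⟨n, c, h0, hn, hstep, hav, hsum⟩ := hpath.exists_fun
  have hWn : (n : ℝ) ≤ m * r := by
    simp at hsum
    linarith
  -- points of `V` close to the path are far from `z`
  have hfar : ∀ i ≤ n, ∀ q : MulAction.stabilizer G x, wdist S (c i) q ≤ R' →
      2 * (r / m₀) ≤ wdist TV q z := by
    intro i hi q hq
    have h1 := hav i hi
    have t := hd.tri (c i) q z
    have h2 := (hbl q z).2
    rw [hdm] at h1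
    have h4 : 2 * R' ≤ r / m₀ := by rw [hJ₁] at hrJ; nlinarith
    have h3 : K * (2 * (r / m₀)) ≤ K * wdist TV q z := by nlinarith
    exact le_of_mul_le_mul_left h3 (by linarith)
  have := surgery (S := S) (T := T) (x := x) (J := J) hS hT hR0 hR (n := n) (c := c)
    (Φ := fun u w L => ∃ (hu : u ∈ MulAction.stabilizer G x) (hw : w ∈ MulAction.stabilizer G x),
      PL (wdist TV) (fun q => r / m' ≤ wdist TV q z) ⟨u, hu⟩ ⟨w, hw⟩ (K₂ * L)) ?_ ?_ hstep
      (h0 ▸ u.2) (hn ▸ w.2) ?_ ?_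
  · obtain ⟨hu, hw, hPL⟩ := this
    have e1 : (⟨c 0, hu⟩ : MulAction.stabilizer G x) = u := Subtype.ext h0
    have e2 : (⟨c n, hw⟩ : MulAction.stabilizer G x) = w := Subtype.ext hn
    rw [e1, e2] at hPL
    refine hPL.mono (fun _ h => h) ?_
    calc K₂ * (3 * n + 1) ≤ K₂ * ((3 * m + 1) * r) := by
          have : 3 * (n : ℝ) + 1 ≤ (3 * m + 1) * r := by nlinarith
          gcongr
      _ = K₂ * (3 * m + 1) * r := by ring
      _ ≤ m' * r := by gcongr; linarith
  · rintro u v w a b ⟨hu, hv, h⟩ ⟨hv', hw, h'⟩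
    refine ⟨hu, hw, (h.trans h').mono (fun _ h => h) (le_of_eq ?_)⟩
    ring
  · rintro u v a b ⟨hu, hv, h⟩ hab
    exact ⟨hu, hv, h.mono (fun _ h => h) (by gcongr)⟩
  · intro i hi u hu w hw h1 h2
    refine ⟨hu, hw, ?_⟩
    have hf1 := hfar i hi ⟨u, hu⟩ h1
    have t := hd.tri u (c i) w
    rw [hd.symm u (c i)] at t
    refine (PL.fill hV (J := J₁) ?_ ?_).mono (fun _ h => h) (by linarith)
    · refine (hbl _ _).1.trans ?_
      rw [hJ₁]
      have : wdist S u w ≤ 2 * R' := by linarith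
      simp only
      gcongr
    · intro q hq
      have t := hV.tri ⟨u, hu⟩ q z
      linarith
  · intro i j hij hj u hu w hw b hb hE' h1 h2
    refine ⟨hu, hw, ?_⟩
    have hf1 := hfar i (hij.trans hj) ⟨u, hu⟩ h1
    have hf2 := hfar j hj ⟨w, hw⟩ h2
    have t1 := hd.tri u (c i) w
    have t2 := hd.tri (c i) (c j) w
    have t3 := unit_steps hd hstep hij hj
    rw [hd.symm u (c i)] at t1
    have hij' : (i : ℝ) ≤ j := by exact_mod_cast hij
    have hj' : (j : ℝ) ≤ n := by exact_mod_cast hj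
    have hi0 : (0 : ℝ) ≤ i := Nat.cast_nonneg i
    set D := J₁ * ((j : ℝ) - i + 1) with hDdef
    have hle : wdist TV ⟨u, hu⟩ ⟨w, hw⟩ ≤ K * (2 * R' + ((j : ℝ) - i)) := by
      refine (hbl _ _).1.trans ?_
      have : wdist S u w ≤ 2 * R' + ((j : ℝ) - i) := by linarith
      simp only
      gcongr
    have hleD : K * (2 * R' + ((j : ℝ) - i)) ≤ D := by
      rw [hDdef, hJ₁]
      have : 0 ≤ (j : ℝ) - i := by linarith
      have h3 : 2 * R' + ((j : ℝ) - i) ≤ 2 * R' * ((j : ℝ) - i + 1) := by nlinarith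
      calc _ ≤ K * (2 * R' * ((j : ℝ) - i + 1)) := by gcongr
        _ = _ := by ring
    by_cases hsmall : D ≤ r / m₀
    · refine (PL.fill hV (J := D) (hle.trans hleD) ?_).mono (fun _ h => h) ?_
      · intro q hq
        have t := hV.tri ⟨u, hu⟩ q z
        linarith
      · rw [hDdef]
        have : 0 ≤ (j : ℝ) - i + 1 := by linarith
        gcongr
    · push Not at hsmall
      have hbx : T.Adj x b := hJadj _ hb
      obtain ⟨hμ1, hμ2⟩ := hμ b hbx
      have hμm : μ b ≤ m₁ := (hC₁ _ hb).trans (le_max_left _ _)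
      have hr0 : 0 ≤ r / m₀ := by positivity
      have h5 := hμ2 r (hμm.trans hrm₁) ⟨u, hu⟩ ⟨w, hw⟩ z hE' ?_ (by linarith) (by linarith)
      · refine PL.mono (Det.mono h5 (by linarith) hμm (by linarith)) ?_ ?_
        · intro q hq
          refine le_trans ?_ hq
          apply div_le_div_of_nonneg_left (by linarith) (by linarith) (by linarith)
        · have : r ≤ m₀ * D := by
            rw [div_lt_iff₀ (by linarith)] at hsmall
            linarith
          calc m₁ * r ≤ m₁ * (m₀ * D) := by gcongr
            _ = K₂ * ((j : ℝ) - i + 1) := by rw [hK₂, hDdef]; ring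
      · refine hle.trans ?_
        have h6 : 2 * R' ≤ r := by
          have : 2 * R' ≤ J₁ := by rw [hJ₁]; nlinarith
          linarith
        have h7 : 2 * R' + ((j : ℝ) - i) ≤ r + m * r := by linarith
        have h8 : r ≤ m * r := le_mul_of_one_le_left (by linarith) hm
        have h9 : 0 ≤ K * (m * r - r) := mul_nonneg (by linarith) (by linarith)
        have h10 : 0 ≤ K * (m * r) := mul_nonneg (by linarith) (by linarith)
        have h11 : K * (2 * R' + ((j : ℝ) - i)) ≤ K * (r + m * r) :=
          mul_le_mul_of_nonneg_left h7 (by linarith)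
        have h12 : m₀ * r = 4 * (K * (m * r)) := by rw [hm₀]; ring
        linarith

/-- Morse rays of a vertex group are Morse in `G`. -/
theorem vertex_ray_morse (hS : Subgroup.closure S = ⊤) (hf : S.Finite) (hT : T.IsTree)
    (hadj : ∀ (g : G) (a b : VT), T.Adj a b → T.Adj (g • a) (g • b)) {x : VT}
    {TV : Set (MulAction.stabilizer G x)} (hTV : Subgroup.closure TV = ⊤) {K : ℝ} (hK : 1 ≤ K)
    (hbl : ∀ v v' : MulAction.stabilizer G x, wdist TV v v' ≤ K * wdist S (v : G) v' ∧
      wdist S (v : G) v' ≤ K * wdist TV v v')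
    (hw : ∀ b, T.Adj x b →
      RelativelyWide TV ((edgeStab G x b).subgroupOf (MulAction.stabilizer G x))) (N : ℝ → ℝ) :
    ∃ N' : ℝ → ℝ, ∀ γ : ℕ → MulAction.stabilizer G x, IsGeodSeq (wdist TV) γ →
      DMorse (wdist TV) N (range γ) → DMorse (wdist S) N' (range fun n => (γ n : G)) := by
  have hd := gm_wdist hS
  have hV := gm_wdist hTV
  have hρ : ∀ m : ℝ, ∃ ρ : ℝ, 1 ≤ m → ∀ γ : ℕ → MulAction.stabilizer G x,
      IsGeodSeq (wdist TV) γ → DMorse (wdist TV) N (range γ) → ∀ r, ρ < r → ∀ s t u, s ≤ t →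
      t ≤ u → ¬ Det (wdist S) m r (γ s : G) (γ u) (γ t) := by
    intro m
    by_cases hm : 1 ≤ m
    · obtain ⟨m', r₀, hm', h⟩ := detour_surgery hS hf hT hadj hTV hK hbl hw hm
      obtain ⟨r₁, -, h1⟩ := no_detour N hm'
      refine ⟨max r₀ r₁, fun _ γ hγ hN r hr s t u hst htu hdet => ?_⟩
      exact h1 hV γ hγ hN s t u hst htu r (lt_of_le_of_lt (le_max_right _ _) hr)
        (h r ((le_max_left _ _).trans hr.le) _ _ _ hdet)
    · exact ⟨0, fun h => absurd h hm⟩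
  choose ρ hρ using hρ
  refine ⟨_, fun γ hγ hN => dmorse_of_no_detour hd hK (γ := fun n => (γ n : G)) ?_ (ρ := ρ) ?_ rfl⟩
  · intro i j
    rw [← hγ i j]
    refine ⟨?_, (hbl _ _).2⟩
    rw [div_le_iff₀ (by linarith), mul_comm]
    exact (hbl _ _).1
  · intro m hm r hr s t u hst htu
    exact hρ m hm γ hγ hN r hr s t u hst htu

/-- Points of the same coset of an undistorted subgroup are joined by a quasi-geodesic inside the
coset. -/
theorem FGUndistorted.qg (hS : Subgroup.closure S = ⊤) {H : Subgroup G} (h : FGUndistorted S H) :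
    ∃ C : ℝ, 1 ≤ C ∧ ∀ q q' : G, q⁻¹ * q' ∈ H → ∃ (n : ℕ) (c : ℕ → G), DQ (wdist S) C n c ∧
      c 0 = q ∧ c n = q' ∧ ∀ i ≤ n, q⁻¹ * c i ∈ H := by
  obtain ⟨A, hA, C, hC, hAC⟩ := h
  refine ⟨C, hC, fun q q' hq => ?_⟩
  obtain ⟨n, c, hn, h0, h1, hc⟩ := (gm_wdist hA).geo' (1 : H) ⟨q⁻¹ * q', hq⟩
  refine ⟨n, fun i => q * (c i : G), ⟨hC, ?_⟩, by simp [h0], by simp [h1], ?_⟩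
  · intro i hi j hj
    rw [wdist_left, ← hc i hi j hj]
    refine ⟨?_, (hAC _ _).2⟩
    have := (hAC (c i) (c j)).1
    rw [sub_le_iff_le_add, div_le_iff₀ (by linarith)]
    nlinarith [(gm_wdist hS).nonneg (c i : G) (c j)]
  · intro i hi
    simp

/-- A Morse ray stays only for a bounded time near a coset of an edge group. -/
theorem edge_bound (hS : Subgroup.closure S = ⊤) {V E : Subgroup G} (hEV : E ≤ V)
    {TV : Set V} (hTV : Subgroup.closure TV = ⊤) {K : ℝ} (hK : 1 ≤ K)
    (hbl : ∀ v v' : V, wdist TV v v' ≤ K * wdist S (v : G) v' ∧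
      wdist S (v : G) v' ≤ K * wdist TV v v')
    (hE : FGUndistorted S E) (hw : RelativelyWide TV (E.subgroupOf V)) (N : ℝ → ℝ) (R : ℝ) :
    ∃ B : ℝ, ∀ γ : ℕ → G, IsGeodSeq (wdist S) γ → DMorse (wdist S) N (range γ) →
      ∀ q q' : G, q⁻¹ * q' ∈ E → ∀ s t : ℕ, wdist S (γ s) q ≤ R → wdist S (γ t) q' ≤ R →
      |(t : ℝ) - s| ≤ B := by
  have hd := gm_wdist hS
  have hV := gm_wdist hTV
  obtain ⟨C, hC, hqg⟩ := hE.qg hS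
  by_cases hR0 : 0 ≤ R
  swap
  · exact ⟨0, fun γ _ _ q q' _ s t h1 => absurd ((hd.nonneg _ _).trans h1) hR0⟩
  obtain ⟨m₁, hm₁, hdet⟩ := hw.detour hTV (m₀ := 4 * K) (by linarith)
  set m₃ := 4 + 2 * m₁ * K with hm₃
  have hmK : 1 ≤ m₁ * K := by nlinarith
  obtain ⟨r₀, hr₀, hno⟩ := no_detour N (m := m₃) (by linarith)
  set M := max (3 * N (2 * C + 2 * R) + 2 * (2 * C + 2 * R) + R) 0 with hM
  have hM0 : 0 ≤ M := le_max_right _ _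
  set B := r₀ + m₁ + 4 * (2 + 2 * R + M) + 2 * m₁ * K * (K + M) with hB
  have hB' : 0 ≤ 2 * m₁ * K * (K + M) := by positivity
  have main : ∀ γ : ℕ → G, IsGeodSeq (wdist S) γ → DMorse (wdist S) N (range γ) →
      ∀ q q' : G, q⁻¹ * q' ∈ E → ∀ s t : ℕ, s ≤ t → wdist S (γ s) q ≤ R → wdist S (γ t) q' ≤ R →
      (t : ℝ) - s ≤ B := by
    intro γ hγ hN q q' hq s t hst hs ht
    by_contra! hL
    set L := (t : ℝ) - s with hLdef
    obtain ⟨n, c, hc, h0, hn, hcE⟩ := hqg q q' hq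
    obtain ⟨c', hc', h0', hn', hcl, -⟩ := hc.endMod hd (R := R) (γ s) (γ t) (by rwa [h0])
      (by rwa [hn])
    set τ := (s + t) / 2 with hτ
    have hsτ : s ≤ τ := by omega
    have hτt : τ ≤ t := by omega
    have hτ1 : L / 2 - 1 ≤ (τ : ℝ) - s := by
      have : s + t ≤ 2 * τ + 1 := by omega
      have : (s : ℝ) + t ≤ 2 * τ + 1 := by exact_mod_cast this
      rw [hLdef]; linarith
    have hτ2 : L / 2 - 1 ≤ (t : ℝ) - τ := by
      have : 2 * τ ≤ s + t := by omega
      have : 2 * (τ : ℝ) ≤ s + t := by exact_mod_cast this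
      rw [hLdef]; linarith
    obtain ⟨i, hi, hi'⟩ := (hN.sm hd hγ _ _ c' s t hst hc' h0' hn').2 τ hsτ hτt
    set z₀ := c (min i n) with hz₀
    have hzE : q⁻¹ * z₀ ∈ E := hcE _ (min_le_right _ _)
    have hz : wdist S z₀ (γ τ) ≤ M := by
      have t1 := hd.tri z₀ (c' i) (γ τ)
      have t2 := hcl i hi
      rw [hd.symm] at t2
      exact le_trans (by linarith) (le_max_left _ _)
    have hsτd : wdist S (γ s) (γ τ) = (τ : ℝ) - s := by
      rw [hγ, abs_sub_comm, abs_of_nonneg]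
      have : (s : ℝ) ≤ τ := by exact_mod_cast hsτ
      linarith
    have hτtd : wdist S (γ t) (γ τ) = (t : ℝ) - τ := by
      rw [hγ, abs_of_nonneg]
      have : (τ : ℝ) ≤ t := by exact_mod_cast hτt
      linarith
    have hstd : wdist S (γ s) (γ t) = L := by
      rw [hγ, abs_sub_comm, abs_of_nonneg]
      have : (s : ℝ) ≤ t := by exact_mod_cast hst
      linarith
    -- the configuration inside the translate of the vertex group
    set e : V := ⟨q⁻¹ * q', hEV hq⟩ with he
    set z : V := ⟨q⁻¹ * z₀, hEV hzE⟩ with hzdef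
    have hfq : ∀ y : V, wdist S (q * (y : G)) z₀ ≤ K * wdist TV y z := by
      intro y
      have := (hbl y z).2
      rw [← wdist_left S q] at this
      simpa [hzdef] using this
    have hgq : ∀ y y' : V, wdist S (q * (y : G)) (q * (y' : G)) ≤ K * wdist TV y y' := by
      intro y y'
      rw [wdist_left]; exact (hbl y y').2
    have hL1 : 0 ≤ L := by linarith
    have hqz : L / 4 ≤ wdist S q z₀ := by
      have t1 := hd.tri (γ s) q (γ τ)
      have t2 := hd.tri q z₀ (γ τ)
      linarith
    have hqz' : L / 4 ≤ wdist S q' z₀ := by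
      have t1 := hd.tri (γ t) q' (γ τ)
      have t2 := hd.tri q' z₀ (γ τ)
      linarith
    have hD : Det (wdist TV) m₁ L 1 e z := by
      refine hdet L (by linarith) 1 e z (by rw [inv_one, one_mul]; exact hq) ?_ ?_ ?_
      · refine (hbl _ _).1.trans ?_
        have e1 : wdist S ((1 : V) : G) (e : G) = wdist S q q' := by
          rw [← wdist_left S q]; simp [he]
        rw [e1]
        have t1 := hd.tri q (γ s) q'
        have t2 := hd.tri (γ s) (γ t) q'
        rw [hd.symm q (γ s)] at t1
        have : wdist S q q' ≤ 4 * L := by linarith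
        nlinarith
      · have := hfq 1
        simp only [Subgroup.coe_one, mul_one] at this
        rw [div_le_iff₀ (by linarith)]
        linarith
      · have := hfq e
        simp only [he, mul_inv_cancel_left] at this
        rw [div_le_iff₀ (by linarith)]
        linarith
    have hL3 : L / m₃ ≤ L / 4 := by
      apply div_le_div_of_nonneg_left hL1 (by norm_num) (by linarith)
    have hmap := PL.map (d := wdist S) (dY := wdist TV) hd (f := fun y : V => q * (y : G)) (J := K)
      (Q := fun y => L / m₃ ≤ wdist S y (γ τ)) ?_ ?_ (by linarith) hD
    · simp only [Subgroup.coe_one, mul_one, he, mul_inv_cancel_left] at hmap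
      have p1 : PL (wdist S) (fun y => L / m₃ ≤ wdist S y (γ τ)) (γ s) q R := by
        refine PL.fill hd hs fun y hy => ?_
        have t1 := hd.tri (γ s) y (γ τ)
        linarith
      have p2 : PL (wdist S) (fun y => L / m₃ ≤ wdist S y (γ τ)) q' (γ t) R := by
        refine PL.symm hd (PL.fill hd ht fun y hy => ?_)
        have t1 := hd.tri (γ t) y (γ τ)
        linarith
      refine hno hd γ hγ hN s τ t hsτ hτt L (by linarith) (((p1.trans hmap).trans p2).mono
        (fun _ h => h) ?_)
      rw [hm₃]
      nlinarith
    · intro y y' hyy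
      refine (hgq y y').trans ?_
      nlinarith
    · intro y p hy hp
      have t1 := hd.tri (q * (y : G)) p (γ τ)
      have t2 := hd.tri (q * (y : G)) (γ τ) z₀
      have t3 : wdist TV y z ≤ K * wdist S (q * (y : G)) z₀ := by
        have := (hbl y z).1
        rw [← wdist_left S q] at this
        simpa [hzdef] using this
      rw [hd.symm (γ τ) z₀] at t2
      have h1 : L / m₁ ≤ K * wdist S (q * (y : G)) z₀ := le_trans hy t3
      rw [div_le_iff₀ (by linarith)] at h1
      have h2 : L / (2 * (m₁ * K)) + (K + M) ≤ wdist S (q * (y : G)) z₀ := by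
        have h3 : L / (m₁ * K) ≤ wdist S (q * (y : G)) z₀ := by
          rw [div_le_iff₀ (by linarith)]; linarith
        have h4 : K + M ≤ L / (2 * (m₁ * K)) := by
          rw [le_div_iff₀ (by linarith)]
          have : (K + M) * (2 * (m₁ * K)) = 2 * m₁ * K * (K + M) := by ring
          rw [this]; linarith
        have h5 : L / (m₁ * K) = L / (2 * (m₁ * K)) + L / (2 * (m₁ * K)) := by
          field_simp; norm_num
        linarith
      have h6 : L / m₃ ≤ L / (2 * (m₁ * K)) := by
        apply div_le_div_of_nonneg_left hL1 (by linarith)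
        rw [hm₃]; linarith
      linarith
  refine ⟨B, fun γ hγ hN q q' hq s t hs ht => ?_⟩
  rcases le_total s t with hst | hts
  · rw [abs_of_nonneg]
    · exact main γ hγ hN q q' hq s t hst hs ht
    · have : (s : ℝ) ≤ t := by exact_mod_cast hst
      linarith
  · rw [abs_sub_comm, abs_of_nonneg]
    · refine main γ hγ hN q' q ?_ t s hts ht hs
      have := inv_mem hq
      simpa using this
    · have : (t : ℝ) ≤ s := by exact_mod_cast hts
      linarith

end VertexGroup
end MorseGoG

namespace MorseGoG

/-! ### Rays at bounded distance and limits of rays -/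

section Near
variable {X : Type*} {d : X → X → ℝ}

/-- The images of two sequences are at Hausdorff distance at most `D`. -/
def Near (d : X → X → ℝ) (D : ℝ) (u v : ℕ → X) : Prop :=
  (∀ i, ∃ t, d (u i) (v t) ≤ D) ∧ ∀ t, ∃ i, d (u i) (v t) ≤ D

theorem Near.symm (hd : GM d) {D : ℝ} {u v : ℕ → X} (h : Near d D u v) : Near d D v u :=
  ⟨fun i => (h.2 i).imp fun t ht => by rwa [hd.symm], fun i => (h.1 i).imp fun t ht => by
    rwa [hd.symm]⟩

theorem Near.trans (hd : GM d) {D D' : ℝ} {u v w : ℕ → X} (h : Near d D u v)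
    (h' : Near d D' v w) : Near d (D + D') u w := by
  refine ⟨fun i => ?_, fun i => ?_⟩
  · obtain ⟨t, ht⟩ := h.1 i
    obtain ⟨s, hs⟩ := h'.1 t
    exact ⟨s, by linarith [hd.tri (u i) (v t) (w s)]⟩
  · obtain ⟨t, ht⟩ := h'.2 i
    obtain ⟨s, hs⟩ := h.2 t
    exact ⟨s, by linarith [hd.tri (u s) (v t) (w i)]⟩

theorem bddHD_iff (hd : GM d) {u v : ℕ → X} :
    BddHD d (range u) (range v) ↔ ∃ D, Near d D u v := by
  constructor
  · rintro ⟨r, h1, h2⟩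
    refine ⟨r, fun i => ?_, fun t => ?_⟩
    · obtain ⟨_, ⟨t, rfl⟩, ht⟩ := h1 _ ⟨i, rfl⟩
      exact ⟨t, ht⟩
    · obtain ⟨_, ⟨i, rfl⟩, hi⟩ := h2 _ ⟨t, rfl⟩
      exact ⟨i, by rwa [hd.symm]⟩
  · rintro ⟨r, h1, h2⟩
    refine ⟨r, ?_, ?_⟩
    · rintro _ ⟨i, rfl⟩
      obtain ⟨t, ht⟩ := h1 i
      exact ⟨_, ⟨t, rfl⟩, ht⟩
    · rintro _ ⟨t, rfl⟩
      obtain ⟨i, hi⟩ := h2 t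
      exact ⟨_, ⟨i, rfl⟩, by rwa [hd.symm]⟩

theorem DMorse.near (hd : GM d) {N : ℝ → ℝ} {D : ℝ} {u v : ℕ → X} (h : DMorse d N (range u))
    (huv : Near d D u v) : DMorse d (fun C => N (2 * C + 2 * D) + 2 * D) (range v) := by
  refine h.transfer hd ?_ ?_
  · rintro _ ⟨i, rfl⟩
    obtain ⟨t, ht⟩ := huv.1 i
    exact ⟨_, ⟨t, rfl⟩, ht⟩
  · rintro _ ⟨t, rfl⟩
    obtain ⟨i, hi⟩ := huv.2 t
    exact ⟨_, ⟨i, rfl⟩, by rwa [hd.symm]⟩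

/-- Uniform one-sided closeness passes to pointwise limits. -/
theorem close_limit (hd : GM d) (o : X) {K D : ℝ} (hK : 1 ≤ K) {u v : ℕ → ℕ → X} {u' v' : ℕ → X}
    (hlim : ∀ k, ∃ n ≥ k, ∀ i ≤ k, u n i = u' i ∧ v n i = v' i)
    (hu : ∀ n, ∀ i ≤ n, d o (u n i) ≤ K * i)
    (h : ∀ n, ∀ i ≤ n, ∃ t : ℕ, (t : ℝ) ≤ K * d o (v n t) ∧ d (u n i) (v n t) ≤ D) (i : ℕ) :
    ∃ t, d (u' i) (v' t) ≤ D := by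
  obtain ⟨n, hn, hag⟩ := hlim (max i ⌈K * (K * i + D)⌉₊)
  have hin : i ≤ n := (le_max_left _ _).trans hn
  obtain ⟨t, ht, htD⟩ := h n i hin
  have t1 := hd.tri o (u n i) (v n t)
  have h1 : (t : ℝ) ≤ K * (K * i + D) := by
    refine ht.trans ?_
    gcongr
    linarith [hu n i hin]
  have h2 : t ≤ ⌈K * (K * i + D)⌉₊ := by exact_mod_cast h1.trans (Nat.le_ceil _)
  refine ⟨t, ?_⟩
  rw [← (hag i (le_max_left _ _)).1, ← (hag t (h2.trans (le_max_right _ _))).2]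
  exact htD

end Near

section Limits
variable {G : Type*} [Group G] {S : Set G}

theorem geod_dist_zero {d : G → G → ℝ} {γ : ℕ → G} (h : IsGeodSeq d γ) (h0 : γ 0 = 1) (n : ℕ) :
    d 1 (γ n) = n := by
  rw [← h0, h]; simp

/-- Geodesic segments based at the identity, of lengths tending to infinity, subconverge to a
geodesic ray. -/
theorem exists_limit_ray (hS : Subgroup.closure S = ⊤) (hf : S.Finite) {g : ℕ → ℕ → G}
    (h0 : ∀ n, g n 0 = 1)
    (hg : ∀ n, ∀ i ≤ n, ∀ j ≤ n, wdist S (g n i) (g n j) = |(i : ℝ) - j|) :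
    ∃ g' : ℕ → G, g' 0 = 1 ∧ IsGeodSeq (wdist S) g' ∧ ∀ k, ∃ n ≥ k, ∀ i ≤ k, g n i = g' i := by
  let ω : Ultrafilter ℕ := hyperfilter ℕ
  have hω : (ω : Filter ℕ) ≤ atTop := by
    rw [← Nat.cofinite_eq_atTop]; exact hyperfilter_le_cofinite
  have hex : ∀ i, ∃ y : G, ∀ᶠ n in (ω : Filter ℕ), g n i = y := by
    intro i
    have hfin := finite_ball hS hf i 1
    have hev : ∀ᶠ n in (ω : Filter ℕ), g n i ∈ {y | wdist S 1 y ≤ i} := by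
      filter_upwards [hω (eventually_ge_atTop i)] with n hn
      have := hg n 0 (Nat.zero_le _) i hn
      rw [h0] at this
      rw [this]
      simp
    have := (Ultrafilter.finite_biUnion_mem_iff (f := ω) hfin
      (s := fun y => {n | g n i = y})).1 (by
        filter_upwards [hev] with n hn
        exact mem_biUnion hn rfl)
    obtain ⟨y, -, hy⟩ := this
    exact ⟨y, hy⟩
  choose g' hg' using hex
  have hag : ∀ k, ∀ᶠ n in (ω : Filter ℕ), k ≤ n ∧ ∀ i ≤ k, g n i = g' i := by
    intro k
    have h1 : ∀ᶠ n in (ω : Filter ℕ), k ≤ n := hω (eventually_ge_atTop k)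
    exact h1.and <| (eventually_all_finite (finite_Iic k)).2 fun i _ => hg' i
  refine ⟨g', ?_, ?_, ?_⟩
  · obtain ⟨n, -, hn⟩ := (hag 0).exists
    rw [← hn 0 le_rfl, h0]
  · intro i j
    obtain ⟨n, hn, hn'⟩ := (hag (max i j)).exists
    rw [← hn' i (le_max_left _ _), ← hn' j (le_max_right _ _)]
    exact hg n i ((le_max_left _ _).trans hn) j ((le_max_right _ _).trans hn)
  · intro k
    obtain ⟨n, hn, hn'⟩ := (hag k).exists
    exact ⟨n, hn, hn'⟩

end Limits

/-! ### The topology of the Morse boundary -/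

section Boundary
variable {G : Type*} [Group G] {S : Set G}

/-- The boundary point represented by a Morse ray. -/
def bmk (γ : GRay G S) : MorseBoundary G S := Quot.mk (grayRel S) γ

theorem exists_bmk (ξ : MorseBoundary G S) : ∃ γ : GRay G S, bmk γ = ξ := Quot.exists_rep ξ

theorem bmk_eq_iff (hS : Subgroup.closure S = ⊤) {γ β : GRay G S} :
    bmk γ = bmk β ↔
      ∃ D, Near (wdist S) D γ.seq β.seq := by
  have hd := gm_wdist hS
  have hiff : ∀ γ β : GRay G S, grayRel S γ β ↔ ∃ D, Near (wdist S) D γ.seq β.seq :=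
    fun γ β => bddHD_iff hd
  have heq : Equivalence (grayRel (G := G) S) := by
    refine ⟨fun γ => ?_, fun {γ β} h => ?_, fun {γ β δ} h h' => ?_⟩
    · exact (hiff _ _).2 ⟨0, fun i => ⟨i, (hd.self _).le⟩, fun i => ⟨i, (hd.self _).le⟩⟩
    · obtain ⟨D, hD⟩ := (hiff _ _).1 h
      exact (hiff _ _).2 ⟨D, hD.symm hd⟩
    · obtain ⟨D, hD⟩ := (hiff _ _).1 h
      obtain ⟨D', hD'⟩ := (hiff _ _).1 h'
      exact (hiff _ _).2 ⟨_, hD.trans hd hD'⟩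
  rw [← hiff]
  exact ⟨fun h => heq.eqvGen_iff.1 (Quot.eqvGen_exact h), fun h => Quot.sound h⟩

theorem isClosed_stratum_iff {N : ℝ → ℝ} {P : Set (NGRays G S N)} :
    IsClosed P ↔ ∀ γ : NGRays G S N,
      (∀ n, ∃ β ∈ P, ∀ i ≤ n, β.1.seq i = γ.1.seq i) → γ ∈ P := by
  let _ : TopologicalSpace G := ⊥
  have _ : DiscreteTopology G := ⟨rfl⟩
  have hind : IsInducing (fun γ : NGRays G S N => γ.1.seq) := ⟨rfl⟩
  constructor
  · intro hP γ hγ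
    by_contra hn
    have ho : IsOpen Pᶜ := hP.isOpen_compl
    obtain ⟨U, hU, hUP⟩ := hind.isOpen_iff.1 ho
    have hmem : γ.1.seq ∈ U := by
      have : γ ∈ (fun γ : NGRays G S N => γ.1.seq) ⁻¹' U := by rw [hUP]; exact hn
      exact this
    obtain ⟨I, u, hu, hIU⟩ := isOpen_pi_iff.1 hU _ hmem
    obtain ⟨β, hβ, hag⟩ := hγ (I.sup id)
    have : β ∈ (fun γ : NGRays G S N => γ.1.seq) ⁻¹' U := by
      refine hIU fun i hi => ?_
      have h2 := (hu i hi).2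
      rwa [← hag i (Finset.le_sup (f := id) hi)] at h2
    rw [hUP] at this
    exact this hβ
  · intro h
    refine isClosed_of_closure_subset fun γ hγ => h γ fun n => ?_
    have ho : IsOpen {β : NGRays G S N | ∀ i ∈ Finset.Iic n, β.1.seq i = γ.1.seq i} := by
      have : {β : NGRays G S N | ∀ i ∈ Finset.Iic n, β.1.seq i = γ.1.seq i} =
          ⋂ i ∈ Finset.Iic n, {β | β.1.seq i = γ.1.seq i} := by ext; simp
      rw [this]
      refine isOpen_biInter_finset fun i _ => ?_
      exact (isOpen_discrete {γ.1.seq i}).preimage ((continuous_apply i).comp hind.continuous)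
    obtain ⟨β, hβ, hβP⟩ := mem_closure_iff.1 hγ _ ho (fun i _ => rfl)
    exact ⟨β, hβP, fun i hi => hβ i (Finset.mem_Iic.2 hi)⟩

/-- Closed subsets of the Morse boundary are those that are sequentially closed in each stratum. -/
theorem isClosed_boundary_iff {A : Set (MorseBoundary G S)} :
    IsClosed A ↔ ∀ (N : ℝ → ℝ) (γ : GRay G S), MorseSet (wdist S) N (range γ.seq) →
      (∀ n, ∃ β : GRay G S, MorseSet (wdist S) N (range β.seq) ∧ bmk β ∈ A ∧
        ∀ i ≤ n, β.seq i = γ.seq i) → bmk γ ∈ A := by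
  have h : IsClosed A ↔ ∀ N : ℝ → ℝ,
      IsClosed ((fun γ : NGRays G S N => Quot.mk (grayRel S) γ.1) ⁻¹' A) := by
    rw [MorseBoundary.instTop, isClosed_iSup_iff]
    exact forall_congr' fun N => isClosed_coinduced
  rw [h]
  refine forall_congr' fun N => ?_
  rw [isClosed_stratum_iff]
  constructor
  · intro h γ hγ hn
    refine h ⟨γ, hγ⟩ fun n => ?_
    obtain ⟨β, h1, h2, h3⟩ := hn n
    exact ⟨⟨β, h1⟩, h2, h3⟩
  · intro h γ hn
    refine h γ.1 γ.2 fun n => ?_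
    obtain ⟨β, h2, h3⟩ := hn n
    exact ⟨β.1, β.2, h2, h3⟩

end Boundary

end MorseGoG

namespace MorseGoG

/-! ### The boundary of an undistorted, Morse-preserving subgroup -/

section Inclusion
variable {G : Type*} [Group G] {S : Set G} {V : Subgroup G} {TV : Set V} {K : ℝ}

/-- A bi-Lipschitz embedded finitely generated subgroup all of whose Morse rays are Morse in the
ambient group, with gauge controlled by the gauge in the subgroup. -/
structure MorseSub (S : Set G) (TV : Set V) (K : ℝ) : Prop where
  gen : Subgroup.closure S = ⊤
  fin : S.Finite
  genV : Subgroup.closure TV = ⊤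
  finV : TV.Finite
  one_le : 1 ≤ K
  biLip : ∀ v v' : V, wdist TV v v' ≤ K * wdist S (v : G) v' ∧
    wdist S (v : G) v' ≤ K * wdist TV v v'
  morse : ∀ N : ℝ → ℝ, ∃ N' : ℝ → ℝ, ∀ γ : ℕ → V, IsGeodSeq (wdist TV) γ →
    DMorse (wdist TV) N (range γ) → DMorse (wdist S) N' (range fun n => (γ n : G))

namespace MorseSub

theorem dq (h : MorseSub S TV K) {γ : ℕ → V} {n : ℕ}
    (hγ : ∀ i ≤ n, ∀ j ≤ n, wdist TV (γ i) (γ j) = |(i : ℝ) - j|) :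
    DQ (wdist S) K n (fun i => (γ i : G)) := by
  refine ⟨h.one_le, fun i hi j hj => ?_⟩
  obtain ⟨h1, h2⟩ := h.biLip (γ i) (γ j)
  rw [hγ i hi j hj] at h1 h2
  have hK := h.one_le
  refine ⟨?_, by linarith⟩
  rw [sub_le_iff_le_add, div_le_iff₀ (by linarith)]
  nlinarith

theorem le_dist (h : MorseSub S TV K) {γ : ℕ → V} (hγ : IsGeodSeq (wdist TV) γ) (h0 : γ 0 = 1)
    (n : ℕ) : (n : ℝ) ≤ K * wdist S 1 (γ n : G) := by
  have := (h.biLip 1 (γ n)).1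
  rwa [geod_dist_zero hγ h0] at this

theorem dist_le (h : MorseSub S TV K) {γ : ℕ → V} (hγ : IsGeodSeq (wdist TV) γ) (h0 : γ 0 = 1)
    (n : ℕ) : wdist S 1 (γ n : G) ≤ K * n := by
  have := (h.biLip 1 (γ n)).2
  rwa [geod_dist_zero hγ h0] at this

theorem near_iff (h : MorseSub S TV K) {γ γ' : ℕ → V} :
    (∃ D, Near (wdist TV) D γ γ') ↔
      ∃ D, Near (wdist S) D (fun n => (γ n : G)) (fun n => (γ' n : G)) := by
  have hK := h.one_le
  constructor
  · rintro ⟨D, h1, h2⟩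
    refine ⟨K * D, fun i => ?_, fun i => ?_⟩
    · obtain ⟨t, ht⟩ := h1 i
      exact ⟨t, (h.biLip _ _).2.trans (by gcongr)⟩
    · obtain ⟨t, ht⟩ := h2 i
      exact ⟨t, (h.biLip _ _).2.trans (by gcongr)⟩
  · rintro ⟨D, h1, h2⟩
    refine ⟨K * D, fun i => ?_, fun i => ?_⟩
    · obtain ⟨t, ht⟩ := h1 i
      exact ⟨t, (h.biLip _ _).1.trans (by gcongr)⟩
    · obtain ⟨t, ht⟩ := h2 i
      exact ⟨t, (h.biLip _ _).1.trans (by gcongr)⟩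

/-- Rays of the subgroup close to a Morse ray of the group are uniformly Morse. -/
theorem toV_morse (h : MorseSub S TV K) (N : ℝ → ℝ) (D : ℝ) : ∃ N' : ℝ → ℝ, ∀ (γ : ℕ → V)
    (β : ℕ → G), DMorse (wdist S) N (range β) → Near (wdist S) D (fun n => (γ n : G)) β →
    MorseSet (wdist TV) N' (range γ) := by
  refine ⟨fun C => (fun C => K * (fun C => N (2 * C + 2 * D) + 2 * D) (K * C)) (2 * C) + 2 * C,
    fun γ β hβ hn => ?_⟩
  have h1 := hβ.near (gm_wdist h.gen) (hn.symm (gm_wdist h.gen))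
  have e : (range fun n => (γ n : G)) = (fun v : V => (v : G)) '' range γ := by
    rw [← range_comp]; rfl
  rw [e] at h1
  exact (h1.of_image h.one_le h.biLip).morseSet (gm_wdist h.genV)

/-- A Morse ray of the subgroup is uniformly close to a geodesic ray of the group. -/
theorem toG_ray (h : MorseSub S TV K) (N : ℝ → ℝ) : ∃ (D : ℝ) (N' : ℝ → ℝ), ∀ γ : ℕ → V,
    γ 0 = 1 → IsGeodSeq (wdist TV) γ → DMorse (wdist TV) N (range γ) →
    (∃ β : ℕ → G, β 0 = 1 ∧ IsGeodSeq (wdist S) β ∧ Near (wdist S) D (fun n => (γ n : G)) β) ∧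
    ∀ β : ℕ → G, Near (wdist S) D (fun n => (γ n : G)) β → MorseSet (wdist S) N' (range β) := by
  obtain ⟨N₁, hN₁⟩ := h.morse N
  have hd := gm_wdist h.gen
  have hK := h.one_le
  set D₀ := max (N₁ 1) 0
  have hD₀ : 0 ≤ D₀ := le_max_right _ _
  set D := D₀ + K * (K * (2 * D₀ + 1)) with hD
  have hD₀D : D₀ ≤ D := by rw [hD]; linarith [show 0 ≤ K * (K * (2 * D₀ + 1)) by positivity]
  refine ⟨D, _, fun γ h0 hγ hN => ⟨?_, fun β hβ => ((hN₁ γ hγ hN).near hd hβ).morseSet hd⟩⟩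
  have hM := hN₁ γ hγ hN
  have hle := h.le_dist hγ h0
  set M : ℕ → ℕ := fun n => ⌈K * n + n + K * D₀⌉₊ with hMdef
  have hMn : ∀ n : ℕ, K * n + n + K * D₀ ≤ M n := fun n => Nat.le_ceil _
  choose l g hl g0 gl hg using fun n => hd.geo' 1 (γ (M n) : G)
  have hln : ∀ n, n ≤ l n := by
    intro n
    have h1 := hle (M n)
    rw [← hl n] at h1
    have h2 := hMn n
    have : K * n ≤ K * l n := by
      have : 0 ≤ K * D₀ := by positivity
      have : (0 : ℝ) ≤ n := Nat.cast_nonneg n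
      linarith
    exact_mod_cast le_of_mul_le_mul_left this (by linarith)
  have hclose : ∀ n, ∀ i ≤ l n, ∃ t, wdist S (g n i) (γ t : G) ≤ D₀ := by
    intro n i hi
    have hdq : DQ (wdist S) 1 (l n) (g n) := by
      refine ⟨le_rfl, fun i hi j hj => ?_⟩
      rw [hg n i hi j hj]
      constructor <;> linarith
    obtain ⟨_, ⟨t, rfl⟩, ht⟩ := hM 1 (l n) (g n) hdq ⟨0, by simp [h0, g0]⟩ ⟨M n, (gl n).symm⟩ i hi
    exact ⟨t, ht.trans (le_max_left _ _)⟩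
  have hdist : ∀ s t : ℕ, |(s : ℝ) - t| ≤ K * wdist S (γ s : G) (γ t) := by
    intro s t
    rw [← hγ s t]; exact (h.biLip _ _).1
  have hdist' : ∀ s t : ℕ, wdist S (γ s : G) (γ t) ≤ K * |(s : ℝ) - t| := by
    intro s t
    rw [← hγ s t]; exact (h.biLip _ _).2
  obtain ⟨β, β0, hβ, hlim⟩ := exists_limit_ray h.gen h.fin (g := g) g0
    (fun n i hi j hj => hg n i (hi.trans (hln n)) j (hj.trans (hln n)))
  have hg1 : ∀ n, ∀ i ≤ l n, wdist S 1 (g n i) = i := by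
    intro n i hi
    rw [← g0 n, hg n 0 (Nat.zero_le _) i hi]; simp
  refine ⟨β, β0, hβ, fun i => ?_, fun i => ?_⟩
  · refine close_limit hd 1 hK (u := fun _ i => (γ i : G)) (v := g)
      (u' := fun i => (γ i : G)) (v' := β) ?_ ?_ ?_ i
    · intro k
      obtain ⟨n, hn, hag⟩ := hlim k
      exact ⟨n, hn, fun i hi => ⟨rfl, hag i hi⟩⟩
    · intro n i _
      exact h.dist_le hγ h0 i
    · intro n t ht
      choose! τ hτ using hclose n
      have hex : ∃ i, i ≤ l n ∧ t ≤ τ i := by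
        refine ⟨l n, le_rfl, ?_⟩
        have h1 := hτ (l n) le_rfl
        rw [gl n] at h1
        have h2 := (hdist (M n) (τ (l n))).trans (mul_le_mul_of_nonneg_left h1 (by linarith))
        have h3 := abs_le.1 h2
        have h4 := hMn n
        have : (0 : ℝ) ≤ K * n := by positivity
        have h5 : (n : ℝ) ≤ τ (l n) := by linarith [h3.2]
        have : n ≤ τ (l n) := by exact_mod_cast h5
        omega
      classical
      have hi := Nat.find_spec hex
      have hmin := fun j (hj : j < Nat.find hex) => Nat.find_min hex hj
      set i := Nat.find hex
      have hti : (t : ℝ) ≤ τ i := by exact_mod_cast hi.2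
      have key : (τ i : ℝ) - t ≤ K * (2 * D₀ + 1) := by
        rcases Nat.eq_zero_or_pos i with hz | hpos
        · have h1 := hτ i hi.1
          rw [hz, g0] at h1
          have h2 := hle (τ 0)
          have h3 : K * wdist S 1 (γ (τ 0) : G) ≤ K * (2 * D₀ + 1) := by gcongr; linarith
          rw [hz]
          linarith [(Nat.cast_nonneg t : (0 : ℝ) ≤ t)]
        · have h1 : τ (i - 1) < t := by
            by_contra hc
            exact hmin (i - 1) (by omega) ⟨by omega, by omega⟩
          have h1' : (τ (i - 1) : ℝ) ≤ t := by exact_mod_cast h1.le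
          have h2 := hτ i hi.1
          have h3 := hτ (i - 1) (by omega)
          have h4 := hg n i hi.1 (i - 1) (by omega)
          rw [Nat.cast_sub hpos] at h4
          norm_num at h4
          have t1 := hd.tri (γ (τ i) : G) (g n i) (γ (τ (i - 1)))
          have t2 := hd.tri (g n i) (g n (i - 1)) (γ (τ (i - 1)) : G)
          rw [hd.symm (γ (τ i) : G) (g n i)] at t1
          have h5 : K * wdist S (γ (τ i) : G) (γ (τ (i - 1))) ≤ K * (2 * D₀ + 1) := by
            gcongr; linarith
          have h6 := (abs_le.1 ((hdist (τ i) (τ (i - 1))).trans h5)).2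
          linarith
      refine ⟨i, ?_, ?_⟩
      · rw [hg1 n i hi.1]
        exact le_mul_of_one_le_left (Nat.cast_nonneg _) hK
      · have t1 := hd.tri (γ t : G) (γ (τ i)) (g n i)
        have h2 := hτ i hi.1
        rw [hd.symm] at h2
        have h3 := hdist' t (τ i)
        rw [abs_sub_comm, abs_of_nonneg (by linarith)] at h3
        have h4 : K * ((τ i : ℝ) - t) ≤ K * (K * (2 * D₀ + 1)) := by gcongr
        linarith
  · obtain ⟨t, ht⟩ := close_limit hd 1 hK (u := g) (v := fun _ i => (γ i : G)) (u' := β)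
      (v' := fun i => (γ i : G)) (D := D) (by
        intro k
        obtain ⟨n, hn, hag⟩ := hlim k
        exact ⟨n, hn, fun i hi => ⟨hag i hi, rfl⟩⟩) (by
        intro n i hi
        rw [hg1 n i (hi.trans (hln n))]
        exact le_mul_of_one_le_left (Nat.cast_nonneg _) hK) (by
        intro n i hi
        obtain ⟨t, ht⟩ := hclose n i (hi.trans (hln n))
        exact ⟨t, hle t, ht.trans hD₀D⟩) i
    exact ⟨t, by rwa [hd.symm]⟩

/-- A Morse ray of the group close to the subgroup is close to a geodesic ray of the subgroup. -/
theorem toV_ray (h : MorseSub S TV K) {N : ℝ → ℝ} {r : ℝ} {β : ℕ → G} (β0 : β 0 = 1)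
    (hβ : IsGeodSeq (wdist S) β) (hN : DMorse (wdist S) N (range β))
    (hr : ∀ n, ∃ v : V, wdist S (β n) v ≤ r) :
    ∃ γ : ℕ → V, γ 0 = 1 ∧ IsGeodSeq (wdist TV) γ ∧
      ∃ D, Near (wdist S) D (fun n => (γ n : G)) β := by
  have hd := gm_wdist h.gen
  have hV := gm_wdist h.genV
  have hK := h.one_le
  have hsm := hN.sm hd hβ
  choose v hv using hr
  have hr0 : 0 ≤ r := (hd.nonneg _ _).trans (hv 0)
  set M : ℕ → ℕ := fun n => ⌈K * n + r + n⌉₊ with hMdef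
  have hMn : ∀ n : ℕ, K * n + r + n ≤ M n := fun n => Nat.le_ceil _
  choose l g hl g0 gl hg using fun n => hV.geo' 1 (v (M n))
  have hln : ∀ n, n ≤ l n := by
    intro n
    have h1 := (h.biLip 1 (v (M n))).2
    rw [← hl n] at h1
    have h2 := hMn n
    have h3 := geod_dist_zero hβ β0 (M n)
    have t1 := hd.tri 1 (v (M n) : G) (β (M n))
    rw [hd.symm (v (M n) : G)] at t1
    have h4 := hv (M n)
    have : K * n ≤ K * l n := by
      have : (0 : ℝ) ≤ n := Nat.cast_nonneg n
      rw [Subgroup.coe_one] at h1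
      linarith
    exact_mod_cast le_of_mul_le_mul_left this (by linarith)
  set D := max ((fun C => 3 * N C + 2 * C) (2 * K + 2 * r) + r) r with hD
  have hg1 : ∀ n, ∀ i ≤ l n, wdist TV 1 (g n i) = i := by
    intro n i hi
    rw [← g0 n, hg n 0 (Nat.zero_le _) i hi]; simp
  have hle : ∀ n, ∀ i ≤ l n, (i : ℝ) ≤ K * wdist S 1 (g n i : G) := by
    intro n i hi
    have := (h.biLip 1 (g n i)).1
    rwa [hg1 n i hi] at this
  have hle' : ∀ n, ∀ i ≤ l n, wdist S 1 (g n i : G) ≤ K * i := by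
    intro n i hi
    have := (h.biLip 1 (g n i)).2
    rwa [hg1 n i hi] at this
  have hclose : ∀ n, (∀ i ≤ l n, ∃ t, wdist S (g n i : G) (β t) ≤ D) ∧
      ∀ t ≤ n, ∃ i ≤ l n, wdist S (g n i : G) (β t) ≤ D := by
    intro n
    obtain ⟨c', hc', c0, cl, hall, hall'⟩ := (h.dq (hg n)).endMod hd (R := r) (β 0) (β (M n))
      (by rw [g0, β0, Subgroup.coe_one, hd.self]; exact hr0) (by rw [gl]; exact hv _)
    obtain ⟨h1, h2⟩ := hsm _ _ _ 0 (M n) (Nat.zero_le _) hc' c0 cl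
    constructor
    · intro i hi
      obtain ⟨t, ht⟩ := h1 i (by omega)
      refine ⟨t, le_trans ?_ (le_max_left _ _)⟩
      have t1 := hd.tri (g n i : G) (c' i) (β t)
      have t2 := hall' i hi
      rw [hd.symm] at t2
      simp only at ht t1 t2 ⊢
      linarith
    · intro t ht
      have htM : t ≤ M n := by
        have h3 := hMn n
        have h4 : (t : ℝ) ≤ n := by exact_mod_cast ht
        have h5 : 0 ≤ K * (n : ℝ) := by positivity
        have : (t : ℝ) ≤ M n := by linarith
        exact_mod_cast this
      obtain ⟨i, hi, hit⟩ := h2 t (Nat.zero_le _) htM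
      refine ⟨min i (l n), min_le_right _ _, le_trans ?_ (le_max_left _ _)⟩
      have t1 := hd.tri (g n (min i (l n)) : G) (c' i) (β t)
      have t2 := hall i hi
      rw [hd.symm] at t2
      simp only at hit t1 t2 ⊢
      linarith
  obtain ⟨γ, γ0, hγ, hlim⟩ := exists_limit_ray h.genV h.finV (g := g) g0
    (fun n i hi j hj => hg n i (hi.trans (hln n)) j (hj.trans (hln n)))
  refine ⟨γ, γ0, hγ, D, fun i => ?_, fun i => ?_⟩
  · refine close_limit hd 1 hK (u := fun n i => (g n i : G)) (v := fun _ => β)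
      (u' := fun i => (γ i : G)) (v' := β) ?_ ?_ ?_ i
    · intro k
      obtain ⟨n, hn, hag⟩ := hlim k
      exact ⟨n, hn, fun i hi => ⟨by rw [hag i hi], rfl⟩⟩
    · intro n i hi
      exact hle' n i (hi.trans (hln n))
    · intro n i hi
      obtain ⟨t, ht⟩ := (hclose n).1 i (hi.trans (hln n))
      refine ⟨t, ?_, ht⟩
      rw [geod_dist_zero hβ β0]
      exact le_mul_of_one_le_left (Nat.cast_nonneg _) hK
  · obtain ⟨t, ht⟩ := close_limit hd 1 hK (u := fun _ => β) (v := fun n i => (g n i : G)) (u' := β)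
      (v' := fun i => (γ i : G)) (D := D) (by
        intro k
        obtain ⟨n, hn, hag⟩ := hlim k
        exact ⟨n, hn, fun i hi => ⟨rfl, by rw [hag i hi]⟩⟩) (by
        intro n i hi
        rw [geod_dist_zero hβ β0]
        exact le_mul_of_one_le_left (Nat.cast_nonneg _) hK) (by
        intro n i hi
        obtain ⟨t, ht, hit⟩ := (hclose n).2 i hi
        exact ⟨t, hle n t ht, by rwa [hd.symm]⟩) i
    exact ⟨t, by rwa [hd.symm]⟩

/-- The Hausdorff distance between a Morse ray of the group and an asymptotic ray of the subgroup
is controlled by the Morse gauge. -/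
theorem uniform (h : MorseSub S TV K) (N : ℝ → ℝ) : ∃ D : ℝ, ∀ (γ : ℕ → V) (β : ℕ → G),
    γ 0 = 1 → IsGeodSeq (wdist TV) γ → β 0 = 1 → IsGeodSeq (wdist S) β →
    DMorse (wdist S) N (range β) → (∃ D', Near (wdist S) D' (fun n => (γ n : G)) β) →
    Near (wdist S) D (fun n => (γ n : G)) β := by
  have hd := gm_wdist h.gen
  refine ⟨(fun C => 3 * N C + 2 * C) (3 * K), fun γ β γ0 hγ β0 hβ hN ⟨D', hD'⟩ => ?_⟩
  exact uniform_hd hd hβ (hN.sm hd hβ) (fun n => h.dq fun i _ j _ => hγ i j) (by simp [γ0, β0])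
    (hD'.symm hd).1

/-- The inclusion of the subgroup induces a map of Morse boundaries. -/
theorem exists_incl (h : MorseSub S TV K) : ∃ ι : MorseBoundary V TV → MorseBoundary G S,
    ∀ (γ : GRay V TV) (β : GRay G S), bmk β = ι (bmk γ) ↔
      ∃ D, Near (wdist S) D (fun n => (γ.seq n : G)) β.seq := by
  have hd := gm_wdist h.gen
  have key : ∀ ξ : MorseBoundary V TV, ∃ η : MorseBoundary G S, ∀ (γ : GRay V TV) (β : GRay G S),
      bmk γ = ξ → (bmk β = η ↔
        ∃ D, Near (wdist S) D (fun n => (γ.seq n : G)) β.seq) := by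
    intro ξ
    obtain ⟨γ₀, rfl⟩ := exists_bmk ξ
    obtain ⟨N, hN⟩ := γ₀.morse
    obtain ⟨D, N', hD⟩ := h.toG_ray (fun C => N (2 * C))
    obtain ⟨⟨β₀, h1, h2, h3⟩, h4⟩ := hD γ₀.seq γ₀.base γ₀.geod hN.discrete
    let b₀ : GRay G S := ⟨β₀, h1, h2, ⟨N', h4 β₀ h3⟩⟩
    refine ⟨bmk b₀, fun γ β hγ => ?_⟩
    obtain ⟨D₁, hD₁⟩ := h.near_iff.1 ((bmk_eq_iff h.genV).1 hγ)
    rw [bmk_eq_iff h.gen]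
    constructor
    · rintro ⟨D₂, hD₂⟩
      exact ⟨_, (hD₁.trans hd h3).trans hd (hD₂.symm hd)⟩
    · rintro ⟨D₂, hD₂⟩
      exact ⟨_, (hD₂.symm hd).trans hd (hD₁.trans hd h3)⟩
  choose ι hι using key
  exact ⟨ι, fun γ β => hι _ γ β rfl⟩

theorem continuous_incl (h : MorseSub S TV K) {ι : MorseBoundary V TV → MorseBoundary G S}
    (hι : ∀ (γ : GRay V TV) (β : GRay G S), bmk β = ι (bmk γ) ↔
      ∃ D, Near (wdist S) D (fun n => (γ.seq n : G)) β.seq) : Continuous ι := by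
  have hd := gm_wdist h.gen
  have hK := h.one_le
  refine continuous_iff_isClosed.2 fun A hA => isClosed_boundary_iff.2 fun N γ hγ hlim => ?_
  choose γ' hγ' hA' hag using hlim
  obtain ⟨D, N', hD⟩ := h.toG_ray (fun C => N (2 * C))
  choose β β0 hβ hnear using fun n =>
    (hD (γ' n).seq (γ' n).base (γ' n).geod (hγ' n).discrete).1
  have hβM := fun n => (hD (γ' n).seq (γ' n).base (γ' n).geod (hγ' n).discrete).2 _ (hnear n)
  obtain ⟨β', β0', hβ', hlim⟩ := exists_limit_ray h.gen h.fin (g := β) β0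
    (fun n i _ j _ => hβ n i j)
  have hdb : ∀ n i, wdist S 1 (β n i) = i := fun n i => geod_dist_zero (hβ n) (β0 n) i
  have hn : Near (wdist S) D (fun n => (γ.seq n : G)) β' := by
    refine ⟨fun i => ?_, fun i => ?_⟩
    · refine close_limit hd 1 hK (u := fun n i => ((γ' n).seq i : G)) (v := β)
        (u' := fun i => (γ.seq i : G)) (v' := β') ?_ ?_ ?_ i
      · intro k
        obtain ⟨n, hn, hag'⟩ := hlim k
        exact ⟨n, hn, fun i hi => ⟨by rw [hag n i (hi.trans hn)], hag' i hi⟩⟩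
      · intro n i _
        exact h.dist_le (γ' n).geod (γ' n).base i
      · intro n i _
        obtain ⟨t, ht⟩ := (hnear n).1 i
        exact ⟨t, by rw [hdb]; exact le_mul_of_one_le_left (Nat.cast_nonneg _) hK, ht⟩
    · obtain ⟨t, ht⟩ := close_limit hd 1 hK (u := β) (v := fun n i => ((γ' n).seq i : G))
        (u' := β') (v' := fun i => (γ.seq i : G)) (D := D) (by
        intro k
        obtain ⟨n, hn, hag'⟩ := hlim k
        exact ⟨n, hn, fun i hi => ⟨hag' i hi, by rw [hag n i (hi.trans hn)]⟩⟩) (by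
        intro n i _
        rw [hdb]; exact le_mul_of_one_le_left (Nat.cast_nonneg _) hK) (by
        intro n i _
        obtain ⟨t, ht⟩ := (hnear n).2 i
        exact ⟨t, h.le_dist (γ' n).geod (γ' n).base t, by rwa [hd.symm]⟩) i
      exact ⟨t, by rwa [hd.symm]⟩
  have hM' : MorseSet (wdist S) N' (range β') :=
    (hD γ.seq γ.base γ.geod hγ.discrete).2 _ hn
  have e : bmk (⟨β', β0', hβ', ⟨N', hM'⟩⟩ : GRay G S) =
      ι (bmk γ) := (hι _ _).2 ⟨D, hn⟩
  rw [mem_preimage, ← e]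
  refine isClosed_boundary_iff.1 hA N' _ hM' fun k => ?_
  obtain ⟨n, hn, hag'⟩ := hlim k
  refine ⟨⟨β n, β0 n, hβ n, ⟨N', hβM n⟩⟩, hβM n, ?_, hag'⟩
  have e2 : bmk (⟨β n, β0 n, hβ n, ⟨N', hβM n⟩⟩ : GRay G S) =
      ι (bmk (γ' n)) := (hι _ _).2 ⟨D, hnear n⟩
  rw [e2]
  exact hA' n

theorem injective_incl (h : MorseSub S TV K) {ι : MorseBoundary V TV → MorseBoundary G S}
    (hι : ∀ (γ : GRay V TV) (β : GRay G S), bmk β = ι (bmk γ) ↔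
      ∃ D, Near (wdist S) D (fun n => (γ.seq n : G)) β.seq) : Function.Injective ι := by
  have hd := gm_wdist h.gen
  intro ξ η he
  obtain ⟨γ, rfl⟩ := exists_bmk ξ
  obtain ⟨γ', rfl⟩ := exists_bmk η
  obtain ⟨β, hβ⟩ := exists_bmk (ι (bmk γ))
  obtain ⟨D, hD⟩ := (hι γ β).1 hβ
  obtain ⟨D', hD'⟩ := (hι γ' β).1 (hβ.trans he)
  exact (bmk_eq_iff h.genV).2 (h.near_iff.2 ⟨_, hD.trans hd (hD'.symm hd)⟩)

theorem isClosedMap_incl (h : MorseSub S TV K) {ι : MorseBoundary V TV → MorseBoundary G S}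
    (hι : ∀ (γ : GRay V TV) (β : GRay G S), bmk β = ι (bmk γ) ↔
      ∃ D, Near (wdist S) D (fun n => (γ.seq n : G)) β.seq) : IsClosedMap ι := by
  have hd := gm_wdist h.gen
  have hK := h.one_le
  intro A hA
  refine isClosed_boundary_iff.2 fun N β hβ hlim => ?_
  choose β' hβ' hA' hag using hlim
  choose ξ hξA hξ using hA'
  choose γ hγ using fun n => exists_bmk (ξ n)
  have hnear0 : ∀ n, ∃ D, Near (wdist S) D (fun i => ((γ n).seq i : G)) (β' n).seq := by
    intro n
    exact (hι _ _).1 ((hξ n).symm.trans (congrArg ι (hγ n).symm))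
  obtain ⟨D, hD⟩ := h.uniform (fun C => N (2 * C))
  have hnear := fun n => hD (γ n).seq (β' n).seq (γ n).base (γ n).geod (β' n).base (β' n).geod
    (hβ' n).discrete (hnear0 n)
  obtain ⟨γ', γ0', hγ', hlim⟩ := exists_limit_ray h.genV h.finV (g := fun n => (γ n).seq)
    (fun n => (γ n).base) (fun n i _ j _ => (γ n).geod i j)
  have hdb : ∀ n i, wdist S 1 ((β' n).seq i) = i := fun n i =>
    geod_dist_zero (β' n).geod (β' n).base i
  have hn : Near (wdist S) D (fun n => (γ' n : G)) β.seq := by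
    refine ⟨fun i => ?_, fun i => ?_⟩
    · refine close_limit hd 1 hK (u := fun n i => ((γ n).seq i : G)) (v := fun n => (β' n).seq)
        (u' := fun i => (γ' i : G)) (v' := β.seq) ?_ ?_ ?_ i
      · intro k
        obtain ⟨n, hn, hag'⟩ := hlim k
        exact ⟨n, hn, fun i hi => ⟨by rw [hag' i hi], hag n i (hi.trans hn)⟩⟩
      · intro n i _
        exact h.dist_le (γ n).geod (γ n).base i
      · intro n i _
        obtain ⟨t, ht⟩ := (hnear n).1 i
        exact ⟨t, by rw [hdb]; exact le_mul_of_one_le_left (Nat.cast_nonneg _) hK, ht⟩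
    · obtain ⟨t, ht⟩ := close_limit hd 1 hK (u := fun n => (β' n).seq)
        (v := fun n i => ((γ n).seq i : G)) (u' := β.seq) (v' := fun i => (γ' i : G)) (D := D) (by
        intro k
        obtain ⟨n, hn, hag'⟩ := hlim k
        exact ⟨n, hn, fun i hi => ⟨hag n i (hi.trans hn), by rw [hag' i hi]⟩⟩) (by
        intro n i _
        rw [hdb]; exact le_mul_of_one_le_left (Nat.cast_nonneg _) hK) (by
        intro n i _
        obtain ⟨t, ht⟩ := (hnear n).2 i
        exact ⟨t, h.le_dist (γ n).geod (γ n).base t, by rwa [hd.symm]⟩) i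
      exact ⟨t, by rwa [hd.symm]⟩
  obtain ⟨N', hN'⟩ := h.toV_morse (fun C => N (2 * C)) D
  have hM' := hN' γ' β.seq hβ.discrete hn
  let γ₁ : GRay V TV := ⟨γ', γ0', hγ', ⟨N', hM'⟩⟩
  refine ⟨bmk γ₁, ?_, ((hι γ₁ β).2 ⟨D, hn⟩).symm⟩
  refine isClosed_boundary_iff.1 hA N' _ hM' fun k => ?_
  obtain ⟨n, hn, hag'⟩ := hlim k
  refine ⟨γ n, hN' _ _ (hβ' n).discrete (hnear n), ?_, hag'⟩
  rw [hγ n]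
  exact hξA n

/-- The map of Morse boundaries induced by the inclusion of the subgroup is a closed embedding. -/
theorem isClosedEmbedding (h : MorseSub S TV K) {ι : MorseBoundary V TV → MorseBoundary G S}
    (hι : ∀ (γ : GRay V TV) (β : GRay G S), bmk β = ι (bmk γ) ↔
      ∃ D, Near (wdist S) D (fun n => (γ.seq n : G)) β.seq) : IsClosedEmbedding ι :=
  .of_continuous_injective_isClosedMap (h.continuous_incl hι) (h.injective_incl hι)
    (h.isClosedMap_incl hι)

/-- Classes of rays close to the subgroup are in the image of its boundary. -/
theorem mem_range (h : MorseSub S TV K) {ι : MorseBoundary V TV → MorseBoundary G S}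
    (hι : ∀ (γ : GRay V TV) (β : GRay G S), bmk β = ι (bmk γ) ↔
      ∃ D, Near (wdist S) D (fun n => (γ.seq n : G)) β.seq) (β : GRay G S) {r : ℝ}
    (hr : ∀ n, ∃ v : V, wdist S (β.seq n) v ≤ r) : bmk β ∈ range ι := by
  obtain ⟨N, hN⟩ := β.morse
  obtain ⟨γ, γ0, hγ, D, hD⟩ := h.toV_ray β.base β.geod hN.discrete hr
  obtain ⟨N', hN'⟩ := h.toV_morse (fun C => N (2 * C)) D
  have hM' : MorseSet (wdist TV) N' (range γ) := hN' γ β.seq hN.discrete hD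
  let γ' : GRay V TV := ⟨γ, γ0, hγ, ⟨N', hM'⟩⟩
  exact ⟨bmk γ', ((hι γ' β).2 ⟨D, hD⟩).symm⟩

end MorseSub

end Inclusion

/-- A connected component contained in the range of an embedding is homeomorphic to a connected
component of the source. -/
theorem component_homeo {X Y : Type*} [TopologicalSpace X] [TopologicalSpace Y] {f : X → Y}
    (hf : IsEmbedding f) {y : Y} (h : connectedComponent y ⊆ range f) :
    ∃ x : X, Nonempty (connectedComponent y ≃ₜ connectedComponent x) := by
  obtain ⟨x, rfl⟩ := h mem_connectedComponent
  refine ⟨x, ?_⟩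
  have h1 : f '' (f ⁻¹' connectedComponent (f x)) = connectedComponent (f x) :=
    image_preimage_eq_of_subset h
  have h2 : IsPreconnected (f ⁻¹' connectedComponent (f x)) := by
    rw [← hf.isInducing.isPreconnected_image, h1]
    exact isPreconnected_connectedComponent
  have h3 : f '' connectedComponent x = connectedComponent (f x) := by
    refine Subset.antisymm ?_ ?_
    · exact (isPreconnected_connectedComponent.image f
        hf.continuous.continuousOn).subset_connectedComponent ⟨x, mem_connectedComponent, rfl⟩
    · rw [← h1]
      exact image_mono (h2.subset_connectedComponent mem_connectedComponent)
  rw [← h3]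
  exact ⟨(hf.homeomorphImage _).symm⟩

end MorseGoG

namespace MorseGoG

/-! ### Rays and halfspaces of the tree -/

variable {G : Type*} [Group G] {VT : Type*} {T : SimpleGraph VT} [MulAction G VT] {S : Set G}

/-- The hypotheses on the splitting: `G` is generated by the finite set `S` and acts on the tree `T`,
and edge groups are undistorted in `G` and relatively wide in vertex groups. -/
structure Split (S : Set G) (T : SimpleGraph VT) : Prop where
  gen : Subgroup.closure S = ⊤
  fin : S.Finite
  tree : T.IsTree
  adj : ∀ (g : G) (a b : VT), T.Adj a b → T.Adj (g • a) (g • b)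
  edge : ∀ x b : VT, T.Adj x b → FGUndistorted S (edgeStab G x b) ∧
    RelWideIn (MulAction.stabilizer G x) (edgeStab G x b)

theorem inv_mul_mem_edgeStab {e : VT × VT} {k k' : G} (h : k • e = k' • e) :
    k⁻¹ * k' ∈ edgeStab G e.1 e.2 := by
  have h1 : k • e.1 = k' • e.1 := congrArg Prod.fst h
  have h2 : k • e.2 = k' • e.2 := congrArg Prod.snd h
  refine ⟨?_, ?_⟩
  · change (k⁻¹ * k') • e.1 = e.1
    rw [mul_smul, ← h1, inv_smul_smul]
  · change (k⁻¹ * k') • e.2 = e.2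
    rw [mul_smul, ← h2, inv_smul_smul]

theorem exists_crossing {P : ℕ → Prop} {i j : ℕ} (hij : i ≤ j) (h : ¬ (P i ↔ P j)) :
    ∃ s, i ≤ s ∧ s < j ∧ (P s ↔ ¬ P (s + 1)) := by
  by_contra hc
  push Not at hc
  refine h ?_
  induction j, hij using Nat.le_induction with
  | base => rfl
  | succ j hij ih =>
    have h1 := hc j hij (Nat.lt_succ_self j)
    have h2 : P i ↔ P j := by
      by_contra h2
      exact (h2 (ih h2 fun s hs hs' => hc s hs (by omega)))
    tauto

namespace Split

/-- A Morse ray stays only for a bounded time near the edge space of an edge, uniformly over all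
translates of finitely many edges. -/
theorem edge_time (h : Split S T) {J : Set (VT × VT)} (hJ : J.Finite)
    (hJadj : ∀ e ∈ J, T.Adj e.1 e.2) (N : ℝ → ℝ) (R : ℝ) :
    ∃ B : ℝ, ∀ γ : ℕ → G, IsGeodSeq (wdist S) γ → DMorse (wdist S) N (range γ) → ∀ e ∈ J,
      ∀ k k' : G, k • e = k' • e → ∀ s t : ℕ, wdist S (γ s) k ≤ R → wdist S (γ t) k' ≤ R →
      |(t : ℝ) - s| ≤ B := by
  have key : ∀ e : VT × VT, ∃ B : ℝ, e ∈ J → ∀ γ : ℕ → G, IsGeodSeq (wdist S) γ →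
      DMorse (wdist S) N (range γ) →
      ∀ k k' : G, k • e = k' • e → ∀ s t : ℕ, wdist S (γ s) k ≤ R → wdist S (γ t) k' ≤ R →
      |(t : ℝ) - s| ≤ B := by
    intro e
    by_cases he : e ∈ J
    · have hadj := hJadj e he
      obtain ⟨TV, hTV, K, hK, hbl⟩ := vertex_biLip h.gen h.fin h.tree h.adj e.1
        fun b hb => (h.edge _ b hb).1
      obtain ⟨B, hB⟩ := edge_bound h.gen (E := edgeStab G e.1 e.2) inf_le_left hTV hK hbl
        (h.edge _ _ hadj).1 ((h.edge _ _ hadj).2 TV hTV) N R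
      exact ⟨B, fun _ γ hγ hN k k' hk => hB γ hγ hN k k' (inv_mul_mem_edgeStab hk)⟩
    · exact ⟨0, fun h => absurd h he⟩
  choose B hB using key
  obtain ⟨B₀, hB₀⟩ := (hJ.image B).bddAbove
  exact ⟨B₀, fun γ hγ hN e he k k' hk s t h1 h2 =>
    (hB e he γ hγ hN k k' hk s t h1 h2).trans (hB₀ ⟨e, he, rfl⟩)⟩

/-- A Morse ray is close, for a bounded time only, to points whose orbit points are separated from
those of the ray by a given edge; the bound does not depend on the edge. -/
theorem sep_time (h : Split S T) (q : VT) (ρ : ℝ) (N : ℝ → ℝ) :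
    ∃ B : ℝ, ∀ γ : ℕ → G, IsGeodSeq (wdist S) γ → DMorse (wdist S) N (range γ) →
      ∀ a b, T.Adj a b → ∀ (s t : ℕ) (g g' : G), wdist S (γ s) g ≤ ρ → wdist S (γ t) g' ≤ ρ →
      (Side T a b (γ s • q) ↔ ¬ Side T a b (g • q)) →
      (Side T a b (γ t • q) ↔ ¬ Side T a b (g' • q)) → |(t : ℝ) - s| ≤ B := by
  obtain ⟨R, J, hR0, hJf, hJadj, hR⟩ := crossing_bound h.gen h.fin h.tree h.adj q q ρ
  obtain ⟨B, hB⟩ := h.edge_time hJf hJadj N R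
  refine ⟨B, fun γ hγ hN a b hab s t g g' hg hg' h1 h2 => ?_⟩
  obtain ⟨hJ, k, hk, hkR⟩ := hR _ _ hg a b hab h1
  obtain ⟨-, k', hk', hkR'⟩ := hR _ _ hg' a b hab h2
  exact hB γ hγ hN _ hJ k k' (hk.trans hk'.symm) s t hkR hkR'

theorem step_dist {γ : ℕ → G} (hγ : IsGeodSeq (wdist S) γ) (t : ℕ) :
    wdist S (γ t) (γ (t + 1)) ≤ 1 := by
  rw [hγ]; push_cast; simp

/-- Morse rays from `1` with a fixed gauge have a definite position relative to a given edge from a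
uniform time on. -/
theorem stable (h : Split S T) (q : VT) {a b : VT} (hab : T.Adj a b) (N : ℝ → ℝ) :
    ∃ n₀ : ℕ, ∀ γ : ℕ → G, γ 0 = 1 → IsGeodSeq (wdist S) γ → DMorse (wdist S) N (range γ) →
      ∀ n ≥ n₀, (Side T a b (γ n₀ • q) ↔ Side T a b (γ n • q)) := by
  obtain ⟨R, J, hR0, hJf, hJadj, hR⟩ := crossing_bound h.gen h.fin h.tree h.adj q q 1
  obtain ⟨k₀, hk₀⟩ := exists_smul_rep (G := G) q (a, b)
  obtain ⟨B, hB⟩ := h.edge_time hJf hJadj N (max R (wdist S 1 k₀))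
  refine ⟨⌈B⌉₊ + 1, fun γ γ0 hγ hN n hn => ?_⟩
  by_contra hc
  obtain ⟨s, hs, -, hs'⟩ := exists_crossing (P := fun n => Side T a b (γ n • q)) hn hc
  obtain ⟨hJ, k, hk, hkR⟩ := hR _ _ (step_dist hγ s) a b hab hs'
  have := hB γ hγ hN _ hJ k₀ k (hk₀.trans hk.symm) 0 s
    (by rw [γ0]; exact le_max_right _ _) (hkR.trans (le_max_left _ _))
  have h1 : ((⌈B⌉₊ + 1 : ℕ) : ℝ) ≤ s := by exact_mod_cast hs
  have h2 := Nat.le_ceil B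
  have h3 := le_abs_self ((s : ℝ) - (0 : ℕ))
  push_cast at h1 h3 this
  linarith

end Split

/-- The ray `γ` eventually lies on the `b`-side of the edge `{a, b}`, as seen through the orbit map
of `q`. -/
def RaySide (T : SimpleGraph VT) (q a b : VT) (γ : ℕ → G) : Prop :=
  ∀ᶠ n in atTop, Side T a b (γ n • q)

namespace Split

/-- The side on which a ray ends up is decided at a time depending only on the Morse gauge. -/
theorem raySide_iff (h : Split S T) (q : VT) {a b : VT} (hab : T.Adj a b) (N : ℝ → ℝ) :
    ∃ n₀ : ℕ, ∀ γ : ℕ → G, γ 0 = 1 → IsGeodSeq (wdist S) γ → DMorse (wdist S) N (range γ) →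
      (RaySide T q a b γ ↔ Side T a b (γ n₀ • q)) := by
  obtain ⟨n₀, h₀⟩ := h.stable q hab N
  refine ⟨n₀, fun γ γ0 hγ hN => ⟨fun hr => ?_, fun hs => ?_⟩⟩
  · obtain ⟨m, hm⟩ := eventually_atTop.1 hr
    exact (h₀ γ γ0 hγ hN _ (le_max_left n₀ m)).2 (hm _ (le_max_right _ _))
  · exact eventually_atTop.2 ⟨n₀, fun n hn => (h₀ γ γ0 hγ hN n hn).1 hs⟩

theorem raySide_swap (h : Split S T) (q : VT) {a b : VT} (hab : T.Adj a b) (γ : GRay G S) :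
    RaySide T q b a γ.seq ↔ ¬ RaySide T q a b γ.seq := by
  obtain ⟨N, hN⟩ := γ.morse
  obtain ⟨n₀, h₀⟩ := h.stable q hab (fun C => N (2 * C))
  have h₀ := h₀ γ.seq γ.base γ.geod hN.discrete
  have e : ∀ v, Side T b a v ↔ ¬ Side T a b v := side_iff h.tree hab
  constructor
  · intro h1 h2
    obtain ⟨n, hn, hn'⟩ := (h1.and h2).exists
    exact (e _).1 hn hn'
  · intro hr
    refine eventually_atTop.2 ⟨n₀, fun n hn => (e _).2 fun hs => hr ?_⟩
    exact eventually_atTop.2 ⟨n₀, fun m hm => (h₀ m hm).1 ((h₀ n hn).2 hs)⟩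

theorem raySide_near (h : Split S T) (q : VT) {a b : VT} (hab : T.Adj a b) {γ β : GRay G S}
    {D : ℝ} (hD : Near (wdist S) D γ.seq β.seq) (hγ : RaySide T q a b γ.seq) :
    RaySide T q a b β.seq := by
  have hd := gm_wdist h.gen
  by_contra hβ
  rw [← h.raySide_swap q hab] at hβ
  obtain ⟨N, hN⟩ := γ.morse
  obtain ⟨B, hB⟩ := h.sep_time q D (fun C => N (2 * C))
  obtain ⟨m₁, h₁⟩ := eventually_atTop.1 hγ
  obtain ⟨m₂, h₂⟩ := eventually_atTop.1 hβ
  have key : ∀ i : ℕ, m₁ ≤ i → (m₂ : ℝ) + D ≤ i → ∃ g, wdist S (γ.seq i) g ≤ D ∧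
      (Side T a b (γ.seq i • q) ↔ ¬ Side T a b (g • q)) := by
    intro i hi hi'
    obtain ⟨t, ht⟩ := hD.1 i
    have h3 := geod_dist_zero γ.geod γ.base i
    have h4 := geod_dist_zero β.geod β.base t
    have h5 := hd.tri 1 (β.seq t) (γ.seq i)
    rw [hd.symm (β.seq t)] at h5
    have ht2 : m₂ ≤ t := by
      have : (m₂ : ℝ) ≤ t := by linarith
      exact_mod_cast this
    exact ⟨_, ht, iff_of_true (h₁ i hi) ((side_iff h.tree hab _).1 (h₂ t ht2))⟩
  set i := max m₁ ⌈(m₂ : ℝ) + D⌉₊ with hi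
  have hi1 : m₁ ≤ i := le_max_left _ _
  have hi2 : (m₂ : ℝ) + D ≤ i := (Nat.le_ceil _).trans (by exact_mod_cast le_max_right _ _)
  set j := i + (⌈B⌉₊ + 1) with hj
  have hij : (j : ℝ) = i + (⌈B⌉₊ + 1) := by rw [hj]; push_cast; ring
  obtain ⟨g, hg, hs⟩ := key i hi1 hi2
  obtain ⟨g', hg', hs'⟩ := key j (by omega) (by rw [hij]; linarith [Nat.cast_nonneg (α := ℝ) ⌈B⌉₊])
  have := hB γ.seq γ.geod hN.discrete a b hab i j g g' hg hg' hs hs'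
  have h3 := le_abs_self ((j : ℝ) - i)
  linarith [Nat.le_ceil B]

/-- The side on which a ray ends up does not depend on the orbit map: otherwise infinitely many
translates of the edge by points of the ray would separate `q` from `q'`, forcing the ray to stay
near an edge space. -/
theorem raySide_base (h : Split S T) (q q' : VT) {a b : VT} (hab : T.Adj a b) {γ : GRay G S}
    (hγ : RaySide T q a b γ.seq) : RaySide T q' a b γ.seq := by
  have hd := gm_wdist h.gen
  by_contra hβ
  rw [← h.raySide_swap q' hab] at hβ
  obtain ⟨N, hN⟩ := γ.morse
  obtain ⟨B, hB⟩ := h.edge_time (finite_sep h.tree q' q) (fun e he => he.1) (fun C => N (2 * C)) 0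
  obtain ⟨n₀, h₀⟩ := eventually_atTop.1 (hγ.and hβ)
  have hmaps : MapsTo (fun i : ℕ => (γ.seq (n₀ + i * (⌈B⌉₊ + 1)))⁻¹ • ((a, b) : VT × VT)) univ
      {e : VT × VT | T.Adj e.1 e.2 ∧ ¬ Side T e.1 e.2 q' ∧ Side T e.1 e.2 q} := by
    intro i _
    obtain ⟨h1, h2⟩ := h₀ (n₀ + i * (⌈B⌉₊ + 1)) (Nat.le_add_right _ _)
    set g := γ.seq (n₀ + i * (⌈B⌉₊ + 1))
    refine ⟨h.adj _ _ _ hab, ?_, ?_⟩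
    · change ¬ Side T (g⁻¹ • a) (g⁻¹ • b) q'
      rw [← side_smul h.adj g, smul_inv_smul, smul_inv_smul]
      exact (side_iff h.tree hab _).1 h2
    · change Side T (g⁻¹ • a) (g⁻¹ • b) q
      rw [← side_smul h.adj g, smul_inv_smul, smul_inv_smul]
      exact h1
  obtain ⟨i, -, j, -, hij, he⟩ := infinite_univ.exists_ne_map_eq_of_mapsTo hmaps
    (finite_sep h.tree q' q)
  have key := hB γ.seq γ.geod hN.discrete _ (hmaps (mem_univ i)) (γ.seq (n₀ + i * (⌈B⌉₊ + 1)))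
    (γ.seq (n₀ + j * (⌈B⌉₊ + 1)))
    (by
      simp only at he ⊢
      rw [smul_inv_smul, he, smul_inv_smul]) _ _ (hd.self _).le (hd.self _).le
  have h1 : (1 : ℝ) ≤ |(j : ℝ) - i| := by
    have : (1 : ℤ) ≤ |(j : ℤ) - i| := Int.one_le_abs (by omega)
    exact_mod_cast this
  have h2 : ((n₀ + j * (⌈B⌉₊ + 1) : ℕ) : ℝ) - ((n₀ + i * (⌈B⌉₊ + 1) : ℕ) : ℝ) =
      ((j : ℝ) - i) * (⌈B⌉₊ + 1) := by push_cast; ring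
  rw [h2, abs_mul, abs_of_nonneg (by positivity : (0 : ℝ) ≤ ⌈B⌉₊ + 1)] at key
  nlinarith [Nat.le_ceil B, Nat.cast_nonneg (α := ℝ) ⌈B⌉₊]

/-- A ray which ends up on the `x`-side of every edge at `x` stays near the stabiliser of `x`. -/
theorem near_stab (h : Split S T) (x : VT) (γ : GRay G S)
    (hr : ∀ b, T.Adj x b → ¬ RaySide T x x b γ.seq) :
    ∃ r : ℝ, ∀ n, ∃ v : MulAction.stabilizer G x, wdist S (γ.seq n) (v : G) ≤ r := by
  have hd := gm_wdist h.gen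
  obtain ⟨N, hN⟩ := γ.morse
  obtain ⟨R, J, hR0, hJf, hJadj, hR⟩ := crossing_bound h.gen h.fin h.tree h.adj x x 1
  obtain ⟨B, hB⟩ := h.sep_time x 1 (fun C => N (2 * C))
  refine ⟨max 0 B + R, fun n => ?_⟩
  by_cases hx : γ.seq n • x = x
  · exact ⟨⟨_, hx⟩, by rw [hd.self]; positivity⟩
  obtain ⟨b, hb, hs⟩ := exists_side h.tree x _ hx
  have h0 : ¬ Side T x b (γ.seq 0 • x) := by
    rw [γ.base, one_smul]; exact not_side h.tree hb
  obtain ⟨m, hm, hm'⟩ : ∃ m ≥ n, ¬ Side T x b (γ.seq m • x) := by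
    by_contra hc
    push Not at hc
    exact hr b hb (eventually_atTop.2 ⟨n, hc⟩)
  obtain ⟨s, -, hsn, hs1⟩ := exists_crossing (P := fun n => Side T x b (γ.seq n • x))
    (Nat.zero_le n) (by tauto)
  obtain ⟨u, hu, -, hu1⟩ := exists_crossing (P := fun n => Side T x b (γ.seq n • x))
    hm (by tauto)
  have h1 := hB γ.seq γ.geod hN.discrete x b hb s u _ _ (step_dist γ.geod s) (step_dist γ.geod u)
    hs1 hu1
  obtain ⟨-, k, hk, hkR⟩ := hR _ _ (step_dist γ.geod s) x b hb hs1
  have hkx : k • x = x := by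
    have := congrArg Prod.fst hk
    rwa [Prod.smul_fst, rep_fst] at this
  refine ⟨⟨k, hkx⟩, ?_⟩
  have h2 := hd.tri (γ.seq n) (γ.seq s) k
  have h3 : wdist S (γ.seq n) (γ.seq s) = (n : ℝ) - s := by
    rw [γ.geod, abs_of_nonneg]
    have : (s : ℝ) ≤ n := by exact_mod_cast hsn.le
    linarith
  have h4 := le_abs_self ((u : ℝ) - s)
  have h5 : (n : ℝ) ≤ u := by exact_mod_cast hu
  change wdist S (γ.seq n) k ≤ _
  linarith [le_max_right 0 B]

/-! ### Clopen subsets of the Morse boundary -/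

end Split

/-- The points of the Morse boundary represented by rays that end up on the `b`-side of `{a, b}`. -/
def Uset (S : Set G) (T : SimpleGraph VT) (q a b : VT) : Set (MorseBoundary G S) :=
  {ξ | ∃ γ : GRay G S, bmk γ = ξ ∧ RaySide T q a b γ.seq}

namespace Split

theorem mem_Uset (h : Split S T) (q : VT) {a b : VT} (hab : T.Adj a b) (γ : GRay G S) :
    bmk γ ∈ Uset S T q a b ↔ RaySide T q a b γ.seq := by
  refine ⟨?_, fun hr => ⟨γ, rfl, hr⟩⟩
  rintro ⟨β, hβ, hr⟩
  obtain ⟨D, hD⟩ := (bmk_eq_iff h.gen).1 hβ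
  exact h.raySide_near q hab hD hr

theorem compl_Uset (h : Split S T) (q : VT) {a b : VT} (hab : T.Adj a b) :
    (Uset S T q a b)ᶜ = Uset S T q b a := by
  ext ξ
  obtain ⟨γ, rfl⟩ := exists_bmk ξ
  rw [mem_compl_iff, h.mem_Uset q hab, h.mem_Uset q hab.symm, h.raySide_swap q hab]

theorem isClosed_Uset (h : Split S T) (q : VT) {a b : VT} (hab : T.Adj a b) :
    IsClosed (Uset S T q a b) := by
  rw [isClosed_boundary_iff]
  intro N γ hN hn
  obtain ⟨n₀, h₀⟩ := h.raySide_iff q hab (fun C => N (2 * C))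
  obtain ⟨β, hβN, hβ, heq⟩ := hn n₀
  rw [h.mem_Uset q hab, h₀ β.seq β.base β.geod hβN.discrete, heq n₀ le_rfl] at hβ
  rw [h.mem_Uset q hab, h₀ γ.seq γ.base γ.geod hN.discrete]
  exact hβ

theorem isClopen_Uset (h : Split S T) (q : VT) {a b : VT} (hab : T.Adj a b) :
    IsClopen (Uset S T q a b) :=
  ⟨h.isClosed_Uset q hab, by
    rw [← isClosed_compl_iff, h.compl_Uset q hab]; exact h.isClosed_Uset q hab.symm⟩

end Split
end MorseGoG

namespace MorseGoG

/-! ### Rays crossing a common infinite sequence of edges -/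

section NearOfFar
variable {X : Type*} {d : X → X → ℝ}

/-- If a geodesic ray comes back within distance `D` of a Morse ray with the same origin at
arbitrarily late times, then it stays uniformly close to the Morse ray. -/
theorem near_half (hd : GM d) {M : ℝ → ℝ} {γ β : ℕ → X} (hγ : IsGeodSeq d γ) (hβ : SM d M β)
    (h0 : γ 0 = β 0) {D : ℝ} (hD0 : 0 ≤ D) (hD : ∀ L : ℕ, ∃ t ≥ L, ∃ t', d (γ t) (β t') ≤ D)
    (u : ℕ) : ∃ t, d (γ u) (β t) ≤ D + M (2 * 1 + 2 * D) := by
  obtain ⟨t, htu, t', ht⟩ := hD u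
  have hq : DQ d 1 t γ := by
    refine ⟨le_rfl, fun i _ j _ => ?_⟩
    rw [hγ]
    constructor <;> linarith
  obtain ⟨c, hc, c0, cn, -, hcD⟩ := hq.endMod (R := D) hd (β 0) (β t') (by rw [h0, hd.self]; exact hD0)
    (by rwa [hd.symm])
  obtain ⟨w, hw⟩ := (hβ _ _ c 0 t' (Nat.zero_le _) hc c0 cn).1 u (by omega)
  refine ⟨w, ?_⟩
  have h1 := hcD u htu
  have h2 := hd.tri (γ u) (c u) (β w)
  rw [hd.symm (γ u) (c u)] at h2
  linarith

/-- The point nearest to the origin `o` of a quasi-geodesic joining two Morse rays from `o` is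
close to both rays. -/
theorem nearest_close (hd : GM d) {M M' : ℝ → ℝ} {γ β : ℕ → X} (hγ : SM d M γ) (hβ : SM d M' β)
    (h0 : γ 0 = β 0) {C : ℝ} {n : ℕ} {c : ℕ → X} (hc : DQ d C n c) {s u : ℕ} (c0 : c 0 = γ s)
    (cn : c n = β u) :
    ∃ j ≤ n, (∃ t, d (c j) (γ t) ≤ M (3 * C)) ∧ ∃ t, d (c j) (β t) ≤ M' (3 * C) := by
  obtain ⟨j, hj, hmin⟩ := Finset.exists_min_image (Finset.range (n + 1)) (fun i => d (γ 0) (c i))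
    ⟨0, by simp⟩
  have hj : j ≤ n := by simpa [Nat.lt_succ_iff] using hj
  have hmin : ∀ i ≤ n, d (γ 0) (c j) ≤ d (γ 0) (c i) :=
    fun i hi => hmin i (by simpa [Nat.lt_succ_iff])
  have half : ∀ (M : ℝ → ℝ) (γ' : ℕ → X), SM d M γ' → γ' 0 = γ 0 → ∀ (c : ℕ → X) (j s : ℕ),
      DQ d C n c → j ≤ n → (∀ i ≤ n, d (γ 0) (c j) ≤ d (γ 0) (c i)) → c 0 = γ' s →
      ∃ t, d (c j) (γ' t) ≤ M (3 * C) := by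
    intro M γ' hγ' h0' c j s hc hj hmin c0
    obtain ⟨l, p, -, hp, hp1, hp2, -⟩ := concat_at hd hc (γ 0) hj hmin
    obtain ⟨t, ht⟩ := (hγ' _ _ _ 0 s (Nat.zero_le _) hp.reverse (by simp [hp2, h0'])
      (by simp [hp1 0 (Nat.zero_le _), c0])).1 l (by omega)
    refine ⟨t, ?_⟩
    rwa [show j + l - l = j by omega, hp1 j le_rfl] at ht
  refine ⟨j, hj, half M γ hγ rfl c j s hc hj hmin c0, ?_⟩
  have := half M' β hβ h0.symm (fun i => c (n - i)) (n - j) u hc.reverse (by omega)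
    (fun i hi => by
      rw [show n - (n - j) = j by omega]
      exact hmin _ (by omega)) (by simp [cn])
  rwa [show n - (n - j) = j by omega] at this

end NearOfFar

variable {G : Type*} [Group G] {VT : Type*} {T : SimpleGraph VT} [MulAction G VT] {S : Set G}

theorem side_of_lt (hT : T.IsTree) {x : ℕ → VT} (hx : ∀ i, T.Adj (x i) (x (i + 1)))
    (hxx : ∀ i, x (i + 2) ≠ x i) (i k : ℕ) : Side T (x i) (x (i + 1)) (x (i + 1 + k)) := by
  induction k generalizing i with
  | zero => exact Side.refl _ _
  | succ k ih =>
    have := ih (i + 1)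
    refine Side.subset hT (hx i) (hx (i + 1)) (hxx i).symm ?_
    rwa [show i + 1 + (k + 1) = i + 1 + 1 + k by ring]

theorem injective_edges (hT : T.IsTree) {x : ℕ → VT} (hx : ∀ i, T.Adj (x i) (x (i + 1)))
    (hxx : ∀ i, x (i + 2) ≠ x i) : Function.Injective fun i => (x i, x (i + 1)) := by
  have key : ∀ i j, i < j → x i ≠ x j := by
    intro i j hij he
    obtain ⟨k, rfl⟩ := Nat.exists_eq_add_of_lt hij
    have := side_of_lt hT hx hxx i k
    rw [show i + 1 + k = i + k + 1 by ring, ← he] at this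
    exact not_side hT (hx i) this
  intro i j he
  have he : x i = x j := congrArg Prod.fst he
  rcases lt_trichotomy i j with h | h | h
  · exact absurd he (key i j h)
  · exact h
  · exact absurd he.symm (key j i h)

namespace Split

theorem qg_uniform (h : Split S T) {J : Set (VT × VT)} (hJ : J.Finite)
    (hJadj : ∀ e ∈ J, T.Adj e.1 e.2) :
    ∃ C : ℝ, 1 ≤ C ∧ ∀ e ∈ J, ∀ k k' : G, k • e = k' • e → ∃ (n : ℕ) (c : ℕ → G),
      DQ (wdist S) C n c ∧ c 0 = k ∧ c n = k' ∧ ∀ i ≤ n, c i • e = k • e := by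
  have key : ∀ e : VT × VT, ∃ C : ℝ, e ∈ J → ∀ k k' : G, k • e = k' • e →
      ∃ (n : ℕ) (c : ℕ → G), DQ (wdist S) C n c ∧ c 0 = k ∧ c n = k' ∧
      ∀ i ≤ n, c i • e = k • e := by
    intro e
    by_cases he : e ∈ J
    · obtain ⟨C, -, hC⟩ := (h.edge _ _ (hJadj e he)).1.qg h.gen
      refine ⟨C, fun _ k k' hk => ?_⟩
      obtain ⟨n, c, hc, c0, cn, hcE⟩ := hC k k' (inv_mul_mem_edgeStab hk)
      refine ⟨n, c, hc, c0, cn, fun i hi => ?_⟩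
      obtain ⟨h1, h2⟩ := hcE i hi
      have h1 : (k⁻¹ * c i) • e.1 = e.1 := h1
      have h2 : (k⁻¹ * c i) • e.2 = e.2 := h2
      rw [mul_smul, inv_smul_eq_iff] at h1 h2
      exact Prod.ext h1 h2
    · exact ⟨0, fun h => absurd h he⟩
  choose C hC using key
  obtain ⟨B, hB⟩ := (hJ.image C).bddAbove
  refine ⟨max 1 B, le_max_left _ _, fun e he k k' hk => ?_⟩
  obtain ⟨n, c, hc, hrest⟩ := hC e he k k' hk
  exact ⟨n, c, hc.mono ((hB ⟨e, he, rfl⟩).trans (le_max_right _ _)), hrest⟩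

/-- Two Morse rays that cross a common infinite path of edges are at finite Hausdorff distance:
both pass close to a common point of each edge space, and these points go to infinity. -/
theorem near_of_common (h : Split S T) {x : ℕ → VT} (hx : ∀ i, T.Adj (x i) (x (i + 1)))
    (hxx : ∀ i, x (i + 2) ≠ x i) (γ β : GRay G S)
    (hγ : ∀ i, RaySide T (x 0) (x i) (x (i + 1)) γ.seq)
    (hβ : ∀ i, RaySide T (x 0) (x i) (x (i + 1)) β.seq) :
    ∃ D, Near (wdist S) D γ.seq β.seq := by
  have hd := gm_wdist h.gen
  obtain ⟨N, hN⟩ := γ.morse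
  obtain ⟨N', hN'⟩ := β.morse
  have sγ := hN.discrete.sm hd γ.geod
  have sβ := hN'.discrete.sm hd β.geod
  generalize (fun C => 3 * N (2 * C) + 2 * C) = M at sγ
  generalize (fun C => 3 * N' (2 * C) + 2 * C) = M' at sβ
  obtain ⟨R, J, hR0, hJf, hJadj, hR⟩ := crossing_bound h.gen h.fin h.tree h.adj (x 0) (x 0) 1
  obtain ⟨C, hC1, hC⟩ := h.qg_uniform hJf hJadj
  have hnot : ∀ i, ¬ Side T (x i) (x (i + 1)) (x 0) := by
    intro i hs
    induction i with
    | zero => exact not_side h.tree (hx 0) hs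
    | succ i ih => exact ih (Side.subset h.tree (hx i) (hx (i + 1)) (hxx i).symm hs)
  have cross : ∀ (α : GRay G S), (∀ i, RaySide T (x 0) (x i) (x (i + 1)) α.seq) → ∀ i,
      ∃ (s : ℕ) (k : G), rep G (x 0) (x i, x (i + 1)) ∈ J ∧
        k • rep G (x 0) (x i, x (i + 1)) = (x i, x (i + 1)) ∧ wdist S (α.seq s) k ≤ R := by
    intro α hα i
    obtain ⟨m, hm⟩ := (hα i).exists
    have h0 : ¬ Side T (x i) (x (i + 1)) (α.seq 0 • x 0) := by
      rw [α.base, one_smul]; exact hnot i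
    obtain ⟨s, -, -, hs⟩ := exists_crossing
      (P := fun n => Side T (x i) (x (i + 1)) (α.seq n • x 0)) (Nat.zero_le m) (by tauto)
    obtain ⟨hJ, k, hk⟩ := hR _ _ (step_dist α.geod s) _ _ (hx i) hs
    exact ⟨s, k, hJ, hk⟩
  -- the edge spaces leave every ball, since a ball meets only finitely many of them
  have far : ∀ L : ℝ, ∃ i, ∀ k : G,
      k • rep G (x 0) (x i, x (i + 1)) = (x i, x (i + 1)) → L < wdist S 1 k := by
    intro L
    by_contra hc
    push Not at hc
    have hfin : ((fun p : G × (VT × VT) => p.1 • p.2) ''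
        ({g : G | wdist S 1 g ≤ L} ×ˢ J)).Finite := ((finite_ball h.gen h.fin L 1).prod hJf).image _
    refine (infinite_range_of_injective (injective_edges h.tree hx hxx)) (hfin.subset ?_)
    rintro _ ⟨i, rfl⟩
    obtain ⟨k, hk, hkL⟩ := hc i
    obtain ⟨-, -, hJ, -⟩ := cross γ hγ i
    exact ⟨(k, rep G (x 0) (x i, x (i + 1))), ⟨hkL, hJ⟩, hk⟩
  set C' := 3 * (2 * C + 2 * R) with hC'
  have deep : ∀ L : ℕ, ∃ t ≥ L, ∃ t' ≥ L, wdist S (γ.seq t) (β.seq t') ≤ M C' + M' C' := by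
    intro L
    obtain ⟨i, hi⟩ := far (L + R + |M C'| + |M' C'|)
    obtain ⟨s, k, hJ, hk, hkR⟩ := cross γ hγ i
    obtain ⟨s', k', -, hk', hkR'⟩ := cross β hβ i
    obtain ⟨n, c, hc, c0, cn, hce⟩ := hC _ hJ k k' (hk.trans hk'.symm)
    obtain ⟨c', hc', c0', cn', hcc, -⟩ := hc.endMod (R := R) hd (γ.seq s) (β.seq s') (by rwa [c0])
      (by rwa [cn])
    obtain ⟨j, hj, ⟨t, ht⟩, t', ht'⟩ := nearest_close hd sγ sβ (by rw [γ.base, β.base]) hc' c0' cn'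
    have h1 := hi (c (min j n)) ((hce _ (min_le_right _ _)).trans hk)
    have h2 := hcc j hj
    have h3 := hd.tri 1 (c' j) (c (min j n))
    have h4 := geod_dist_zero γ.geod γ.base t
    have h5 := geod_dist_zero β.geod β.base t'
    have h6 := hd.tri 1 (γ.seq t) (c' j)
    have h7 := hd.tri 1 (β.seq t') (c' j)
    have h8 := hd.tri (γ.seq t) (c' j) (β.seq t')
    rw [hd.symm (γ.seq t) (c' j)] at h6 h8
    rw [hd.symm (β.seq t') (c' j)] at h7
    have h9 := le_abs_self (M C')
    have h10 := le_abs_self (M' C')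
    have h11 := abs_nonneg (M C')
    have h12 := abs_nonneg (M' C')
    refine ⟨t, ?_, t', ?_, by linarith⟩
    · have : (L : ℝ) ≤ t := by linarith
      exact_mod_cast this
    · have : (L : ℝ) ≤ t' := by linarith
      exact_mod_cast this
  obtain ⟨t₀, -, t₀', -, ht₀⟩ := deep 0
  have hD0 := (hd.nonneg _ _).trans ht₀
  set D := M C' + M' C'
  have n1 := near_half hd γ.geod sβ (by rw [γ.base, β.base]) hD0 fun L => by
    obtain ⟨t, ht, t', -, h'⟩ := deep L
    exact ⟨t, ht, t', h'⟩
  have n2 := near_half hd β.geod sγ (by rw [γ.base, β.base]) hD0 fun L => by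
    obtain ⟨t, -, t', ht', h'⟩ := deep L
    exact ⟨t', ht', t, by rwa [hd.symm]⟩
  refine ⟨max (D + M' (2 * 1 + 2 * D)) (D + M (2 * 1 + 2 * D)), fun u => ?_, fun u => ?_⟩
  · obtain ⟨t, ht⟩ := n1 u
    exact ⟨t, ht.trans (le_max_left _ _)⟩
  · obtain ⟨t, ht⟩ := n2 u
    exact ⟨t, by rw [hd.symm]; exact ht.trans (le_max_right _ _)⟩

/-! ### Connected components -/

/-- For a connected component with more than one point there is a vertex such that the component lies
on the side of this vertex of each incident edge. Otherwise, following the edges that lead towards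
the component gives an infinite path without backtracking that determines a single point. -/
theorem exists_sink (h : Split S T) (q : VT) (ξ : MorseBoundary G S)
    (hξ : ¬ (connectedComponent ξ).Subsingleton) :
    ∃ x, ∀ b, T.Adj x b → connectedComponent ξ ⊆ Uset S T q b x := by
  classical
  by_contra hc
  push Not at hc
  have hout : ∀ x, ∃ b, T.Adj x b ∧ connectedComponent ξ ⊆ Uset S T q x b := by
    intro x
    obtain ⟨b, hb, hn⟩ := hc x
    refine ⟨b, hb, ?_⟩
    have hcl := h.isClopen_Uset q hb
    by_cases hm : ξ ∈ Uset S T q x b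
    · exact hcl.connectedComponent_subset hm
    · rw [← mem_compl_iff, h.compl_Uset q hb] at hm
      exact absurd ((h.isClopen_Uset q hb.symm).connectedComponent_subset hm) hn
  choose f hf hfU using hout
  let x : ℕ → VT := fun i => f^[i] q
  have hxs : ∀ i, x (i + 1) = f (x i) := fun i => Function.iterate_succ_apply' f i q
  have hx : ∀ i, T.Adj (x i) (x (i + 1)) := fun i => by rw [hxs]; exact hf _
  have hU : ∀ i, connectedComponent ξ ⊆ Uset S T q (x i) (x (i + 1)) := fun i => by
    rw [hxs]; exact hfU _
  have hxx : ∀ i, x (i + 2) ≠ x i := by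
    intro i he
    have h1 := hU i mem_connectedComponent
    have h2 := hU (i + 1) (mem_connectedComponent (x := ξ))
    rw [show i + 1 + 1 = i + 2 by ring, he, ← h.compl_Uset q (hx i)] at h2
    exact h2 h1
  refine hξ fun ζ hζ ζ' hζ' => ?_
  obtain ⟨γ, rfl⟩ := exists_bmk ζ
  obtain ⟨β, rfl⟩ := exists_bmk ζ'
  exact (bmk_eq_iff h.gen).2 (h.near_of_common hx hxx γ β
    (fun i => (h.mem_Uset q (hx i) γ).1 (hU i hζ)) fun i => (h.mem_Uset q (hx i) β).1 (hU i hζ'))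

theorem component_dichotomy (h : Split S T) (ξ : MorseBoundary G S) :
    (connectedComponent ξ).Subsingleton ∨
    ∃ (x : VT) (TV : Finset (MulAction.stabilizer G x)),
      Subgroup.closure (TV : Set (MulAction.stabilizer G x)) = ⊤ ∧
      ∃ η : MorseBoundary (MulAction.stabilizer G x) (TV : Set (MulAction.stabilizer G x)),
        Nonempty (connectedComponent ξ ≃ₜ connectedComponent η) := by
  by_cases hξ : (connectedComponent ξ).Subsingleton
  · exact Or.inl hξ
  right
  obtain ⟨q⟩ := h.tree.connected.nonempty
  obtain ⟨x, hx⟩ := h.exists_sink q ξ hξ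
  obtain ⟨TV, hTV, K, hK, hbl⟩ := vertex_biLip h.gen h.fin h.tree h.adj x
    fun b hb => (h.edge _ b hb).1
  have hM : MorseSub S (TV : Set (MulAction.stabilizer G x)) K :=
    ⟨h.gen, h.fin, hTV, TV.finite_toSet, hK, hbl,
      vertex_ray_morse h.gen h.fin h.tree h.adj hTV hK hbl
        fun b hb => (h.edge _ b hb).2 TV hTV⟩
  obtain ⟨ι, hι⟩ := hM.exists_incl
  refine ⟨x, TV, hTV, component_homeo (hM.isClosedEmbedding hι).isEmbedding ?_⟩
  intro ζ hζ
  obtain ⟨γ, rfl⟩ := exists_bmk ζ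
  obtain ⟨r, hr⟩ := h.near_stab x γ fun b hb hs => by
    have h1 := (h.mem_Uset q hb.symm γ).1 (hx b hb hζ)
    exact (h.raySide_swap x hb γ).1 (h.raySide_base q x hb.symm h1) hs
  exact hM.mem_range hι γ hr

end Split
end MorseGoG

namespace MorseGoG

/-- **Corollary** (Statement 3).  If every vertex group satisfies the assumptions of
Theorem B, then every connected component of `∂_M G` is either a singleton or homeomorphic
to a connected component of the Morse boundary of a vertex group. -/
theorem morse_components_homeomorphic_to_vertex_components
    {G VT : Type*} [Group G] [MulAction G VT]
    (S : Finset G) (hSgen : Subgroup.closure (S : Set G) = ⊤)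
    (T : SimpleGraph VT) (hact : ActsOnTree G T)
    (hedge : ∀ x b : VT, T.Adj x b →
      FGUndistorted (S : Set G) (edgeStab G x b) ∧
      RelWideIn (MulAction.stabilizer G x) (edgeStab G x b)) :
    ∀ ξ : MorseBoundary G (S : Set G),
      (connectedComponent ξ).Subsingleton ∨
      ∃ (x : VT) (TV : Finset (MulAction.stabilizer G x)),
        Subgroup.closure (TV : Set (MulAction.stabilizer G x)) = ⊤ ∧
        ∃ η : MorseBoundary (MulAction.stabilizer G x)
            (TV : Set (MulAction.stabilizer G x)),
          Nonempty ((connectedComponent ξ) ≃ₜ (connectedComponent η)) :=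
  Split.component_dichotomy ⟨hSgen, S.finite_toSet, hact.1, hact.2.1, hedge⟩

end MorseGoG
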